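/- arXiv:1904.12761 — 2 statements merged into one kernel-verified Lean document; each statement's English description precedes it below -/
import Mathlib

section
/- (Vázsonyi's conjecture, theorem of Grünbaum, Heppes, and Straszewicz, as stated in the paper.) Let X ⊂ ℝ³ be a finite set of m points with diameter 1. Then the number of unordered pairs {x,y} ⊆ X with dist(x,y) = 1 is at most 2m − 2. -/
/-!
Removing a point that lies on at most two diameters lowers the number of points by one and the
number of diameters by at most two, so let every point lie on at least three diameters. To each
point `x` attach a red cell, the cone spanned by the vectors `y - x` over the diameters `xy` at
`x`, and a blue cell, the reflection of the red one in the origin. Because all distances are at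
most `1`, two cells of the same colour meet only in the origin, and a red cell of `x` meets a blue
cell of `y` only if `dist x y = 1`, and then only in the ray of `y - x` (Swanepoel). On the unit
sphere the cells are thus disjoint convex regions which touch in one point for each diameter and
orientation, so that the contacts form a planar bipartite graph on `2 * m` vertices; such a graph
has at most `2 * (2 * m) - 4` edges.

The Euler bound is obtained from a half-plane rotating about a generic axis inside the red cell of
one point. At each instant it meets a sequence of cells, linearly ordered along the axis. Give
consecutive cells the weight `±1` if they have a contact, with the sign telling whether the
half-plane has already passed it, and `0` otherwise. The weights of a sequence of cells rise by
`2` whenever a contact is passed, and fall by at most `2` for each cell which enters or leaves the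
sequence; cells other than those of the chosen point do so exactly once each in a full turn.
-/

section ConsecutiveSum

variable {ι : Type*} {w w' : ι → ι → ℤ}

/-- The sum of `w a b` over all pairs of consecutive entries `a, b` of a list. It measures how a
list of cells is covered by the contacts between neighbouring cells. -/
def consecutiveSum (w : ι → ι → ℤ) : List ι → ℤ
  | [] => 0
  | [_] => 0
  | a :: b :: l => w a b + consecutiveSum w (b :: l)

theorem consecutiveSum_congr :
    ∀ {l : List ι}, (∀ a ∈ l, ∀ b ∈ l, w a b = w' a b) → consecutiveSum w l = consecutiveSum w' l
  | [], _ => rfl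
  | [_], _ => rfl
  | a :: b :: l, h => congrArg₂ (· + ·) (h a (by simp) b (by simp)) <|
      consecutiveSum_congr fun c hc d hd ↦ h c (by simp_all) d (by simp_all)

theorem consecutiveSum_append_cons_cons (w : ι → ι → ℤ) (a b : ι) (l' : List ι) :
    ∀ l : List ι, consecutiveSum w (l ++ a :: b :: l') =
      consecutiveSum w (l ++ [a]) + w a b + consecutiveSum w (b :: l')
  | [] => by simp [consecutiveSum]
  | [c] => by simp [consecutiveSum, add_assoc]
  | c :: d :: l => by
      simpa [consecutiveSum, add_assoc] using consecutiveSum_append_cons_cons w a b l' (d :: l)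

theorem consecutiveSum_sub_eq_of_agree_off {a b : ι} {l l' : List ι}
    (hnodup : (l ++ a :: b :: l').Nodup) (h : ∀ c d, s(c, d) ≠ s(a, b) → w c d = w' c d) :
    consecutiveSum w' (l ++ a :: b :: l') - consecutiveSum w (l ++ a :: b :: l') =
      w' a b - w a b := by
  have hb : b ∉ l ++ [a] := by grind
  have ha : a ∉ b :: l' := by grind
  have hleft : consecutiveSum w (l ++ [a]) = consecutiveSum w' (l ++ [a]) :=
    consecutiveSum_congr fun c hc d hd ↦ h c d (by grind)
  have hright : consecutiveSum w (b :: l') = consecutiveSum w' (b :: l') :=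
    consecutiveSum_congr fun c hc d hd ↦ h c d (by grind)
  rw [consecutiveSum_append_cons_cons, consecutiveSum_append_cons_cons, hleft, hright]
  ring

theorem abs_consecutiveSum_cons_sub_le (hw : ∀ a b, |w a b| ≤ 1) (a : ι) :
    ∀ l : List ι, |consecutiveSum w (a :: l) - consecutiveSum w l| ≤ 1
  | [] => by simp [consecutiveSum]
  | b :: l => by simpa [consecutiveSum] using hw a b

theorem abs_consecutiveSum_cons_sub_cons_le_of_sublist (hw : ∀ a b, |w a b| ≤ 1)
    (htri : ∀ a b c, |w a b + w b c - w a c| ≤ 2) {l l' : List ι} (h : l'.Sublist l) (a : ι) :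
    |consecutiveSum w (a :: l) - consecutiveSum w (a :: l')| ≤ 2 * (l.length - l'.length) := by
  induction h generalizing a with
  | slnil => simp
  | cons_cons b _ ih => simpa [consecutiveSum] using ih b
  | @cons l' _ b _ ih =>
    have hinsert : |w a b + consecutiveSum w (b :: l') - consecutiveSum w (a :: l')| ≤ 2 := by
      cases l' with
      | nil => simpa [consecutiveSum] using (hw a b).trans one_le_two
      | cons c l' =>
        convert htri a b c using 2
        simp only [consecutiveSum]
        ring
    have hrest := ih b
    rw [abs_le] at hinsert hrest ⊢
    simp only [consecutiveSum, List.length_cons, Nat.cast_add, Nat.cast_one]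
    constructor <;> linarith

theorem abs_consecutiveSum_sub_le_of_sublist (hw : ∀ a b, |w a b| ≤ 1)
    (htri : ∀ a b c, |w a b + w b c - w a c| ≤ 2) {l l' : List ι} (h : l'.Sublist l) :
    |consecutiveSum w l - consecutiveSum w l'| ≤ 2 * (l.length - l'.length) := by
  cases h with
  | slnil => simp
  | cons_cons b h =>
    simpa using abs_consecutiveSum_cons_sub_cons_le_of_sublist hw htri h b
  | @cons _ l b h =>
    have hrest := abs_consecutiveSum_cons_sub_cons_le_of_sublist hw htri h b
    have hhead := abs_consecutiveSum_cons_sub_le hw b l'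
    rw [abs_le] at hhead hrest ⊢
    simp only [List.length_cons, Nat.cast_add, Nat.cast_one]
    constructor <;> linarith

end ConsecutiveSum

theorem exists_forall_not_rel_of_finite {α : Type*} {r : α → α → Prop} {S : Set α}
    (hS : S.Finite) (hne : S.Nonempty) (hirrefl : ∀ a ∈ S, ¬ r a a)
    (htrans : ∀ a ∈ S, ∀ b ∈ S, ∀ c ∈ S, r a b → r b c → r a c) :
    ∃ m ∈ S, ∀ a ∈ S, ¬ r a m := by
  have : Finite S := hS
  have : Std.Irrefl (Subrel r (· ∈ S)) := ⟨fun a ↦ hirrefl a a.2⟩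
  have : IsTrans S (Subrel r (· ∈ S)) := ⟨fun a b c ↦ htrans a a.2 b b.2 c c.2⟩
  obtain ⟨m, -, hm⟩ := (Finite.wellFounded_of_trans_of_irrefl (Subrel r (· ∈ S))).has_min
    Set.univ (@Set.univ_nonempty _ hne.to_subtype)
  exact ⟨m, m.2, fun a ha ↦ hm ⟨a, ha⟩ trivial⟩

theorem nonneg_of_mem_pointedCone_hull {E : Type*} [AddCommGroup E] [Module ℝ E] {S : Set E}
    {f : E →ₗ[ℝ] ℝ} (hf : ∀ a ∈ S, 0 ≤ f a) {p : E} (hp : p ∈ PointedCone.hull ℝ S) : 0 ≤ f p := by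
  induction hp using Submodule.span_induction with
  | mem a ha => exact hf a ha
  | zero => simp
  | add a b _ _ ha hb => simpa using add_nonneg ha hb
  | smul c a _ ha =>
    rw [LinearMap.map_smul_of_tower]
    exact smul_nonneg c.2 ha

section AxialForm

variable {E : Type*} [AddCommGroup E] [Module ℝ E]

/-- `σ a b` is the signed area of the projections of `a` and `b` along the line `ℝ n` to a plane.
Its sign tells in which direction one turns about the axis `n` from the half-plane through `a` to
the half-plane through `b`. -/
structure IsAxialForm (σ : E →ₗ[ℝ] E →ₗ[ℝ] ℝ) (n : E) : Prop where
  isAlt : σ.IsAlt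
  axis_left (a : E) : σ n a = 0
  cramer (a b c : E) : ∃ t : ℝ, σ b c • a + σ c a • b + σ a b • c = t • n

/-- `w` is a first vector of `S` met by the half-plane bounded by the axis of `σ` when it turns
from `v` in the positive direction through less than a straight angle. -/
def IsNext (σ : E →ₗ[ℝ] E →ₗ[ℝ] ℝ) (S : Set E) (v w : E) : Prop :=
  0 < σ v w ∧ ∀ u ∈ S, 0 < σ v u → 0 ≤ σ w u

variable {σ : E →ₗ[ℝ] E →ₗ[ℝ] ℝ} {n : E}

namespace IsAxialForm

variable (h : IsAxialForm σ n)
include h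

theorem swap (a b : E) : σ a b = -σ b a := (h.isAlt.neg b a).symm

theorem axis_right (a : E) : σ a n = 0 := by rw [h.swap, h.axis_left, neg_zero]

theorem plucker (a b c d : E) : σ a c * σ b d = σ a b * σ c d + σ b c * σ a d := by
  obtain ⟨t, ht⟩ := h.cramer b c d
  have := congrArg (σ a) ht
  simp only [map_add, map_smul, smul_eq_mul, h.axis_right, mul_zero, h.swap d b] at this
  linarith

theorem apply_add_smul_axis_right (a b : E) (s : ℝ) : σ a (b + s • n) = σ a b := by
  simp [h.axis_right]

theorem apply_add_smul_axis_left (a b : E) (s : ℝ) : σ (a + s • n) b = σ a b := by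
  simp [h.axis_left]

theorem exists_add_smul_axis_mem {C : PointedCone ℝ E} {l r v : E} (hl : l ∈ C) (hr : r ∈ C)
    (hlr : 0 < σ l r) (hlv : 0 ≤ σ l v) (hvr : 0 ≤ σ v r) : ∃ s : ℝ, v + s • n ∈ C := by
  obtain ⟨t, ht⟩ := h.cramer l v r
  refine ⟨(σ l r)⁻¹ * t, ?_⟩
  have hmem := C.smul_mem (inv_nonneg.2 hlr.le) (C.add_mem (C.smul_mem hvr hl) (C.smul_mem hlv hr))
  convert hmem using 1
  rw [h.swap r l, add_right_comm, ← eq_sub_iff_add_eq] at ht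
  rw [ht, neg_smul, sub_neg_eq_add, smul_add, smul_smul, smul_smul, inv_mul_cancel₀ hlr.ne',
    one_smul, add_comm]

theorem exists_isNext {S : Set E} (hS : S.Finite) {v : E} (hv : ∃ u ∈ S, 0 < σ v u) :
    ∃ w ∈ S, IsNext σ S v w := by
  have htrans : ∀ a ∈ {u ∈ S | 0 < σ v u}, ∀ b ∈ {u ∈ S | 0 < σ v u}, ∀ c ∈ {u ∈ S | 0 < σ v u},
      0 < σ a b → 0 < σ b c → 0 < σ a c := by
    rintro a ⟨-, ha⟩ b ⟨-, hb⟩ c ⟨-, hc⟩ hab hbc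
    refine pos_of_mul_pos_right ?_ hb.le
    rw [h.plucker v a b c]
    positivity
  obtain ⟨w, ⟨hwS, hw⟩, hmin⟩ := exists_forall_not_rel_of_finite (hS.sep _) hv
    (fun a _ ↦ by simp [h.isAlt a]) htrans
  refine ⟨w, hwS, hw, fun u hu hvu ↦ ?_⟩
  rw [h.swap, neg_nonneg]
  exact not_lt.1 (hmin u ⟨hu, hvu⟩)

theorem nonneg_of_isNext {S : Set E} {u v w : E} (hvw : IsNext σ S v w) (hu : u ∈ S)
    (huw : 0 < σ u w) : 0 ≤ σ u v := by
  by_contra! huv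
  rw [h.swap, neg_lt_zero] at huv
  exact (hvw.2 u hu huv).not_gt (by rwa [h.swap, neg_lt_zero])

theorem sector_iff_of_isNext {S : Set E} {v w l r : E} (hvw : IsNext σ S v w) (hl : l ∈ S)
    (hr : r ∈ S) (hlr : 0 < σ l r) :
    (0 ≤ σ l v ∧ 0 < σ v r) ↔ (0 < σ l w ∧ 0 ≤ σ w r) := by
  have hplucker := h.plucker l v w r
  have hpos : 0 < σ v w * σ l r := mul_pos hvw.1 hlr
  constructor
  · rintro ⟨hlv, hvr⟩
    have hwr := hvw.2 r hr hvr
    exact ⟨pos_of_mul_pos_left (b := σ v r) (by nlinarith [mul_nonneg hlv hwr]) hvr.le, hwr⟩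
  · rintro ⟨hlw, hwr⟩
    have hlv := h.nonneg_of_isNext hvw hl hlw
    exact ⟨hlv, pos_of_mul_pos_right (a := σ l w) (by nlinarith [mul_nonneg hlv hwr]) hlw.le⟩

theorem pos_trans_of_mem_cone {C : PointedCone ℝ E} (hC : ∀ p ∈ C, -p ∈ C → p = 0)
    (hn : ∀ t : ℝ, t • n ∈ C → t • n = 0) {a b c : E} (ha : a ∈ C) (hb : b ∈ C) (hc : c ∈ C)
    (hab : 0 < σ a b) (hbc : 0 < σ b c) : 0 < σ a c := by
  by_contra! hac
  rw [h.swap, neg_nonpos] at hac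
  obtain ⟨t, ht⟩ := h.cramer a b c
  have hmem := C.add_mem (C.smul_mem hac hb) (C.smul_mem hab.le hc)
  have hbca := C.smul_mem hbc.le ha
  rw [add_assoc] at ht
  have hzero := ht.trans (hn t (ht ▸ C.add_mem hbca hmem))
  have ha0 := hC _ hbca (by rwa [neg_eq_of_add_eq_zero_right hzero])
  rw [smul_eq_zero_iff_right hbc.ne'] at ha0
  simp [ha0] at hab

theorem exists_ends_of_finite {S : Set E} (hS : S.Finite) (hne : S.Nonempty)
    (hC : ∀ p ∈ PointedCone.hull ℝ S, -p ∈ PointedCone.hull ℝ S → p = 0)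
    (hn : ∀ t : ℝ, t • n ∈ PointedCone.hull ℝ S → t • n = 0) :
    ∃ l ∈ S, ∃ r ∈ S, ∀ p ∈ PointedCone.hull ℝ S, 0 ≤ σ l p ∧ 0 ≤ σ p r := by
  have hsub : S ⊆ PointedCone.hull ℝ S := PointedCone.subset_hull
  have hirrefl (a : E) : ¬ 0 < σ a a := by simp [h.isAlt a]
  obtain ⟨l, hl, hmin⟩ := exists_forall_not_rel_of_finite (r := fun a b ↦ 0 < σ a b) hS hne
    (fun a _ ↦ hirrefl a)
    fun a ha b hb c hc ↦ h.pos_trans_of_mem_cone hC hn (hsub ha) (hsub hb) (hsub hc)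
  obtain ⟨r, hr, hmax⟩ := exists_forall_not_rel_of_finite (r := fun a b ↦ 0 < σ b a) hS hne
    (fun a _ ↦ hirrefl a)
    fun a ha b hb c hc hba hcb ↦
      h.pos_trans_of_mem_cone hC hn (hsub hc) (hsub hb) (hsub ha) hcb hba
  refine ⟨l, hl, r, hr, fun p hp ↦
    ⟨nonneg_of_mem_pointedCone_hull (f := σ l) (fun a ha ↦ ?_) hp,
      nonneg_of_mem_pointedCone_hull (f := σ.flip r) (fun a ha ↦ ?_) hp⟩⟩
  · rw [h.swap, neg_nonneg]
    exact not_lt.1 (hmin a ha)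
  · rw [LinearMap.flip_apply, h.swap, neg_nonneg]
    exact not_lt.1 (hmax a ha)

end IsAxialForm

end AxialForm

section ExtremeRays

variable {E : Type*} [AddCommGroup E] [Module ℝ E] {C : PointedCone ℝ E}

theorem eq_zero_of_smul_add_smul_add_smul_eq_zero {u v w : E} (hv : v ∈ C) (hw : w ∈ C)
    (hext : ∀ c : ℝ, ∀ p ∈ C, ∀ q ∈ C, p + q = c • u → SameRay ℝ p u)
    (hvu : ¬ SameRay ℝ v u) (hwu : ¬ SameRay ℝ w u) {a b c : ℝ} (hbc : 0 ≤ b * c)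
    (h : a • u + b • v + c • w = 0) : a = 0 ∧ b = 0 ∧ c = 0 := by
  wlog hnonneg : 0 ≤ b ∧ 0 ≤ c generalizing a b c
  · have hnonpos := (mul_nonneg_iff.1 hbc).resolve_left hnonneg
    have hneg : -a • u + -b • v + -c • w = 0 := by linear_combination (norm := module) (-1 : ℝ) • h
    simpa using this (by rwa [neg_mul_neg]) hneg ⟨neg_nonneg.2 hnonpos.1, neg_nonneg.2 hnonpos.2⟩
  have hsum : b • v + c • w = -a • u := by linear_combination (norm := module) h
  have hbv := C.smul_mem hnonneg.1 hv
  have hcw := C.smul_mem hnonneg.2 hw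
  obtain rfl : b = 0 := by
    refine hnonneg.1.eq_of_not_lt' fun hb ↦ hvu ?_
    simpa [hb.ne'] using (hext _ _ hbv _ hcw hsum).nonneg_smul_left (inv_nonneg.2 hb.le)
  obtain rfl : c = 0 := by
    refine hnonneg.2.eq_of_not_lt' fun hc ↦ hwu ?_
    have hcwu := hext _ _ hcw _ hbv (by rw [add_comm, hsum])
    simpa [hc.ne'] using hcwu.nonneg_smul_left (inv_nonneg.2 hc.le)
  have hu : u ≠ 0 := fun hu ↦ hvu (hu ▸ SameRay.zero_right v)
  simpa [hu] using h

theorem linearIndependent_fin_three_of_extreme {u : Fin 3 → E} (hu : ∀ i, u i ∈ C)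
    (hext : ∀ i, ∀ c : ℝ, ∀ p ∈ C, ∀ q ∈ C, p + q = c • u i → SameRay ℝ p (u i))
    (hray : Pairwise fun i j ↦ ¬ SameRay ℝ (u i) (u j)) : LinearIndependent ℝ u := by
  rw [Fintype.linearIndependent_iff]
  intro g hg
  have hsign : 0 ≤ g 1 * g 2 ∨ 0 ≤ g 2 * g 0 ∨ 0 ≤ g 0 * g 1 := by
    simp only [mul_nonneg_iff]
    grind
  obtain ⟨k, hk⟩ : ∃ k : Fin 3, 0 ≤ g (k + 1) * g (k + 2) := by
    rcases hsign with h | h | h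
    exacts [⟨0, h⟩, ⟨1, h⟩, ⟨2, h⟩]
  have hsum : g k • u k + g (k + 1) • u (k + 1) + g (k + 2) • u (k + 2) = 0 := by
    rw [← Equiv.sum_comp (Equiv.addLeft k), Fin.sum_univ_three] at hg
    simpa using hg
  have hne : ∀ k : Fin 3, k + 1 ≠ k ∧ k + 2 ≠ k := by decide
  have hcover : ∀ i k : Fin 3, i = k ∨ i = k + 1 ∨ i = k + 2 := by decide
  obtain ⟨h0, h1, h2⟩ := eq_zero_of_smul_add_smul_add_smul_eq_zero (hu _) (hu _) (hext k)
    (hray (hne k).1) (hray (hne k).2) hk hsum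
  intro i
  rcases hcover i k with rfl | rfl | rfl <;> assumption

end ExtremeRays

section Neighbors

variable {α : Type*} [PseudoMetricSpace α] {X : Finset α} {x y : α}

/-- The points of `X` at distance `1` from `x`. -/
noncomputable def neighbors (X : Finset α) (x : α) : Finset α := {y ∈ X | dist x y = 1}

theorem mem_neighbors : y ∈ neighbors X x ↔ y ∈ X ∧ dist x y = 1 := by
  simp [neighbors]

theorem mem_neighbors_symm (hx : x ∈ X) (hy : y ∈ neighbors X x) : x ∈ neighbors X y :=
  mem_neighbors.2 ⟨hx, by rw [dist_comm, (mem_neighbors.1 hy).2]⟩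

theorem norm_sub_of_mem_neighbors {V : Type*} [SeminormedAddCommGroup V] {X : Finset V} {x y : V}
    (hy : y ∈ neighbors X x) : ‖y - x‖ = 1 := by
  rw [← dist_eq_norm, dist_comm, (mem_neighbors.1 hy).2]

end Neighbors

section DiameterCone

variable {V : Type*} [NormedAddCommGroup V] [InnerProductSpace ℝ V]

open scoped InnerProductSpace

theorem half_sq_norm_le_inner_of_norm_sub_le_one {p c : V} (hp : ‖p‖ = 1) (h : ‖p - c‖ ≤ 1) :
    ‖c‖ ^ 2 / 2 ≤ ⟪p, c⟫_ℝ := by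
  have hexpand := norm_sub_sq_real p c
  have hsq := pow_le_one₀ (n := 2) (norm_nonneg _) h
  rw [hp] at hexpand
  linarith

theorem inner_eq_half_sq_norm_of_norm_sub_eq_one {p c : V} (hp : ‖p‖ = 1) (h : ‖p - c‖ = 1) :
    ⟪p, c⟫_ℝ = ‖c‖ ^ 2 / 2 := by
  have hexpand := norm_sub_sq_real p c
  rw [hp, h] at hexpand
  linarith

/-- The cone spanned by the directions of the diameters of `X` issuing from `x`, translated so that
its apex is the origin. -/
noncomputable def diameterCone (X : Finset V) (x : V) : PointedCone ℝ V :=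
  PointedCone.hull ℝ ((· - x) '' neighbors X x)

variable {X : Finset V} {x y z p q : V}

theorem sub_mem_diameterCone (hy : y ∈ neighbors X x) : y - x ∈ diameterCone X x :=
  PointedCone.subset_hull (Set.mem_image_of_mem _ hy)

theorem norm_mul_le_inner_of_mem_diameterCone (hp : p ∈ diameterCone X x) {c : V} {B : ℝ}
    (hB : 0 ≤ B) (h : ∀ y ∈ neighbors X x, B ≤ ⟪y - x, c⟫_ℝ) : ‖p‖ * B ≤ ⟪p, c⟫_ℝ := by
  induction hp using Submodule.span_induction with
  | mem _ hp =>
    obtain ⟨y, hy, rfl⟩ := hp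
    simpa only [norm_sub_of_mem_neighbors hy, one_mul] using h y hy
  | zero => simp
  | add a b _ _ ha hb =>
    rw [inner_add_left]
    nlinarith [mul_le_mul_of_nonneg_right (norm_add_le a b) hB]
  | smul t a _ ha =>
    change ‖(t : ℝ) • a‖ * B ≤ ⟪(t : ℝ) • a, c⟫_ℝ
    rw [norm_smul, Real.norm_of_nonneg t.2, real_inner_smul_left, mul_assoc]
    exact mul_le_mul_of_nonneg_left ha t.2

variable (hX : ∀ x ∈ X, ∀ y ∈ X, dist x y ≤ 1)
include hX

theorem norm_mul_half_sq_dist_le_inner (hp : p ∈ diameterCone X x) (hz : z ∈ X) :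
    ‖p‖ * (‖z - x‖ ^ 2 / 2) ≤ ⟪p, z - x⟫_ℝ := by
  refine norm_mul_le_inner_of_mem_diameterCone hp (by positivity) fun y hy ↦
    half_sq_norm_le_inner_of_norm_sub_le_one (norm_sub_of_mem_neighbors hy) ?_
  rw [sub_sub_sub_cancel_right, ← dist_eq_norm]
  exact hX y (mem_neighbors.1 hy).1 z hz

theorem eq_zero_of_mem_diameterCone_of_mem_diameterCone (hx : x ∈ X) (hy : y ∈ X) (hxy : x ≠ y)
    (hpx : p ∈ diameterCone X x) (hpy : p ∈ diameterCone X y) : p = 0 := by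
  have h₁ := norm_mul_half_sq_dist_le_inner hX hpx hy
  have h₂ := norm_mul_half_sq_dist_le_inner hX hpy hx
  rw [← neg_sub y x, inner_neg_right, norm_neg] at h₂
  have hpos : 0 < ‖y - x‖ ^ 2 := pow_pos (norm_pos_iff.2 (sub_ne_zero.2 hxy.symm)) 2
  rw [← norm_le_zero_iff]
  exact nonpos_of_mul_nonpos_left (b := ‖y - x‖ ^ 2) (by linarith) hpos

theorem eq_zero_of_mem_diameterCone_of_neg_mem (hp : p ∈ diameterCone X x)
    (hneg : -p ∈ diameterCone X x) : p = 0 := by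
  rcases (neighbors X x).eq_empty_or_nonempty with hempty | ⟨y, hy⟩
  · simpa [diameterCone, hempty] using hp
  · have h₁ := norm_mul_half_sq_dist_le_inner hX hp (mem_neighbors.1 hy).1
    have h₂ := norm_mul_half_sq_dist_le_inner hX hneg (mem_neighbors.1 hy).1
    rw [norm_sub_of_mem_neighbors hy] at h₁ h₂
    rw [inner_neg_left, norm_neg] at h₂
    rw [← norm_le_zero_iff]
    linarith

theorem eq_sub_of_mem_diameterCone_of_neg_mem (hx : x ∈ X) (hy : y ∈ X)
    (hpx : p ∈ diameterCone X x) (hpy : -p ∈ diameterCone X y) (hp : ‖p‖ = 1) : p = y - x := by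
  set c := y - x with hc
  have hcross : ∀ z ∈ neighbors X y, ‖p - c‖ ^ 2 / 2 ≤ ⟪z - y, p - c⟫_ℝ := by
    intro z hz
    have hzx := norm_mul_half_sq_dist_le_inner hX hpx (mem_neighbors.1 hz).1
    rw [hp, one_mul, ← sub_add_sub_cancel z y x, ← hc, norm_add_sq_real, inner_add_right,
      norm_sub_of_mem_neighbors hz] at hzx
    rw [norm_sub_sq_real, inner_sub_right (z - y), real_inner_comm p, hp]
    linarith
  have hle := norm_mul_le_inner_of_mem_diameterCone hpy (by positivity) hcross
  have hpc : ⟪p, c⟫_ℝ ≤ 1 := by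
    refine (real_inner_le_norm p c).trans ?_
    rw [hp, one_mul, hc, ← dist_eq_norm]
    exact hX y hy x hx
  rw [norm_neg, hp, one_mul, inner_neg_left, inner_sub_right, real_inner_self_eq_norm_sq, hp]
    at hle
  rw [← sub_eq_zero, ← norm_eq_zero, ← sq_eq_zero_iff]
  exact le_antisymm (by linarith) (sq_nonneg _)

theorem exists_pos_smul_sub_of_mem_diameterCone_of_neg_mem (hx : x ∈ X) (hy : y ∈ X)
    (hpx : p ∈ diameterCone X x) (hpy : -p ∈ diameterCone X y) (hp : p ≠ 0) :
    dist x y = 1 ∧ ∃ c : ℝ, 0 < c ∧ p = c • (y - x) := by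
  have hpos := norm_pos_iff.2 hp
  have hnorm : ‖‖p‖⁻¹ • p‖ = 1 := norm_smul_inv_norm hp
  have hunit := eq_sub_of_mem_diameterCone_of_neg_mem hX hx hy
    (PointedCone.smul_mem _ (inv_nonneg.2 hpos.le) hpx)
    (smul_neg ‖p‖⁻¹ p ▸ PointedCone.smul_mem _ (inv_nonneg.2 hpos.le) hpy) hnorm
  refine ⟨?_, ‖p‖, hpos, ?_⟩
  · rw [dist_comm, dist_eq_norm, ← hunit, hnorm]
  · rw [← hunit, smul_inv_smul₀ hpos.ne']

theorem sameRay_sub_of_add_eq_smul (hy : y ∈ neighbors X x) (hz : z ∈ neighbors X y) (hzx : z ≠ x)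
    (hp : p ∈ diameterCone X x) (hq : q ∈ diameterCone X x) {c : ℝ} (h : p + q = c • (y - x)) :
    SameRay ℝ p (y - x) := by
  have hzX := (mem_neighbors.1 hz).1
  have hyx := norm_sub_of_mem_neighbors hy
  have hpos : 0 < ‖z - x‖ ^ 2 / 2 := half_pos (pow_pos (norm_pos_iff.2 (sub_ne_zero.2 hzx)) 2)
  have hinner : ⟪y - x, z - x⟫_ℝ = ‖z - x‖ ^ 2 / 2 := by
    refine inner_eq_half_sq_norm_of_norm_sub_eq_one hyx ?_
    rw [sub_sub_sub_cancel_right, norm_sub_rev, norm_sub_of_mem_neighbors hz]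
  have hsum := add_le_add (norm_mul_half_sq_dist_le_inner hX hp hzX)
    (norm_mul_half_sq_dist_le_inner hX hq hzX)
  rw [← add_mul, ← inner_add_left, h, real_inner_smul_left, hinner] at hsum
  have hc : ‖p‖ + ‖q‖ ≤ c := le_of_mul_le_mul_right hsum hpos
  have hc0 : 0 ≤ c := (by positivity : 0 ≤ ‖p‖ + ‖q‖).trans hc
  have hpq : SameRay ℝ p q := by
    rw [sameRay_iff_norm_add]
    refine le_antisymm (norm_add_le p q) ?_
    rwa [h, norm_smul, hyx, mul_one, Real.norm_of_nonneg hc0]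
  rcases hc0.eq_or_lt with rfl | hcpos
  · have : p = 0 := norm_le_zero_iff.1 (by linarith [norm_nonneg q])
    exact this ▸ SameRay.zero_left _
  · have hpc : SameRay ℝ p (c • (y - x)) := h ▸ (SameRay.refl p).add_right hpq
    simpa [hcpos.ne'] using hpc.nonneg_smul_right (inv_nonneg.2 hc0)

theorem linearIndependent_sub_of_mem_neighbors
    (hdeg : ∀ y ∈ X, ∀ x, ∃ z ∈ neighbors X y, z ≠ x) {y : Fin 3 → V}
    (hy : ∀ i, y i ∈ neighbors X x) (hinj : Function.Injective y) :
    LinearIndependent ℝ fun i ↦ y i - x := by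
  refine linearIndependent_fin_three_of_extreme (fun i ↦ sub_mem_diameterCone (hy i)) ?_ ?_
  · intro i c p hp q hq h
    obtain ⟨z, hz, hzx⟩ := hdeg (y i) (mem_neighbors.1 (hy i)).1 x
    exact sameRay_sub_of_add_eq_smul hX (hy i) hz hzx hp hq h
  · intro i j hij hray
    have hnorm : ‖y i - x‖ = ‖y j - x‖ := by
      rw [norm_sub_of_mem_neighbors (hy i), norm_sub_of_mem_neighbors (hy j)]
    exact hij (hinj (sub_left_injective ((sameRay_iff_of_norm_eq hnorm).1 hray)))

end DiameterCone

section Dart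

variable {α : Type*} [MetricSpace α] {X : Finset α}

/-- A diameter of `X` together with an orientation, as the pair of its endpoints. -/
abbrev Dart (X : Finset α) : Type _ := {e : X × X // dist (e.1 : α) e.2 = 1}

namespace Dart

/-- The dart with the opposite orientation. -/
def reverse (u : Dart X) : Dart X :=
  ⟨u.1.swap, by rw [Prod.fst_swap, Prod.snd_swap, dist_comm, u.2]⟩

/-- The pair formed by the red cell of the tail and the blue cell of the head of a dart. Red cells
are indexed by the left and blue cells by the right summand. -/
def edge (u : Dart X) : Sym2 (X ⊕ X) := s(Sum.inl u.1.1, Sum.inr u.1.2)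

theorem edge_injective : Function.Injective (edge (X := X)) := by
  rintro ⟨⟨a, b⟩, h⟩ ⟨⟨c, d⟩, h'⟩ hedge
  simpa [edge] using hedge

theorem inl_mem_edge {x : X} {u : Dart X} : Sum.inl x ∈ u.edge ↔ x = u.1.1 := by
  simp [edge]

theorem inr_mem_edge {y : X} {u : Dart X} : Sum.inr y ∈ u.edge ↔ y = u.1.2 := by
  simp [edge]

theorem head_mem_neighbors (u : Dart X) : (u.1.2 : α) ∈ neighbors X u.1.1 :=
  mem_neighbors.2 ⟨u.1.2.2, u.2⟩

theorem tail_mem_neighbors (u : Dart X) : (u.1.1 : α) ∈ neighbors X u.1.2 :=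
  mem_neighbors_symm u.1.1.2 u.head_mem_neighbors

theorem isLeft_ne_of_edge_eq {u : Dart X} {k k' : X ⊕ X} (h : u.edge = s(k, k')) :
    k.isLeft ≠ k'.isLeft := by
  rcases Sym2.eq_iff.1 h with ⟨rfl, rfl⟩ | ⟨rfl, rfl⟩ <;> simp

end Dart

open Classical in
/-- The weight of a pair of cells, given the set `P` of darts already passed by the sweep: `1` or
`-1` if the cells touch along a dart in `P` or outside `P`, and `0` if they do not touch. -/
noncomputable def contactWeight (P : Set (Dart X)) (k k' : X ⊕ X) : ℤ :=
  Function.extend Dart.edge (fun u ↦ if u ∈ P then 1 else -1) 0 s(k, k')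

variable {P Q : Set (Dart X)} {u : Dart X} {k k' : X ⊕ X}

theorem contactWeight_of_mem (h : u.edge = s(k, k')) (hu : u ∈ P) : contactWeight P k k' = 1 := by
  rw [contactWeight, ← h, Dart.edge_injective.extend_apply, if_pos hu]

theorem contactWeight_of_notMem (h : u.edge = s(k, k')) (hu : u ∉ P) :
    contactWeight P k k' = -1 := by
  rw [contactWeight, ← h, Dart.edge_injective.extend_apply, if_neg hu]

theorem contactWeight_of_forall_edge_ne (h : ∀ u : Dart X, u.edge ≠ s(k, k')) :
    contactWeight P k k' = 0 :=
  Function.extend_apply' _ _ _ fun ⟨u, hu⟩ ↦ h u hu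

theorem contactWeight_congr (h : ∀ u : Dart X, u.edge = s(k, k') → (u ∈ P ↔ u ∈ Q)) :
    contactWeight P k k' = contactWeight Q k k' := by
  by_cases hcontact : ∃ u : Dart X, u.edge = s(k, k')
  · obtain ⟨u, hu⟩ := hcontact
    by_cases hP : u ∈ P
    · rw [contactWeight_of_mem hu hP, contactWeight_of_mem hu ((h u hu).1 hP)]
    · rw [contactWeight_of_notMem hu hP, contactWeight_of_notMem hu (mt (h u hu).2 hP)]
  · rw [not_exists] at hcontact
    rw [contactWeight_of_forall_edge_ne hcontact, contactWeight_of_forall_edge_ne hcontact]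

theorem abs_contactWeight_le (P : Set (Dart X)) (k k' : X ⊕ X) : |contactWeight P k k'| ≤ 1 := by
  by_cases hcontact : ∃ u : Dart X, u.edge = s(k, k')
  · obtain ⟨u, hu⟩ := hcontact
    by_cases hP : u ∈ P
    · simp [contactWeight_of_mem hu hP]
    · simp [contactWeight_of_notMem hu hP]
  · simp [contactWeight_of_forall_edge_ne (not_exists.1 hcontact)]

theorem contactWeight_of_isLeft_eq (h : k.isLeft = k'.isLeft) : contactWeight P k k' = 0 :=
  contactWeight_of_forall_edge_ne fun _ hu ↦ Dart.isLeft_ne_of_edge_eq hu h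

-- Among three cells two have the same colour, so one of the three weights vanishes.
theorem abs_contactWeight_add_sub_le (P : Set (Dart X)) (k₁ k₂ k₃ : X ⊕ X) :
    |contactWeight P k₁ k₂ + contactWeight P k₂ k₃ - contactWeight P k₁ k₃| ≤ 2 := by
  have h₁₂ := abs_le.1 (abs_contactWeight_le P k₁ k₂)
  have h₂₃ := abs_le.1 (abs_contactWeight_le P k₂ k₃)
  have h₁₃ := abs_le.1 (abs_contactWeight_le P k₁ k₃)
  have hcolour : k₁.isLeft = k₂.isLeft ∨ k₂.isLeft = k₃.isLeft ∨ k₁.isLeft = k₃.isLeft := by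
    cases k₁ <;> cases k₂ <;> cases k₃ <;> simp
  rw [abs_le]
  rcases hcolour with h | h | h <;> have hzero := contactWeight_of_isLeft_eq (P := P) h <;> omega

end Dart

section Cells

variable {V : Type*} [NormedAddCommGroup V] {X : Finset V}

/-- The vector from the tail to the head of a dart. -/
def Dart.vec (u : Dart X) : V := u.1.2 - u.1.1

theorem Dart.norm_vec (u : Dart X) : ‖u.vec‖ = 1 :=
  norm_sub_of_mem_neighbors u.head_mem_neighbors

theorem Dart.vec_ne_zero (u : Dart X) : u.vec ≠ 0 := by
  rw [← norm_ne_zero_iff, u.norm_vec]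
  exact one_ne_zero

theorem Dart.vec_reverse (u : Dart X) : u.reverse.vec = -u.vec := (neg_sub _ _).symm

variable [InnerProductSpace ℝ V]

/-- The cells of the sweep: the cone of the diameters at `x` for the red cell `Sum.inl x`, and its
reflection in the origin for the blue cell `Sum.inr x`. Both are spanned by the vectors of the darts
incident with the cell. -/
noncomputable def cell (X : Finset V) (k : X ⊕ X) : PointedCone ℝ V :=
  PointedCone.hull ℝ (Dart.vec '' {u : Dart X | k ∈ u.edge})

theorem vec_mem_cell {u : Dart X} {k : X ⊕ X} (hk : k ∈ u.edge) : u.vec ∈ cell X k :=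
  PointedCone.subset_hull (Set.mem_image_of_mem _ hk)

theorem cell_inl (x : X) : cell X (Sum.inl x) = diameterCone X x := by
  rw [cell, diameterCone]
  congr 1
  ext p
  constructor
  · rintro ⟨u, hu, rfl⟩
    obtain rfl := Dart.inl_mem_edge.1 hu
    exact ⟨u.1.2, u.head_mem_neighbors, rfl⟩
  · rintro ⟨y, hy, rfl⟩
    obtain ⟨hyX, hxy⟩ := mem_neighbors.1 hy
    exact ⟨⟨(x, ⟨y, hyX⟩), hxy⟩, Dart.inl_mem_edge.2 rfl, rfl⟩

open scoped Pointwise in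
theorem cell_inr (x : X) : cell X (Sum.inr x) = -diameterCone X x := by
  rw [cell, diameterCone, PointedCone.hull, PointedCone.hull, ← Submodule.span_neg_eq_neg]
  congr 1
  ext p
  constructor
  · rintro ⟨u, hu, rfl⟩
    obtain rfl := Dart.inr_mem_edge.1 hu
    exact ⟨u.1.1, u.tail_mem_neighbors, (neg_sub _ _).symm⟩
  · rintro ⟨y, hy, hp⟩
    obtain ⟨hyX, hxy⟩ := mem_neighbors.1 hy
    refine ⟨⟨(⟨y, hyX⟩, x), by rwa [dist_comm]⟩, Dart.inr_mem_edge.2 rfl, ?_⟩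
    rw [← neg_neg p, ← hp]
    exact (neg_sub _ _).symm

theorem mem_cell_inr {x : X} {p : V} : p ∈ cell X (Sum.inr x) ↔ -p ∈ diameterCone X x := by
  rw [cell_inr, Submodule.mem_neg]

variable (hX : ∀ x ∈ X, ∀ y ∈ X, dist x y ≤ 1)
include hX

theorem Dart.vec_injective : Function.Injective (Dart.vec (X := X)) := by
  intro u w h
  have htail : u.1.1 = w.1.1 := by
    by_contra hne
    refine u.vec_ne_zero (eq_zero_of_mem_diameterCone_of_mem_diameterCone hX u.1.1.2 w.1.1.2
      (Subtype.coe_ne_coe.2 hne) (sub_mem_diameterCone u.head_mem_neighbors) ?_)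
    exact h ▸ sub_mem_diameterCone w.head_mem_neighbors
  have hhead : u.1.2 = w.1.2 := by
    rw [Dart.vec, Dart.vec, htail] at h
    exact Subtype.ext (sub_left_injective h)
  exact Subtype.ext (Prod.ext htail hhead)

theorem eq_zero_of_mem_cell_of_neg_mem {k : X ⊕ X} {p : V} (hp : p ∈ cell X k)
    (hneg : -p ∈ cell X k) : p = 0 := by
  rcases k with x | x
  · rw [cell_inl] at hp hneg
    exact eq_zero_of_mem_diameterCone_of_neg_mem hX hp hneg
  · rw [mem_cell_inr] at hp hneg
    exact neg_eq_zero.1 (eq_zero_of_mem_diameterCone_of_neg_mem hX hp hneg)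

theorem exists_edge_eq_of_mem_cell_of_mem_cell {k k' : X ⊕ X} (hkk' : k ≠ k') {p : V}
    (hp : p ∈ cell X k) (hp' : p ∈ cell X k') (hp0 : p ≠ 0) :
    ∃ u : Dart X, u.edge = s(k, k') ∧ ∃ c : ℝ, 0 < c ∧ p = c • u.vec := by
  wlog hle : k.isLeft ∨ k'.isRight generalizing k k'
  · rw [Sym2.eq_swap]
    exact this hkk'.symm hp' hp (by cases k <;> cases k' <;> simp at hle ⊢)
  rcases k with x | x <;> rcases k' with y | y
  · rw [cell_inl] at hp hp'
    exact absurd (eq_zero_of_mem_diameterCone_of_mem_diameterCone hX x.2 y.2 (by simpa using hkk')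
      hp hp') hp0
  · rw [cell_inl] at hp
    rw [mem_cell_inr] at hp'
    obtain ⟨hxy, hc⟩ :=
      exists_pos_smul_sub_of_mem_diameterCone_of_neg_mem hX x.2 y.2 hp hp' hp0
    exact ⟨⟨(x, y), hxy⟩, rfl, hc⟩
  · simp at hle
  · rw [mem_cell_inr] at hp hp'
    exact absurd (eq_zero_of_mem_diameterCone_of_mem_diameterCone hX x.2 y.2 (by simpa using hkk')
      hp hp') (neg_ne_zero.2 hp0)

theorem sameRay_vec_of_add_eq_smul (hdeg : ∀ y ∈ X, ∀ x, ∃ z ∈ neighbors X y, z ≠ x) {u : Dart X}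
    {k : X ⊕ X} (hk : k ∈ u.edge) {p q : V} (hp : p ∈ cell X k) (hq : q ∈ cell X k) {c : ℝ}
    (h : p + q = c • u.vec) : SameRay ℝ p u.vec := by
  rcases k with x | x
  · obtain rfl := Dart.inl_mem_edge.1 hk
    obtain ⟨z, hz, hzx⟩ := hdeg _ u.1.2.2 u.1.1
    rw [cell_inl] at hp hq
    exact sameRay_sub_of_add_eq_smul hX u.head_mem_neighbors hz hzx hp hq h
  · obtain rfl := Dart.inr_mem_edge.1 hk
    obtain ⟨z, hz, hzx⟩ := hdeg _ u.1.1.2 u.1.2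
    rw [mem_cell_inr] at hp hq
    rw [← sameRay_neg_iff, ← u.vec_reverse]
    refine sameRay_sub_of_add_eq_smul hX u.tail_mem_neighbors hz hzx hp hq (c := c) ?_
    rw [← neg_add, h, ← smul_neg, ← u.vec_reverse]
    rfl

end Cells

theorem exists_add_smul_mem_of_mem_interior {E : Type*} [AddCommGroup E] [Module ℝ E]
    [TopologicalSpace E] [ContinuousAdd E] [ContinuousSMul ℝ E] {C : PointedCone ℝ E} {n : E}
    (hn : n ∈ interior (C : Set E)) (p : E) : ∃ s : ℝ, p + s • n ∈ C := by
  have hcont : Continuous fun t : ℝ ↦ n + t • p := by fun_prop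
  have hnear : ∀ᶠ t : ℝ in nhdsWithin 0 (Set.Ioi 0), n + t • p ∈ interior (C : Set E) :=
    nhdsWithin_le_nhds (hcont.continuousAt.eventually_mem (isOpen_interior.mem_nhds (by simpa)))
  obtain ⟨t, hmem, ht⟩ := (hnear.and self_mem_nhdsWithin).exists
  refine ⟨t⁻¹, ?_⟩
  convert C.smul_mem (inv_nonneg.2 ht.le) (interior_subset hmem) using 1
  rw [smul_add, inv_smul_smul₀ ht.ne', add_comm]

/-- The data of a sweep: a half-plane rotates about the line `ℝ axis`, with `form` recording the
direction of rotation. The axis runs through the interior of the red cell of `pole` and points into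
it, and never sweeps over two darts at once except for a dart and its reverse. -/
structure SweepFrame {V : Type*} [NormedAddCommGroup V] [InnerProductSpace ℝ V]
    (X : Finset V) where
  form : V →ₗ[ℝ] V →ₗ[ℝ] ℝ
  axis : V
  pole : X
  isAxialForm : IsAxialForm form axis
  dist_le : ∀ x ∈ X, ∀ y ∈ X, dist x y ≤ 1
  exists_neighbor_ne : ∀ y ∈ X, ∀ x, ∃ z ∈ neighbors X y, z ≠ x
  axis_mem_interior : axis ∈ interior (diameterCone X pole : Set V)
  generic : ∀ u w : Dart X, form u.vec w.vec = 0 → w = u ∨ w = u.reverse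

namespace SweepFrame

variable {V : Type*} [NormedAddCommGroup V] [InnerProductSpace ℝ V] {X : Finset V}
  (F : SweepFrame X) {k k' : X ⊕ X} {u v w : Dart X}

/-- The red cell of the pole, which meets every half-plane of the sweep near the axis. -/
def top : X ⊕ X := Sum.inl F.pole

/-- The blue cell of the pole, which meets every half-plane of the sweep near the reflected axis. -/
def bottom : X ⊕ X := Sum.inr F.pole

/-- The cell `k` meets the half-plane that is bounded by the axis and contains the dart `v`. -/
def Active (v : Dart X) (k : X ⊕ X) : Prop := ∃ s : ℝ, v.vec + s • F.axis ∈ cell X k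

/-- Some translate of a point of `k'` along the axis lies in `k`. Cells being cones, the length of
the translation is immaterial. -/
def Above (k k' : X ⊕ X) : Prop := ∃ q ∈ cell X k', q + F.axis ∈ cell X k

theorem top_ne_bottom : F.top ≠ F.bottom := Sum.inl_ne_inr

theorem axis_mem_cell_top : F.axis ∈ cell X F.top := by
  rw [top, cell_inl]
  exact interior_subset F.axis_mem_interior

theorem neg_axis_mem_cell_bottom : -F.axis ∈ cell X F.bottom := by
  rw [bottom, mem_cell_inr, neg_neg]
  exact interior_subset F.axis_mem_interior

theorem active_top (v : Dart X) : F.Active v F.top := by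
  rw [Active, top, cell_inl]
  exact exists_add_smul_mem_of_mem_interior F.axis_mem_interior v.vec

theorem active_bottom (v : Dart X) : F.Active v F.bottom := by
  obtain ⟨s, hs⟩ := exists_add_smul_mem_of_mem_interior F.axis_mem_interior (-v.vec)
  refine ⟨-s, ?_⟩
  rw [bottom, mem_cell_inr]
  convert hs using 1
  rw [neg_add, neg_smul, neg_neg]

theorem active_of_mem_edge (hk : k ∈ v.edge) : F.Active v k :=
  ⟨0, by simpa using vec_mem_cell hk⟩

include F in
theorem nontrivial_setOf_mem_edge (k : X ⊕ X) : {u : Dart X | k ∈ u.edge}.Nontrivial := by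
  have hneighbors (x : X) : ∃ y z : X, y ≠ z ∧ dist (x : V) y = 1 ∧ dist (x : V) z = 1 := by
    obtain ⟨y, hy, -⟩ := F.exists_neighbor_ne x x.2 x
    obtain ⟨z, hz, hzy⟩ := F.exists_neighbor_ne x x.2 y
    rw [mem_neighbors] at hy hz
    exact ⟨⟨y, hy.1⟩, ⟨z, hz.1⟩, by simpa using hzy.symm, hy.2, hz.2⟩
  rcases k with x | x <;> obtain ⟨y, z, hyz, hy, hz⟩ := hneighbors x
  · exact ⟨⟨(x, y), hy⟩, Dart.inl_mem_edge.2 rfl, ⟨(x, z), hz⟩, Dart.inl_mem_edge.2 rfl,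
      by simpa using hyz⟩
  · rw [dist_comm] at hy hz
    exact ⟨⟨(y, x), hy⟩, Dart.inr_mem_edge.2 rfl, ⟨(z, x), hz⟩, Dart.inr_mem_edge.2 rfl,
      by simpa using hyz⟩

include F in
theorem ne_reverse_of_mem_edge (hu : k ∈ u.edge) (hw : k ∈ w.edge) : w ≠ u.reverse := by
  rintro rfl
  have hneg := vec_mem_cell hw
  rw [u.vec_reverse] at hneg
  exact u.vec_ne_zero (eq_zero_of_mem_cell_of_neg_mem F.dist_le (vec_mem_cell hu) hneg)

theorem form_ne_zero_of_mem_edge (hu : k ∈ u.edge) (hw : k ∈ w.edge) (huw : w ≠ u) :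
    F.form u.vec w.vec ≠ 0 := fun h ↦
  (F.generic u w h).elim huw (F.ne_reverse_of_mem_edge hu hw)

theorem exists_form_pos (v : Dart X) : ∃ u : Dart X, 0 < F.form v.vec u.vec := by
  obtain ⟨w, hw, hwv⟩ := (F.nontrivial_setOf_mem_edge (Sum.inl v.1.1)).exists_ne v
  have hne := F.form_ne_zero_of_mem_edge (Dart.inl_mem_edge.2 rfl) hw hwv
  rcases hne.lt_or_gt with h | h
  · exact ⟨w.reverse, by simpa [w.vec_reverse]⟩
  · exact ⟨w, h⟩

theorem eq_zero_of_smul_vec_eq_smul_axis {c t : ℝ} (h : c • u.vec = t • F.axis) : c = 0 := by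
  obtain ⟨w, hw⟩ := F.exists_form_pos u
  have := congrArg (F.form · w.vec) h
  simpa [F.isAxialForm.axis_left, hw.ne'] using this

theorem axis_ne_zero : F.axis ≠ 0 := by
  intro h0
  obtain ⟨u, hu⟩ := (F.nontrivial_setOf_mem_edge F.top).nonempty
  obtain ⟨s, hs⟩ := F.active_top u.reverse
  rw [h0, smul_zero, add_zero, u.vec_reverse] at hs
  exact u.vec_ne_zero (eq_zero_of_mem_cell_of_neg_mem F.dist_le (vec_mem_cell hu) hs)

theorem eq_zero_of_smul_axis_mem_cell {t : ℝ} (htop : k ≠ F.top) (hbottom : k ≠ F.bottom)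
    (h : t • F.axis ∈ cell X k) : t • F.axis = 0 := by
  by_contra h0
  obtain ⟨k', hkk', hk'⟩ : ∃ k', k ≠ k' ∧ t • F.axis ∈ cell X k' := by
    rcases le_total 0 t with ht | ht
    · exact ⟨F.top, htop, (cell X F.top).smul_mem ht F.axis_mem_cell_top⟩
    · refine ⟨F.bottom, hbottom, ?_⟩
      simpa using (cell X F.bottom).smul_mem (neg_nonneg.2 ht) F.neg_axis_mem_cell_bottom
  obtain ⟨u, -, c, hc, hu⟩ := exists_edge_eq_of_mem_cell_of_mem_cell F.dist_le hkk' h hk' h0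
  exact hc.ne' (F.eq_zero_of_smul_vec_eq_smul_axis hu.symm)

theorem Above.asymm (hkk' : k ≠ k') (h : F.Above k k') : ¬ F.Above k' k := by
  obtain ⟨q, hq, hqk⟩ := h
  rintro ⟨r, hr, hrk'⟩
  have hadd : q + F.axis + r = q + (r + F.axis) := by abel
  have hpk : q + F.axis + r ∈ cell X k := add_mem hqk hr
  have hpk' : q + F.axis + r ∈ cell X k' := hadd ▸ add_mem hq hrk'
  rcases eq_or_ne (q + F.axis + r) 0 with hp | hp
  · have hr0 : r = 0 := eq_zero_of_mem_cell_of_neg_mem F.dist_le hr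
      (by rwa [neg_eq_of_add_eq_zero_left hp])
    have hq0 : q = 0 := eq_zero_of_mem_cell_of_neg_mem F.dist_le hq
      (by rwa [neg_eq_of_add_eq_zero_right (hadd ▸ hp)])
    simp [hr0, hq0, F.axis_ne_zero] at hp
  · obtain ⟨u, hu, c, -, hc⟩ :=
      exists_edge_eq_of_mem_cell_of_mem_cell F.dist_le hkk' hpk hpk' hp
    have hqu := sameRay_vec_of_add_eq_smul F.dist_le F.exists_neighbor_ne
      (hu ▸ Sym2.mem_mk_left k k') hqk hr hc
    have hqu' := sameRay_vec_of_add_eq_smul F.dist_le F.exists_neighbor_ne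
      (hu ▸ Sym2.mem_mk_right k k') hq hrk' (hadd ▸ hc)
    have haxis : (‖q + F.axis‖ - ‖q‖) • u.vec = (1 : ℝ) • F.axis := by
      have h₁ := hqu.norm_smul_eq
      have h₂ := hqu'.norm_smul_eq
      rw [u.norm_vec, one_smul] at h₁ h₂
      rw [sub_smul, h₁, h₂, add_sub_cancel_left, one_smul]
    rw [F.eq_zero_of_smul_vec_eq_smul_axis haxis, zero_smul, one_smul] at haxis
    exact F.axis_ne_zero haxis.symm

theorem above_of_lt {p : V} {s s' : ℝ} (hk : p + s • F.axis ∈ cell X k)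
    (hk' : p + s' • F.axis ∈ cell X k') (h : s' < s) : F.Above k k' := by
  have hpos : 0 < s - s' := sub_pos.2 h
  have hsplit : p + s • F.axis = p + s' • F.axis + (s - s') • F.axis := by module
  refine ⟨_, (cell X k').smul_mem (inv_nonneg.2 hpos.le) hk', ?_⟩
  convert (cell X k).smul_mem (inv_nonneg.2 hpos.le) hk using 1
  rw [hsplit, smul_add _ (p + s' • F.axis), inv_smul_smul₀ hpos.ne']

theorem edge_eq_of_mem_cell {s : ℝ} (hkk' : k ≠ k')
    (hk : v.vec + s • F.axis ∈ cell X k) (hk' : v.vec + s • F.axis ∈ cell X k') :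
    v.edge = s(k, k') := by
  have h0 : v.vec + s • F.axis ≠ 0 := fun h0 ↦ one_ne_zero <|
    F.eq_zero_of_smul_vec_eq_smul_axis (c := 1) (t := -s)
      (by rw [one_smul, neg_smul, eq_neg_of_add_eq_zero_left h0])
  obtain ⟨u, hu, c, hc, huv⟩ := exists_edge_eq_of_mem_cell_of_mem_cell F.dist_le hkk' hk hk' h0
  have hform : F.form u.vec v.vec = 0 := by
    rw [← F.isAxialForm.apply_add_smul_axis_right _ _ s, huv, map_smul, F.isAxialForm.isAlt,
      smul_zero]
  rcases F.generic u v hform with rfl | rfl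
  · exact hu
  · have hcs : (c + 1) • u.vec = s • F.axis := by
      rw [add_smul, ← huv, one_smul, u.vec_reverse, neg_add_cancel_comm]
    linarith [F.eq_zero_of_smul_vec_eq_smul_axis hcs]

theorem above_or_above_of_edge_ne (hk : F.Active v k) (hk' : F.Active v k') (hkk' : k ≠ k')
    (hv : v.edge ≠ s(k, k')) : F.Above k k' ∨ F.Above k' k := by
  obtain ⟨s, hs⟩ := hk
  obtain ⟨s', hs'⟩ := hk'
  rcases lt_trichotomy s s' with h | rfl | h
  · exact Or.inr (F.above_of_lt hs' hs h)
  · exact absurd (F.edge_eq_of_mem_cell hkk' hs hs') hv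
  · exact Or.inl (F.above_of_lt hs hs' h)

end SweepFrame

theorem exists_eq_append_cons_cons_of_pairwise {α : Type*} {r : α → α → Prop} {L : List α}
    (hnodup : L.Nodup) (hr : L.Pairwise r) {a b : α} (ha : a ∈ L) (hb : b ∈ L) (hab : a ≠ b)
    (hba : ¬ r b a) (hbetween : ∀ c ∈ L, r a c → r c b → c = a ∨ c = b) :
    ∃ l l', L = l ++ a :: b :: l' := by
  obtain ⟨l, m, rfl⟩ := List.append_of_mem ha
  have hbm : b ∈ m := by grind
  obtain ⟨l₂, l', rfl⟩ := List.append_of_mem hbm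
  suffices l₂ = [] from ⟨l, l', by rw [this, List.nil_append]⟩
  refine List.eq_nil_iff_forall_not_mem.2 fun c hc ↦ ?_
  have hac : r a c := by simp_all [List.pairwise_append]
  have hcb : r c b := by simp_all [List.pairwise_append]
  rcases hbetween c (by simp [hc]) hac hcb with rfl | rfl <;> grind

theorem length_le_length_filter_notMem_add_card {α : Type*} [DecidableEq α] {L : List α}
    (hL : L.Nodup) (s : Finset α) : L.length ≤ (L.filter (· ∉ s)).length + s.card := by
  have hsub : L.toFinset \ (L.filter (· ∉ s)).toFinset ⊆ s := fun a ↦ by simp +contextual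
  rw [← List.toFinset_card_of_nodup hL, ← List.toFinset_card_of_nodup (hL.filter _)]
  have := Finset.card_le_card hsub
  have := Finset.le_card_sdiff (L.filter (· ∉ s)).toFinset L.toFinset
  omega

namespace SweepFrame

variable {V : Type*} [NormedAddCommGroup V] [InnerProductSpace ℝ V] {X : Finset V}
  (F : SweepFrame X) {k k' : X ⊕ X} {u v w : Dart X}

theorem exists_edge_eq_not_above (v : Dart X) :
    ∃ a b, a ≠ b ∧ v.edge = s(a, b) ∧ ¬ F.Above b a := by
  by_cases h : F.Above (Sum.inr v.1.2) (Sum.inl v.1.1)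
  · exact ⟨_, _, Sum.inr_ne_inl, Sym2.eq_swap, h.asymm F Sum.inr_ne_inl⟩
  · exact ⟨_, _, Sum.inl_ne_inr, rfl, h⟩

-- Cells are compared by the heights at which they meet the half-plane of `v`. Only the two cells
-- at `v` can have equal heights, and this tie is broken in favour of `a`.
theorem exists_key (v : Dart X) : ∃ (key : X ⊕ X → ℝ ×ₗ ℕ) (a b : X ⊕ X),
    a ≠ b ∧ v.edge = s(a, b) ∧ key b < key a ∧
    (∀ k k', F.Active v k → F.Active v k' → k ≠ k' → key k' ≤ key k → ¬ F.Above k' k) ∧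
    ∀ c, F.Active v c → key b ≤ key c → key c ≤ key a → c = a ∨ c = b := by
  classical
  obtain ⟨a, b, hab, hv, habove⟩ := F.exists_edge_eq_not_above v
  have hexists (k : X ⊕ X) (hk : F.Active v k) :
      ∃ s : ℝ, v.vec + s • F.axis ∈ cell X k ∧ (k ∈ v.edge → s = 0) := by
    by_cases hkv : k ∈ v.edge
    · exact ⟨0, by simpa using vec_mem_cell hkv, fun _ ↦ rfl⟩
    · obtain ⟨s, hs⟩ := hk
      exact ⟨s, hs, fun h ↦ absurd h hkv⟩
  choose! height hheight hzero using hexists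
  have htie {k k' : X ⊕ X} (hk : F.Active v k) (hk' : F.Active v k') (hkk' : k ≠ k')
      (h : height k = height k') : s(a, b) = s(k, k') :=
    hv ▸ F.edge_eq_of_mem_cell hkk' (hheight k hk) (h ▸ hheight k' hk')
  have hav : a ∈ v.edge := hv ▸ Sym2.mem_mk_left a b
  have hbv : b ∈ v.edge := hv ▸ Sym2.mem_mk_right a b
  have ha := F.active_of_mem_edge hav
  have hheight_ab : height a = height b :=
    (hzero a ha hav).trans (hzero b (F.active_of_mem_edge hbv) hbv).symm
  refine ⟨fun k ↦ toLex (height k, if k = a then 1 else 0), a, b, hab, hv, ?_, ?_, ?_⟩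
  · simp [Prod.Lex.toLex_lt_toLex, hheight_ab, hab.symm]
  · intro k k' hk hk' hkk' hle
    rcases Prod.Lex.toLex_le_toLex.1 hle with hlt | ⟨heq, hle⟩
    · exact (F.above_of_lt (hheight k hk) (hheight k' hk') hlt).asymm F hkk'
    · rcases Sym2.eq_iff.1 (htie hk hk' hkk' heq.symm) with ⟨rfl, rfl⟩ | ⟨rfl, rfl⟩
      · exact habove
      · simp [hab.symm] at hle
  · intro c hc hbc hca
    have heq : height a = height c := le_antisymm
      (hheight_ab ▸ Prod.Lex.monotone_fst _ _ hbc) (Prod.Lex.monotone_fst _ _ hca)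
    exact or_iff_not_imp_left.2 fun hne ↦ (Sym2.congr_right.1 (htie ha hc (Ne.symm hne) heq)).symm

theorem exists_word (v : Dart X) :
    ∃ L : List (X ⊕ X), L.Nodup ∧ (∀ k, k ∈ L ↔ F.Active v k) ∧
      L.Pairwise (fun k k' ↦ ¬ F.Above k' k) ∧
      ∃ a b l l', v.edge = s(a, b) ∧ L = l ++ a :: b :: l' := by
  classical
  obtain ⟨key, a, b, hab, hv, hlt, habove, hbetween⟩ := F.exists_key v
  let r (k k' : X ⊕ X) : Prop := key k' ≤ key k
  have htotal : Std.Total r := ⟨fun _ _ ↦ le_total _ _⟩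
  have htrans : IsTrans _ r := ⟨fun _ _ _ h h' ↦ h'.trans h⟩
  let L := (Finset.univ.filter (F.Active v)).toList.insertionSort r
  have hmem (k : X ⊕ X) : k ∈ L ↔ F.Active v k := by simp [L]
  have hnodup : L.Nodup := (List.perm_insertionSort r _).nodup_iff.2 (Finset.nodup_toList _)
  have hsorted : L.Pairwise r := List.pairwise_insertionSort r _
  refine ⟨L, hnodup, hmem, (hnodup.and hsorted).imp_of_mem fun hk hk' h ↦
    habove _ _ ((hmem _).1 hk) ((hmem _).1 hk') h.1 h.2, a, b, ?_⟩
  obtain ⟨l, l', hL⟩ := exists_eq_append_cons_cons_of_pairwise hnodup hsorted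
    ((hmem a).2 (F.active_of_mem_edge (hv ▸ Sym2.mem_mk_left a b)))
    ((hmem b).2 (F.active_of_mem_edge (hv ▸ Sym2.mem_mk_right a b))) hab hlt.not_ge
    fun c hc hca hbc ↦ hbetween c ((hmem c).1 hc) hbc hca
  exact ⟨l, l', hv, hL⟩

end SweepFrame

namespace SweepFrame

variable {V : Type*} [NormedAddCommGroup V] [InnerProductSpace ℝ V] {X : Finset V}
  (F : SweepFrame X) {k k' : X ⊕ X} {u v w : Dart X}

/-- The cells other than those of the pole. They meet the axis only at the origin, so the sweep
enters and leaves each of them once. -/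
abbrev SideCell : Type _ := {k : X ⊕ X // k ≠ F.top ∧ k ≠ F.bottom}

/-- The half-planes of `v` and `w` are consecutive positions of the sweep. -/
def Next (v w : Dart X) : Prop := IsNext F.form (Set.range (Dart.vec (X := X))) v.vec w.vec

theorem exists_ends (k : F.SideCell) : ∃ l r : Dart X, k.1 ∈ l.edge ∧ k.1 ∈ r.edge ∧
    0 < F.form l.vec r.vec ∧ ∀ p ∈ cell X k.1, 0 ≤ F.form l.vec p ∧ 0 ≤ F.form p r.vec := by
  have hdarts := F.nontrivial_setOf_mem_edge k.1
  obtain ⟨_, ⟨l, hl, rfl⟩, _, ⟨r, hr, rfl⟩, hends⟩ := F.isAxialForm.exists_ends_of_finite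
    ((Set.toFinite {u : Dart X | k.1 ∈ u.edge}).image Dart.vec) (hdarts.nonempty.image _)
    (fun _ ↦ eq_zero_of_mem_cell_of_neg_mem F.dist_le)
    (fun _ ↦ F.eq_zero_of_smul_axis_mem_cell k.2.1 k.2.2)
  have hrl : r ≠ l := by
    rintro rfl
    obtain ⟨u, hu, hur⟩ := hdarts.exists_ne r
    refine F.form_ne_zero_of_mem_edge hr hu hur (le_antisymm ?_ (hends _ (vec_mem_cell hu)).1)
    rw [F.isAxialForm.swap, neg_nonpos]
    exact (hends _ (vec_mem_cell hu)).2
  exact ⟨l, r, hl, hr, (hends _ (vec_mem_cell hr)).1.lt_of_ne'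
    (F.form_ne_zero_of_mem_edge hl hr hrl), hends⟩

/-- The dart at which the sweep enters a cell. -/
noncomputable def firstDart (k : F.SideCell) : Dart X := (F.exists_ends k).choose

/-- The dart at which the sweep leaves a cell. -/
noncomputable def lastDart (k : F.SideCell) : Dart X := (F.exists_ends k).choose_spec.choose

variable {F} {K : F.SideCell}

theorem firstDart_mem_edge : K.1 ∈ (F.firstDart K).edge :=
  (F.exists_ends K).choose_spec.choose_spec.1

theorem lastDart_mem_edge : K.1 ∈ (F.lastDart K).edge :=
  (F.exists_ends K).choose_spec.choose_spec.2.1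

theorem form_firstDart_lastDart_pos : 0 < F.form (F.firstDart K).vec (F.lastDart K).vec :=
  (F.exists_ends K).choose_spec.choose_spec.2.2.1

theorem form_firstDart_nonneg {p : V} (hp : p ∈ cell X K.1) : 0 ≤ F.form (F.firstDart K).vec p :=
  ((F.exists_ends K).choose_spec.choose_spec.2.2.2 p hp).1

theorem form_lastDart_nonneg {p : V} (hp : p ∈ cell X K.1) : 0 ≤ F.form p (F.lastDart K).vec :=
  ((F.exists_ends K).choose_spec.choose_spec.2.2.2 p hp).2

theorem active_iff : F.Active v K.1 ↔
    0 ≤ F.form (F.firstDart K).vec v.vec ∧ 0 ≤ F.form v.vec (F.lastDart K).vec := by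
  constructor
  · rintro ⟨s, hs⟩
    rw [← F.isAxialForm.apply_add_smul_axis_right _ _ s,
      ← F.isAxialForm.apply_add_smul_axis_left v.vec _ s]
    exact ⟨form_firstDart_nonneg hs, form_lastDart_nonneg hs⟩
  · rintro ⟨hl, hr⟩
    exact F.isAxialForm.exists_add_smul_axis_mem (vec_mem_cell firstDart_mem_edge)
      (vec_mem_cell lastDart_mem_edge) form_firstDart_lastDart_pos hl hr

theorem eq_of_form_eq_zero {p : V} (h : F.form u.vec w.vec = 0) (hu : 0 ≤ F.form u.vec p)
    (hw : 0 < F.form w.vec p) : w = u := by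
  refine (F.generic u w h).resolve_right ?_
  rintro rfl
  rw [u.vec_reverse, map_neg, LinearMap.neg_apply] at hw
  linarith

theorem active_and_lastDart_ne_iff : (F.Active v K.1 ∧ F.lastDart K ≠ v) ↔
    0 ≤ F.form (F.firstDart K).vec v.vec ∧ 0 < F.form v.vec (F.lastDart K).vec := by
  rw [active_iff, and_assoc]
  refine and_congr_right fun hl ↦ ⟨fun ⟨hr, hne⟩ ↦ hr.lt_of_ne' fun h ↦ hne ?_, fun hr ↦ ?_⟩
  · refine eq_of_form_eq_zero h (p := -(F.firstDart K).vec) ?_ ?_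
    · rwa [map_neg, ← F.isAxialForm.swap]
    · rw [map_neg, ← F.isAxialForm.swap]
      exact form_firstDart_lastDart_pos
  · refine ⟨hr.le, ?_⟩
    rintro rfl
    simp [F.isAxialForm.isAlt _] at hr

theorem active_and_firstDart_ne_iff : (F.Active v K.1 ∧ F.firstDart K ≠ v) ↔
    0 < F.form (F.firstDart K).vec v.vec ∧ 0 ≤ F.form v.vec (F.lastDart K).vec := by
  rw [active_iff, and_right_comm]
  refine and_congr_left fun hr ↦ ⟨fun ⟨hl, hne⟩ ↦ hl.lt_of_ne' fun h ↦ hne ?_, fun hl ↦ ?_⟩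
  · refine eq_of_form_eq_zero ?_ hr form_firstDart_lastDart_pos
    rw [F.isAxialForm.swap, h, neg_zero]
  · refine ⟨hl.le, ?_⟩
    rintro rfl
    simp [F.isAxialForm.isAlt _] at hl

variable (F) in
theorem exists_next (v : Dart X) : ∃ w, F.Next v w := by
  obtain ⟨u, hu⟩ := F.exists_form_pos v
  obtain ⟨_, ⟨w, rfl⟩, hw⟩ := F.isAxialForm.exists_isNext (Set.finite_range Dart.vec)
    ⟨u.vec, Set.mem_range_self u, hu⟩
  exact ⟨w, hw⟩

theorem Next.nonneg (h : F.Next v w) (hu : 0 < F.form u.vec w.vec) : 0 ≤ F.form u.vec v.vec :=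
  F.isAxialForm.nonneg_of_isNext h (Set.mem_range_self u) hu

theorem Next.left_unique (h : F.Next v w) (h' : F.Next u w) : v = u := by
  refine eq_of_form_eq_zero (le_antisymm ?_ (h.nonneg h'.1)) h'.1.le h.1
  rw [F.isAxialForm.swap, neg_nonpos]
  exact h'.nonneg h.1

theorem Next.mem_passed_iff (h : F.Next v w) (hu : u ≠ w.reverse) :
    u = v ∨ 0 < F.form u.vec v.vec ↔ 0 < F.form u.vec w.vec := by
  constructor
  · rintro (rfl | huv)
    · exact h.1
    · have hnonneg := h.2 u.reverse.vec (Set.mem_range_self _) (by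
        rwa [u.vec_reverse, map_neg, ← F.isAxialForm.swap])
      rw [u.vec_reverse, map_neg, ← F.isAxialForm.swap] at hnonneg
      refine hnonneg.lt_of_ne' fun hzero ↦ ?_
      rw [F.isAxialForm.swap, neg_eq_zero] at hzero
      obtain rfl := (F.generic w u hzero).resolve_right hu
      rw [F.isAxialForm.swap] at huv
      linarith [h.1]
  · refine fun huw ↦ or_iff_not_imp_left.2 fun hne ↦ (h.nonneg huw).lt_of_ne' fun hzero ↦ ?_
    rw [F.isAxialForm.swap, neg_eq_zero] at hzero
    exact hne (eq_of_form_eq_zero hzero h.1.le huw)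

theorem eq_top_or_eq_bottom_of_mem_reverse_edge (hk : F.Active w k) (hmem : k ∈ w.reverse.edge) :
    k = F.top ∨ k = F.bottom := by
  by_contra! hside
  obtain ⟨s, hs⟩ := hk
  have hneg : -w.vec ∈ cell X k := w.vec_reverse ▸ vec_mem_cell hmem
  have haxis : s • F.axis = 0 := F.eq_zero_of_smul_axis_mem_cell hside.1 hside.2
    (by simpa using add_mem hs hneg)
  rw [haxis, add_zero] at hs
  exact w.vec_ne_zero (eq_zero_of_mem_cell_of_neg_mem F.dist_le hs hneg)

theorem reverse_edge_ne_of_active (hk : F.Active w k) (hk' : F.Active w k') :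
    w.reverse.edge ≠ s(k, k') := by
  intro hedge
  have hpole (a : X ⊕ X) (ha : a ∈ w.reverse.edge) : a = F.top ∨ a = F.bottom := by
    refine eq_top_or_eq_bottom_of_mem_reverse_edge ?_ ha
    rcases Sym2.mem_iff.1 (hedge ▸ ha) with rfl | rfl
    · exact hk
    · exact hk'
  have htail := hpole _ (Dart.inl_mem_edge.2 rfl)
  have hhead := hpole _ (Dart.inr_mem_edge.2 rfl)
  simp only [top, bottom, Sum.inl.injEq, Sum.inr.injEq, reduceCtorEq, or_false, false_or]
    at htail hhead
  have := w.reverse.2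
  simp [htail, hhead] at this

open scoped Classical in
/-- The side cells that the function `e` sends to `v`, for `e` one of `firstDart`, `lastDart`. -/
noncomputable def cellFiber (e : F.SideCell → Dart X) (v : Dart X) : Finset (X ⊕ X) :=
  (Finset.univ.filter (e · = v)).map (Function.Embedding.subtype _)

theorem mem_cellFiber {e : F.SideCell → Dart X} : k ∈ cellFiber e v ↔ ∃ K, e K = v ∧ K.1 = k := by
  simp [cellFiber]

theorem sum_card_cellFiber (e : F.SideCell → Dart X) :
    ∑ v, (cellFiber e v).card + 2 = 2 * X.card := by
  classical
  have hsum : ∑ v, (cellFiber e v).card = Fintype.card F.SideCell := by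
    simp only [cellFiber, Finset.card_map]
    exact (Finset.card_eq_sum_card_fiberwise fun K _ ↦ Finset.mem_univ (e K)).symm
  have hcompl : Fintype.card F.SideCell = ({F.top, F.bottom}ᶜ : Finset (X ⊕ X)).card := by
    rw [Fintype.card_subtype]
    congr 1
    ext k
    simp
  have hle := Finset.card_le_univ {F.top, F.bottom}
  rw [hsum, hcompl, Finset.card_compl]
  rw [Finset.card_pair F.top_ne_bottom] at hle ⊢
  rw [Nat.sub_add_cancel hle, Fintype.card_sum, Fintype.card_coe, two_mul]

theorem Next.active_iff_active (h : F.Next v w) :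
    F.Active v k ∧ k ∉ cellFiber F.lastDart v ↔ F.Active w k ∧ k ∉ cellFiber F.firstDart w := by
  by_cases hk : k ≠ F.top ∧ k ≠ F.bottom
  · have hfiber (e : F.SideCell → Dart X) (u : Dart X) : k ∉ cellFiber e u ↔ e ⟨k, hk⟩ ≠ u := by
      rw [mem_cellFiber]
      grind
    rw [hfiber, hfiber]
    exact (active_and_lastDart_ne_iff (K := ⟨k, hk⟩)).trans <|
      (F.isAxialForm.sector_iff_of_isNext h (Set.mem_range_self _) (Set.mem_range_self _)
        form_firstDart_lastDart_pos).trans active_and_firstDart_ne_iff.symm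
  · have hactive (u : Dart X) : F.Active u k := by
      rcases not_and_or.1 hk with hk | hk <;> rw [not_not] at hk <;> subst hk
      · exact F.active_top u
      · exact F.active_bottom u
    have hfiber (e : F.SideCell → Dart X) (u : Dart X) : k ∉ cellFiber e u := by
      rw [mem_cellFiber]
      rintro ⟨K, -, rfl⟩
      exact hk K.2
    simp [hactive, hfiber]

variable (F)

/-- The cells met by the half-plane of `v`, listed in decreasing order along the axis. -/
noncomputable def word (v : Dart X) : List (X ⊕ X) := (F.exists_word v).choose

theorem nodup_word (v : Dart X) : (F.word v).Nodup := (F.exists_word v).choose_spec.1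

theorem mem_word : k ∈ F.word v ↔ F.Active v k := (F.exists_word v).choose_spec.2.1 k

theorem pairwise_word (v : Dart X) : (F.word v).Pairwise fun k k' ↦ ¬ F.Above k' k :=
  (F.exists_word v).choose_spec.2.2.1

theorem exists_word_eq (v : Dart X) :
    ∃ a b l l', v.edge = s(a, b) ∧ F.word v = l ++ a :: b :: l' :=
  (F.exists_word v).choose_spec.2.2.2

open scoped Classical in
/-- The cells met by the sweep just before `v`, obtained from those met at `v` by removing the cells
that are entered at `v`. -/
noncomputable def wordBefore (v : Dart X) : List (X ⊕ X) :=
  (F.word v).filter (· ∉ cellFiber F.firstDart v)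

open scoped Classical in
/-- The cells met by the sweep just after `v`, obtained from those met at `v` by removing the cells
that are left at `v`. -/
noncomputable def wordAfter (v : Dart X) : List (X ⊕ X) :=
  (F.word v).filter (· ∉ cellFiber F.lastDart v)

theorem mem_wordBefore : k ∈ F.wordBefore v ↔ F.Active v k ∧ k ∉ cellFiber F.firstDart v := by
  simp [wordBefore, mem_word]

theorem mem_wordAfter : k ∈ F.wordAfter v ↔ F.Active v k ∧ k ∉ cellFiber F.lastDart v := by
  simp [wordAfter, mem_word]

variable {F}

theorem Next.wordAfter_eq (h : F.Next v w) : F.wordAfter v = F.wordBefore w := by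
  have hvw : v ≠ w := by
    rintro rfl
    simpa [F.isAxialForm.isAlt _] using h.1
  refine List.Perm.eq_of_pairwise (le := fun k k' ↦ ¬ F.Above k' k) ?_
    ((F.pairwise_word v).filter _) ((F.pairwise_word w).filter _) ?_
  · intro k k' hk hk' hnot hnot'
    by_contra hkk'
    rw [mem_wordAfter] at hk
    rw [mem_wordBefore] at hk'
    have hw := h.active_iff_active.1 hk
    have hv := h.active_iff_active.2 hk'
    by_cases hedge : v.edge = s(k, k')
    · have hedge' : w.edge ≠ s(k, k') := fun he ↦ hvw (Dart.edge_injective (hedge.trans he.symm))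
      exact (F.above_or_above_of_edge_ne hw.1 hk'.1 hkk' hedge').elim hnot' hnot
    · exact (F.above_or_above_of_edge_ne hk.1 hv.1 hkk' hedge).elim hnot' hnot
  · refine (List.perm_ext_iff_of_nodup ((F.nodup_word v).filter _) ((F.nodup_word w).filter _)).2
      fun k ↦ ?_
    exact F.mem_wordAfter.trans (h.active_iff_active.trans F.mem_wordBefore.symm)

variable (F)

/-- The darts passed by the sweep during the half-turn that ends just before `v`. -/
def passedBefore (v : Dart X) : Set (Dart X) := {u | 0 < F.form u.vec v.vec}

/-- The total weight of the contacts between consecutive cells just before `v`. -/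
noncomputable def chargeBefore (v : Dart X) : ℤ :=
  consecutiveSum (contactWeight (F.passedBefore v)) (F.wordBefore v)

/-- The total weight of the contacts between consecutive cells just after `v`. -/
noncomputable def chargeAfter (v : Dart X) : ℤ :=
  consecutiveSum (contactWeight (insert v (F.passedBefore v))) (F.wordAfter v)

variable {F}

theorem Next.chargeAfter_eq (h : F.Next v w) : F.chargeAfter v = F.chargeBefore w := by
  rw [chargeAfter, chargeBefore, h.wordAfter_eq]
  refine consecutiveSum_congr fun k hk k' hk' ↦ contactWeight_congr fun u hu ↦ ?_
  refine h.mem_passed_iff ?_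
  rintro rfl
  exact reverse_edge_ne_of_active (F.mem_wordBefore.1 hk).1 (F.mem_wordBefore.1 hk').1 hu

-- Passing `v` changes the weight of the contact along `v` from `-1` to `1`.
theorem consecutiveSum_word_eq_add_two (v : Dart X) :
    consecutiveSum (contactWeight (insert v (F.passedBefore v))) (F.word v) =
      consecutiveSum (contactWeight (F.passedBefore v)) (F.word v) + 2 := by
  obtain ⟨a, b, l, l', hv, hword⟩ := F.exists_word_eq v
  have hbefore : v ∉ F.passedBefore v := by simp [passedBefore, F.isAxialForm.isAlt _]
  have hjump := consecutiveSum_sub_eq_of_agree_off (hword ▸ F.nodup_word v)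
    (w := contactWeight (F.passedBefore v)) (w' := contactWeight (insert v (F.passedBefore v)))
    fun k k' hkk' ↦ contactWeight_congr fun u hu ↦ by
      have huv : u ≠ v := by
        rintro rfl
        exact hkk' (hu.symm.trans hv)
      simp [huv]
  rw [contactWeight_of_mem hv (Set.mem_insert v _), contactWeight_of_notMem hv hbefore] at hjump
  rw [hword]
  linarith

theorem abs_consecutiveSum_word_sub_filter_le (P : Set (Dart X)) (v : Dart X) (s : Finset (X ⊕ X))
    [DecidableEq (X ⊕ X)] :
    |consecutiveSum (contactWeight P) (F.word v) -
      consecutiveSum (contactWeight P) ((F.word v).filter (· ∉ s))| ≤ 2 * s.card := by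
  have hsub := abs_consecutiveSum_sub_le_of_sublist (abs_contactWeight_le P)
    (abs_contactWeight_add_sub_le P) (List.filter_sublist (l := F.word v) (p := (· ∉ s)))
  have hcard := length_le_length_filter_notMem_add_card (F.nodup_word v) s
  zify at hcard
  linarith

theorem chargeBefore_add_two_le (v : Dart X) : F.chargeBefore v + 2 ≤ F.chargeAfter v +
    2 * (cellFiber F.firstDart v).card + 2 * (cellFiber F.lastDart v).card := by
  classical
  have hbefore := abs_le.1 (abs_consecutiveSum_word_sub_filter_le (F := F) (F.passedBefore v) v
    (cellFiber F.firstDart v))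
  have hafter := abs_le.1 (abs_consecutiveSum_word_sub_filter_le (F := F)
    (insert v (F.passedBefore v)) v (cellFiber F.lastDart v))
  have hjump := F.consecutiveSum_word_eq_add_two v
  rw [chargeBefore, chargeAfter, wordBefore, wordAfter]
  linarith

theorem card_dart_add_four_le (F : SweepFrame X) : Fintype.card (Dart X) + 4 ≤ 4 * X.card := by
  choose next hnext using F.exists_next
  have hbij : Function.Bijective next := Finite.injective_iff_bijective.1 fun v w h ↦
    (hnext v).left_unique (h ▸ hnext w)
  have hcharge : ∑ v, F.chargeAfter v = ∑ v, F.chargeBefore v := by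
    simp only [(hnext _).chargeAfter_eq]
    exact hbij.sum_comp F.chargeBefore
  have hsum := Finset.sum_le_sum fun v (_ : v ∈ Finset.univ) ↦ F.chargeBefore_add_two_le v
  simp only [Finset.sum_add_distrib, ← Finset.mul_sum, Finset.sum_const, Finset.card_univ,
    nsmul_eq_mul, hcharge] at hsum
  have hfirst := sum_card_cellFiber F.firstDart
  have hlast := sum_card_cellFiber F.lastDart
  zify at hfirst hlast ⊢
  linarith

end SweepFrame

theorem nonempty_interior_of_span_eq_top {E : Type*} [NormedAddCommGroup E] [NormedSpace ℝ E]
    [FiniteDimensional ℝ E] {C : PointedCone ℝ E} (h : Submodule.span ℝ (C : Set E) = ⊤) :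
    (interior (C : Set E)).Nonempty := by
  rw [C.convex.interior_nonempty_iff_affineSpan_eq_top, ← Set.insert_eq_of_mem C.zero_mem]
  apply SetLike.coe_injective
  rw [affineSpan_insert_zero, h]
  rfl

theorem nonempty_interior_diameterCone {V : Type*} [NormedAddCommGroup V] [InnerProductSpace ℝ V]
    [FiniteDimensional ℝ V] (hV : Module.finrank ℝ V = 3) {X : Finset V}
    (hX : ∀ x ∈ X, ∀ y ∈ X, dist x y ≤ 1) (hdeg : ∀ x ∈ X, 3 ≤ (neighbors X x).card) {x : V}
    (hx : x ∈ X) : (interior (diameterCone X x : Set V)).Nonempty := by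
  obtain ⟨y⟩ := Function.Embedding.nonempty_of_card_le (α := Fin 3) (β := neighbors X x)
    (by simpa using hdeg x hx)
  have hind := linearIndependent_sub_of_mem_neighbors hX
    (fun z hz ↦ Finset.exists_mem_ne (one_lt_two.trans (hdeg z hz))) (fun i ↦ (y i).2)
    (Subtype.val_injective.comp y.injective)
  refine nonempty_interior_of_span_eq_top (top_le_iff.1 ?_)
  rw [← hind.span_eq_top_of_card_eq_finrank' (by simp [hV])]
  exact Submodule.span_mono (Set.range_subset_iff.2 fun i ↦ sub_mem_diameterCone (y i).2)

theorem exists_mem_forall_apply_ne_zero {E ι : Type*} [NormedAddCommGroup E] [NormedSpace ℝ E]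
    [CompleteSpace E] [Finite ι] {U : Set E} (hU : IsOpen U) (hne : U.Nonempty)
    {f : ι → E →L[ℝ] ℝ} (hf : ∀ i, f i ≠ 0) : ∃ n ∈ U, ∀ i, f i n ≠ 0 := by
  have hdense : Dense (⋂ i, {n | f i n ≠ 0}) := by
    refine dense_iInter_of_isOpen (fun i ↦ isOpen_ne_fun (f i).continuous continuous_const)
      fun i ↦ interior_eq_empty_iff_dense_compl.1 ?_
    by_contra hinterior
    refine hf i (ContinuousLinearMap.coe_injective (LinearMap.ker_eq_top.1 ?_))
    exact Submodule.eq_top_of_nonempty_interior' _ (Set.nonempty_iff_ne_empty.2 hinterior)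
  obtain ⟨n, hn, hnU⟩ := hdense.exists_mem_open hU hne
  exact ⟨n, hnU, Set.mem_iInter.1 hn⟩

section TripleProduct

open scoped Matrix

/-- The triple product of `n` with two further vectors, as a bilinear form in the latter. It turns
about the axis `n`. -/
noncomputable def tripleProduct (n : EuclideanSpace ℝ (Fin 3)) :
    EuclideanSpace ℝ (Fin 3) →ₗ[ℝ] EuclideanSpace ℝ (Fin 3) →ₗ[ℝ] ℝ :=
  (crossProduct.compr₂ (dotProductBilin ℝ ℝ n.ofLp)).compl₁₂
    (WithLp.linearEquiv 2 ℝ (Fin 3 → ℝ)).toLinearMap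
    (WithLp.linearEquiv 2 ℝ (Fin 3 → ℝ)).toLinearMap

theorem tripleProduct_apply (n a b : EuclideanSpace ℝ (Fin 3)) :
    tripleProduct n a b = n.ofLp ⬝ᵥ a.ofLp ⨯₃ b.ofLp := rfl

theorem isAxialForm_tripleProduct (n : EuclideanSpace ℝ (Fin 3)) :
    IsAxialForm (tripleProduct n) n where
  isAlt a := by rw [tripleProduct_apply, cross_self, dotProduct_zero]
  axis_left a := by rw [tripleProduct_apply, dot_self_cross]
  cramer a b c := by
    refine ⟨tripleProduct a b c, ?_⟩
    ext i
    fin_cases i <;> simp [tripleProduct_apply, cross_apply, dotProduct, Fin.sum_univ_three] <;> ring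

theorem eq_or_eq_neg_of_cross_eq_zero {u w : EuclideanSpace ℝ (Fin 3)} (hnorm : ‖u‖ = ‖w‖)
    (hcross : u.ofLp ⨯₃ w.ofLp = 0) : u = w ∨ u = -w := by
  have hdep : ¬ LinearIndependent ℝ ![u, w] := fun hind ↦ by
    have hmap := hind.map' (WithLp.linearEquiv 2 ℝ (Fin 3 → ℝ)).toLinearMap (LinearEquiv.ker _)
    rw [← FinVec.map_eq] at hmap
    exact crossProduct_ne_zero_iff_linearIndependent.2 hmap hcross
  rw [← sameRay_iff_of_norm_eq hnorm, ← sameRay_iff_of_norm_eq (hnorm.trans (norm_neg w).symm)]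
  exact sameRay_or_sameRay_neg_iff_not_linearIndependent.2 hdep

variable {X : Finset (EuclideanSpace ℝ (Fin 3))} (hX : ∀ x ∈ X, ∀ y ∈ X, dist x y ≤ 1)
include hX

theorem exists_generic_axis {U : Set (EuclideanSpace ℝ (Fin 3))} (hU : IsOpen U)
    (hne : U.Nonempty) :
    ∃ n ∈ U, ∀ u w : Dart X, tripleProduct n u.vec w.vec = 0 → w = u ∨ w = u.reverse := by
  let ι := {e : Dart X × Dart X // e.1.vec.ofLp ⨯₃ e.2.vec.ofLp ≠ 0}
  obtain ⟨n, hn, hgeneric⟩ := exists_mem_forall_apply_ne_zero hU hne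
    (f := fun e : ι ↦
      InnerProductSpace.toDual ℝ _ (WithLp.toLp 2 (e.1.1.vec.ofLp ⨯₃ e.1.2.vec.ofLp)))
    fun e he ↦ e.2 (by simpa using he)
  refine ⟨n, hn, fun u w h ↦ ?_⟩
  have hcross : u.vec.ofLp ⨯₃ w.vec.ofLp = 0 := by
    by_contra hne
    exact hgeneric ⟨(u, w), hne⟩ h
  rcases eq_or_eq_neg_of_cross_eq_zero (u.norm_vec.trans w.norm_vec.symm) hcross with huw | huw
  · exact Or.inl (Dart.vec_injective hX huw.symm)
  · refine Or.inr (Dart.vec_injective hX ?_)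
    rw [u.vec_reverse, huw, neg_neg]

theorem card_dart_add_four_le (hne : X.Nonempty) (hdeg : ∀ x ∈ X, 3 ≤ (neighbors X x).card) :
    Fintype.card (Dart X) + 4 ≤ 4 * X.card := by
  obtain ⟨x, hx⟩ := hne
  obtain ⟨n, hn, hgeneric⟩ := exists_generic_axis hX isOpen_interior
    (nonempty_interior_diameterCone finrank_euclideanSpace_fin hX hdeg hx)
  exact SweepFrame.card_dart_add_four_le
    { form := tripleProduct n
      axis := n
      pole := ⟨x, hx⟩
      isAxialForm := isAxialForm_tripleProduct n
      dist_le := hX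
      exists_neighbor_ne := fun y hy ↦ Finset.exists_mem_ne (one_lt_two.trans (hdeg y hy))
      axis_mem_interior := hn
      generic := hgeneric }

end TripleProduct

section Degrees

variable {α : Type*}

theorem card_neighbors [PseudoMetricSpace α] (X : Finset α) (x : α) :
    (neighbors X x).card = ∑ y ∈ X, if dist x y = 1 then 1 else 0 :=
  Finset.card_filter _ _

theorem sum_card_neighbors_le_erase [PseudoMetricSpace α] [DecidableEq α] {X : Finset α} {x : α}
    (hx : x ∈ X) : ∑ y ∈ X, (neighbors X y).card ≤
      ∑ y ∈ X.erase x, (neighbors (X.erase x) y).card + 2 * (neighbors X x).card := by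
  have hsplit (y : α) : (neighbors X y).card =
      (if dist x y = 1 then 1 else 0) + (neighbors (X.erase x) y).card := by
    rw [card_neighbors, card_neighbors, ← Finset.add_sum_erase X _ hx, dist_comm]
  have hcross : ∑ y ∈ X.erase x, (if dist x y = 1 then 1 else 0) ≤ (neighbors X x).card := by
    rw [card_neighbors]
    exact Finset.sum_le_sum_of_subset (X.erase_subset x)
  rw [← Finset.add_sum_erase X _ hx, Finset.sum_congr rfl fun y _ ↦ hsplit y,
    Finset.sum_add_distrib]
  omega

variable [MetricSpace α] (X : Finset α)

theorem card_dart : Fintype.card (Dart X) = ∑ x ∈ X, (neighbors X x).card := by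
  simp only [card_neighbors, ← Finset.sum_coe_sort X]
  rw [Fintype.card_subtype, Finset.card_filter, Fintype.sum_prod_type]

theorem card_filter_offDiag_dist_eq_one
    [DecidablePred fun p : α × α ↦ dist p.1 p.2 = 1] :
    (X.offDiag.filter fun p ↦ dist p.1 p.2 = 1).card = ∑ x ∈ X, (neighbors X x).card := by
  have hprod : (X.offDiag.filter fun p ↦ dist p.1 p.2 = 1) =
      (X ×ˢ X).filter fun p ↦ dist p.1 p.2 = 1 := by
    ext ⟨x, y⟩
    simp only [Finset.mem_filter, Finset.mem_offDiag, Finset.mem_product]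
    refine ⟨fun h ↦ ⟨⟨h.1.1, h.1.2.1⟩, h.2⟩, fun h ↦ ⟨⟨h.1.1, h.1.2, ?_⟩, h.2⟩⟩
    rintro rfl
    simp at h
  simp_rw [card_neighbors]
  rw [hprod, Finset.card_filter, Finset.sum_product]
  congr!

end Degrees

theorem sum_card_neighbors_add_four_le {X : Finset (EuclideanSpace ℝ (Fin 3))}
    (hX : ∀ x ∈ X, ∀ y ∈ X, dist x y ≤ 1) (hne : X.Nonempty) :
    ∑ x ∈ X, (neighbors X x).card + 4 ≤ 4 * X.card := by
  classical
  induction X using Finset.strongInduction with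
  | H X ih =>
    by_cases hdeg : ∀ x ∈ X, 3 ≤ (neighbors X x).card
    · rw [← card_dart]
      exact card_dart_add_four_le hX hne hdeg
    push Not at hdeg
    obtain ⟨x, hx, hlt⟩ := hdeg
    rcases (X.erase x).eq_empty_or_nonempty with hempty | hne'
    · obtain rfl := (Finset.erase_eq_empty_iff X x).1 hempty |>.resolve_left hne.ne_empty
      simp [card_neighbors]
    · have hind := ih _ (Finset.erase_ssubset hx) (fun y hy z hz ↦
        hX y (Finset.mem_of_mem_erase hy) z (Finset.mem_of_mem_erase hz)) hne'
      have hremove := sum_card_neighbors_le_erase hx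
      have hcard := Finset.card_erase_add_one hx
      omega

open Classical in
/-- **Vázsonyi's conjecture / theorem of Grünbaum, Heppes, Straszewicz.**
If `X ⊂ ℝ³` is a finite set of `m` points of diameter `1`, then the number of unordered
pairs of points of `X` at distance `1` is at most `2m − 2`.  Unordered pairs are counted
via ordered pairs of distinct points: there are at most `2 * (2m - 2)` such ordered
pairs. -/
theorem vazsonyi_bound
    (X : Finset (EuclideanSpace ℝ (Fin 3)))
    (hdiam_le : ∀ x ∈ X, ∀ y ∈ X, dist x y ≤ 1)
    (hdiam_eq : ∃ x ∈ X, ∃ y ∈ X, dist x y = 1) :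
    (X.offDiag.filter fun p => dist p.1 p.2 = 1).card ≤ 2 * (2 * X.card - 2) := by
  obtain ⟨x, hx, -⟩ := hdiam_eq
  have hsum := sum_card_neighbors_add_four_le hdiam_le ⟨x, hx⟩
  rw [card_filter_offDiag_dist_eq_one]
  omega
end

section
/- Let X ⊂ ℝ³ be a Vázsonyi set, i.e., a finite set of diameter 1 with |X| = m such that the number of unordered pairs {x,y} ⊆ X with dist(x,y) = 1 is exactly 2m − 2 and every point of X is at distance 1 from at least 3 other points of X. Let Ω = ⋂_{x∈X} B(x,1) be the intersection of the closed unit balls centered at the points of X. Then the set of vertices of Ω is exactly X, where p ∈ ∂Ω is a vertex of Ω if A_p = {x ∈ X : dist(p,x) = 1} is not contained in any 2-dimensional affine plane of ℝ³ passing through p. (That is, Ω is a Reuleaux polyhedron with vertex set X.) -/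
/-!
A point `p ∈ X` has three neighbours at distance one, and the directions towards them are exposed
rays of the cone they span, hence linearly independent; so no plane through `p` contains them all.
Conversely, a vertex `p ∉ X` could be added to `X`: the diameter would still be one, but `m + 1`
points would have at least `2m - 2 + 3` diameters, against the Grünbaum–Heppes–Straszewicz bound
`2(m + 1) - 2`.

That bound is proved in the manner of Swanepoel. The unit vectors `z - x` along the diameters at `x`
are the corners of a red convex spherical polygon, whose antipode is a blue one. Polygons of the
same colour are disjoint; the red one of `x` and the blue one of `y` meet only if `|y - x| = 1`, and
then exactly in the corner `y - x`. So the `2m` polygons have two contacts per diameter, each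
between a red and a blue polygon, and it remains to show that `2m` polygons have at most `2(2m) - 4`
such contacts. This bipartite planarity bound is obtained by rotating a meridian about a generic
axis whose poles lie in two antipodal polygons. The polygons met by the meridian are linearly
ordered from north to south, and one counts how the pairs of neighbours of different colours change:
each contact `q` causes such changes, while the touching pair is not met at the antipodal contact
`-q`.
-/

section Sweep

open Finset

open Classical in
lemma one_le_card_changes {f : ℕ → Prop} {a b : ℕ} (hab : a ≤ b) (hf : ¬ (f a ↔ f b)) :
    1 ≤ #{t ∈ Ico a b | ¬ (f t ↔ f (t + 1))} := by
  rw [Nat.one_le_iff_ne_zero, Ne, card_eq_zero, filter_eq_empty_iff]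
  intro hconst
  refine hf (Nat.le_induction (P := fun n _ => n ≤ b → (f a ↔ f n))
    (fun _ => Iff.rfl) (fun n han ih hnb => ?_) b hab le_rfl)
  exact (ih (by omega)).trans (not_not.1 (hconst (mem_Ico.2 ⟨han, hnb⟩)))

open Classical in
lemma card_changes_cyclic {M : ℕ} {f : ℕ → Prop} (hcyc : f 0 ↔ f M) {k j : ℕ} (hk : k < M)
    (hj : j ≤ M) (hfj : ¬ f j) :
    (if f k then 1 else 0) + (if f (k + 1) then 1 else 0) ≤
      #{t ∈ range M | t ≠ k ∧ ¬ (f t ↔ f (t + 1))} := by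
  have change (a b : ℕ) (hab : a ≤ b) :
      (if f a ↔ f b then 0 else 1) ≤ #{t ∈ Ico a b | ¬ (f t ↔ f (t + 1))} := by
    split_ifs with hf
    · exact Nat.zero_le _
    · exact one_le_card_changes hab hf
  have split_at (a b c : ℕ) (hab : a ≤ b) (hbc : b ≤ c) :
      #{t ∈ Ico a c | ¬ (f t ↔ f (t + 1))} =
        #{t ∈ Ico a b | ¬ (f t ↔ f (t + 1))} + #{t ∈ Ico b c | ¬ (f t ↔ f (t + 1))} := by
    simp only [card_filter, sum_Ico_consecutive _ hab hbc]
  have omit_k : #{t ∈ range M | t ≠ k ∧ ¬ (f t ↔ f (t + 1))} =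
      #{t ∈ Ico 0 k | ¬ (f t ↔ f (t + 1))} + #{t ∈ Ico (k + 1) M | ¬ (f t ↔ f (t + 1))} := by
    rw [← card_union_of_disjoint, ← filter_union]
    · congr 1
      ext t
      simp only [mem_filter, mem_range, mem_union, mem_Ico, ← and_assoc]
      exact and_congr_left fun _ => by omega
    · exact disjoint_filter_filter (disjoint_left.2 fun t => by simp only [mem_Ico]; omega)
  rw [omit_k]
  rcases Nat.lt_or_ge k j with hkj | hjk
  · rw [split_at (k + 1) j M hkj hj]
    have before := change 0 k k.zero_le
    have middle := change (k + 1) j hkj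
    have after := change j M hj
    by_cases hk : f k <;> by_cases hk' : f (k + 1) <;> by_cases h0 : f 0 <;>
      simp only [← hcyc, hfj, hk, hk', h0, iff_true, iff_false, not_true,
        if_true, if_false] at before middle after ⊢ <;> omega
  · rw [split_at 0 j k j.zero_le hjk]
    have before := change 0 j j.zero_le
    have middle := change j k hjk
    have after := change (k + 1) M hk
    by_cases hk : f k <;> by_cases hk' : f (k + 1) <;> by_cases h0 : f 0 <;>
      simp only [← hcyc, hfj, hk, hk', h0, iff_true, iff_false, not_true,
        if_true, if_false] at before middle after ⊢ <;> omega

variable {R : Type*} (col : R → Bool) (above : R → R → Prop)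

/-- The elements `u`, `l` of `S` have different colours and `l` comes directly below `u`. -/
def IsBichromaticCover (S : Set R) (u l : R) : Prop :=
  col u ≠ col l ∧ u ∈ S ∧ l ∈ S ∧ above u l ∧ ∀ v ∈ S, above u v → ¬ above v l

/-- The pair `(u, l)` is a bichromatic cover in exactly one of `S`, `S'`. -/
def IsCoverChange (S S' : Set R) (u l : R) : Prop :=
  ¬ (IsBichromaticCover col above S u l ↔ IsBichromaticCover col above S' u l)

/-- The relation `above`, asymmetric in the applications, orders `S` linearly. -/
structure IsLinearOn (S : Set R) : Prop where
  trans : ∀ u ∈ S, ∀ v ∈ S, ∀ w ∈ S, above u v → above v w → above u w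
  total : ∀ u ∈ S, ∀ v ∈ S, u ≠ v → above u v ∨ above v u

/-- An event of the sweep: the linearly ordered set `S` becomes `S'`, and only the two touching
elements `hi` and `lo`, of different colours and with `hi` over `lo` whenever they are comparable,
may enter or leave. Every other element is over both of them or under both of them. -/
structure IsCrossing (hi lo : R) (S S' : Set R) : Prop where
  linear : IsLinearOn above S
  linear' : IsLinearOn above S'
  col_ne : col hi ≠ col lo
  not_above : ¬ above lo hi
  mem_iff : ∀ r, r ≠ hi → r ≠ lo → (r ∈ S ↔ r ∈ S')
  same_side : ∀ r ∈ S, r ≠ hi → r ≠ lo →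
    (above r hi ∧ above r lo) ∨ (above hi r ∧ above lo r)

/-- `u` is the lowest of the elements of `S` over both `hi` and `lo`. -/
def IsLowestOver (hi lo : R) (S : Set R) (u : R) : Prop :=
  u ∈ S ∧ above u hi ∧ above u lo ∧ ∀ v ∈ S, above v hi → above v lo → ¬ above u v

variable {col above} {hi lo : R} {S S' : Set R} {u u' x x' l l' : R}

lemma isBichromaticCover_swap :
    IsBichromaticCover col (Function.swap above) S l u ↔ IsBichromaticCover col above S u l := by
  simp only [IsBichromaticCover, Function.swap, ne_comm (a := col l)]
  grind

lemma isCoverChange_swap :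
    IsCoverChange col (Function.swap above) S S' l u ↔ IsCoverChange col above S S' u l := by
  simp only [IsCoverChange, isBichromaticCover_swap]

lemma IsLinearOn.swap (h : IsLinearOn above S) : IsLinearOn (Function.swap above) S where
  trans u hu v hv w hw huv hvw := h.trans w hw v hv u hu hvw huv
  total u hu v hv huv := (h.total u hu v hv huv).symm

lemma IsLowestOver.eq (hS : IsLinearOn above S) (hu : IsLowestOver above hi lo S u)
    (hu' : IsLowestOver above hi lo S u') : u = u' := by
  by_contra hne
  rcases hS.total u hu.1 u' hu'.1 hne with h | h
  exacts [hu.2.2.2 u' hu'.1 hu'.2.1 hu'.2.2.1 h, hu'.2.2.2 u hu.1 hu.2.1 hu.2.2.1 h]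

namespace IsCrossing

lemma symm (h : IsCrossing col above hi lo S S') : IsCrossing col above hi lo S' S where
  linear := h.linear'
  linear' := h.linear
  col_ne := h.col_ne
  not_above := h.not_above
  mem_iff r hh hl := (h.mem_iff r hh hl).symm
  same_side r hr hh hl := h.same_side r ((h.mem_iff r hh hl).2 hr) hh hl

lemma swap (h : IsCrossing col above hi lo S S') :
    IsCrossing col (Function.swap above) lo hi S S' where
  linear := h.linear.swap
  linear' := h.linear'.swap
  col_ne := h.col_ne.symm
  not_above := h.not_above
  mem_iff r hl hh := h.mem_iff r hh hl
  same_side r hr hl hh := (h.same_side r hr hh hl).symm.imp And.symm And.symm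

variable [Std.Asymm above]

lemma cover_hi_lo_iff (h : IsCrossing col above hi lo S S') :
    IsBichromaticCover col above S hi lo ↔ hi ∈ S ∧ lo ∈ S := by
  refine ⟨fun hc => ⟨hc.2.1, hc.2.2.1⟩, fun ⟨hhi, hlo⟩ => ⟨h.col_ne, hhi, hlo, ?_, ?_⟩⟩
  · exact (h.linear.total hi hhi lo hlo (ne_of_apply_ne col h.col_ne)).resolve_right h.not_above
  · intro v hv hhv hvl
    rcases h.same_side v hv (ne_of_irrefl hhv).symm (ne_of_irrefl hvl) with ⟨hvh, -⟩ | ⟨-, hlv⟩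
    exacts [asymm hhv hvh, asymm hvl hlv]

lemma isLowestOver (h : IsCrossing col above hi lo S S') (hu : IsLowestOver above hi lo S u) :
    IsLowestOver above hi lo S' u := by
  have mem_iff {v : R} (hvh : above v hi) : v ∈ S ↔ v ∈ S' :=
    h.mem_iff v (ne_of_irrefl hvh) fun hvl => h.not_above (hvl ▸ hvh)
  obtain ⟨huS, huh, hul, hlow⟩ := hu
  exact ⟨(mem_iff huh).1 huS, huh, hul, fun v hv hvh => hlow v ((mem_iff hvh).2 hv) hvh⟩

lemma isLowestOver_iff (h : IsCrossing col above hi lo S S') :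
    IsLowestOver above hi lo S u ↔ IsLowestOver above hi lo S' u :=
  ⟨h.isLowestOver, h.symm.isLowestOver⟩

lemma cover_hi_iff (h : IsCrossing col above hi lo S S') (hu : u ≠ hi) (hu' : u ≠ lo) :
    IsBichromaticCover col above S u hi ↔
      col u ≠ col hi ∧ hi ∈ S ∧ IsLowestOver above hi lo S u := by
  constructor
  · rintro ⟨hcol, huS, hhi, huh, hcov⟩
    have hul : above u lo :=
      ((h.same_side u huS hu hu').resolve_right fun hd => asymm huh hd.1).2
    exact ⟨hcol, hhi, huS, huh, hul, fun v hv hvh _ huv => hcov v hv huv hvh⟩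
  · rintro ⟨hcol, hhi, huS, huh, -, hlow⟩
    refine ⟨hcol, huS, hhi, huh, fun v hv huv hvh => ?_⟩
    rcases h.same_side v hv (ne_of_irrefl hvh) (fun hvl => h.not_above (hvl ▸ hvh)) with hv' | hv'
    exacts [hlow v hv hv'.1 hv'.2 huv, asymm hvh hv'.1]

lemma cover_lo_iff (h : IsCrossing col above hi lo S S') (hu : u ≠ hi) (hu' : u ≠ lo) :
    IsBichromaticCover col above S u lo ↔
      col u ≠ col lo ∧ (lo ∈ S ∧ hi ∉ S) ∧ IsLowestOver above hi lo S u := by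
  constructor
  · rintro ⟨hcol, huS, hlo, hul, hcov⟩
    have huh : above u hi :=
      ((h.same_side u huS hu hu').resolve_right fun hd => asymm hul hd.2).1
    have hhi : hi ∉ S := fun hhi => hcov hi hhi huh (h.cover_hi_lo_iff.2 ⟨hhi, hlo⟩).2.2.2.1
    exact ⟨hcol, ⟨hlo, hhi⟩, huS, huh, hul, fun v hv _ hvl huv => hcov v hv huv hvl⟩
  · rintro ⟨hcol, ⟨hlo, hhi⟩, huS, -, hul, hlow⟩
    refine ⟨hcol, huS, hlo, hul, fun v hv huv hvl => ?_⟩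
    rcases h.same_side v hv (fun hvh => hhi (hvh ▸ hv)) (ne_of_irrefl hvl) with hv' | hv'
    exacts [hlow v hv hv'.1 hv'.2 huv, asymm hvl hv'.2]

/-- A third element separates `u` from `l` only in `S'`, and it can only be `hi` or `lo`. -/
lemma isLowestOver_of_cover_of_not_cover (h : IsCrossing col above hi lo S S')
    (hu : u ≠ hi ∧ u ≠ lo) (hl : l ≠ hi ∧ l ≠ lo)
    (hcov : IsBichromaticCover col above S u l) (hcov' : ¬ IsBichromaticCover col above S' u l) :
    (hi ∉ S ∧ lo ∉ S ∧ (hi ∈ S' ∨ lo ∈ S')) ∧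
      IsLowestOver above hi lo S u ∧ IsLowestOver (Function.swap above) lo hi S l := by
  obtain ⟨hcol, huS, hlS, hul, hbetween⟩ := hcov
  obtain ⟨v, hvS', huv, hvl⟩ : ∃ v ∈ S', above u v ∧ above v l := by
    by_contra hno
    push Not at hno
    exact hcov' ⟨hcol, (h.mem_iff u hu.1 hu.2).1 huS, (h.mem_iff l hl.1 hl.2).1 hlS, hul, hno⟩
  have hv : v = hi ∨ v = lo := by
    by_contra hv
    push Not at hv
    exact hbetween v ((h.mem_iff v hv.1 hv.2).2 hvS') huv hvl
  have huo : above u hi ∧ above u lo := (h.same_side u huS hu.1 hu.2).resolve_right fun hd =>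
    hv.elim (fun e => asymm huv (e ▸ hd.1)) (fun e => asymm huv (e ▸ hd.2))
  have hlo : above hi l ∧ above lo l := (h.same_side l hlS hl.1 hl.2).resolve_left fun hd =>
    hv.elim (fun e => asymm hvl (e ▸ hd.1)) (fun e => asymm hvl (e ▸ hd.2))
  have hvS : v = hi ∨ v = lo → hi ∈ S' ∨ lo ∈ S' := by rintro (rfl | rfl) <;> simp [hvS']
  have huS' := (h.mem_iff u hu.1 hu.2).1 huS
  have hlS' := (h.mem_iff l hl.1 hl.2).1 hlS
  refine ⟨⟨fun hhi => hbetween hi hhi huo.1 hlo.1, fun hlo' => hbetween lo hlo' huo.2 hlo.2,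
    hvS hv⟩, ⟨huS, huo.1, huo.2, fun w hw hwh hwl huw => ?_⟩,
    ⟨hlS, hlo.2, hlo.1, fun w hw hwl hwh hlw => ?_⟩⟩
  · have hwS' := (h.mem_iff w (ne_of_irrefl hwh) (ne_of_irrefl hwl)).1 hw
    exact hbetween w hw huw (h.linear'.trans w hwS' v hvS' l hlS' (hv.elim (· ▸ hwh) (· ▸ hwl)) hvl)
  · have hwS' := (h.mem_iff w (ne_of_irrefl' hwh) (ne_of_irrefl' hwl)).1 hw
    exact hbetween w hw
      (h.linear'.trans u huS' v hvS' w hwS' huv (hv.elim (· ▸ hwh) (· ▸ hwl))) hlw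

lemma isLowestOver_of_isCoverChange_over (h : IsCrossing col above hi lo S S')
    (hu : u ≠ hi ∧ u ≠ lo) (hx : x = hi ∨ x = lo) (hch : IsCoverChange col above S S' u x) :
    IsLowestOver above hi lo S u ∧ col u ≠ col x ∧
      ¬ ((hi ∈ S ↔ hi ∈ S') ∧ ((lo ∈ S ∧ hi ∉ S) ↔ (lo ∈ S' ∧ hi ∉ S'))) := by
  rcases hx with rfl | rfl
  · rw [IsCoverChange, h.cover_hi_iff hu.1 hu.2, h.symm.cover_hi_iff hu.1 hu.2,
      ← h.isLowestOver_iff] at hch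
    tauto
  · rw [IsCoverChange, h.cover_lo_iff hu.1 hu.2, h.symm.cover_lo_iff hu.1 hu.2,
      ← h.isLowestOver_iff] at hch
    tauto

lemma isCoverChange_over_unique (h : IsCrossing col above hi lo S S')
    (hu : u ≠ hi ∧ u ≠ lo) (hx : x = hi ∨ x = lo) (hu' : u' ≠ hi ∧ u' ≠ lo)
    (hx' : x' = hi ∨ x' = lo) (hch : IsCoverChange col above S S' u x)
    (hch' : IsCoverChange col above S S' u' x') : u = u' ∧ x = x' := by
  obtain ⟨hlow, hcol, -⟩ := h.isLowestOver_of_isCoverChange_over hu hx hch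
  obtain ⟨hlow', hcol', -⟩ := h.isLowestOver_of_isCoverChange_over hu' hx' hch'
  obtain rfl := hlow.eq h.linear hlow'
  have hxx' : col x = col x' := (Bool.eq_not.2 hcol.symm).trans (Bool.eq_not.2 hcol'.symm).symm
  refine ⟨rfl, ?_⟩
  rcases hx with rfl | rfl <;> rcases hx' with rfl | rfl
  exacts [rfl, absurd hxx' h.col_ne, absurd hxx'.symm h.col_ne, rfl]

lemma isLowestOver_of_isCoverChange_outer (h : IsCrossing col above hi lo S S')
    (hu : u ≠ hi ∧ u ≠ lo) (hl : l ≠ hi ∧ l ≠ lo) (hch : IsCoverChange col above S S' u l) :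
    IsLowestOver above hi lo S u ∧ IsLowestOver (Function.swap above) lo hi S l ∧
      ¬ ((hi ∈ S ∨ lo ∈ S) ↔ (hi ∈ S' ∨ lo ∈ S')) := by
  by_cases hcov : IsBichromaticCover col above S u l
  · have := h.isLowestOver_of_cover_of_not_cover hu hl hcov fun hcov' =>
      hch (iff_of_true hcov hcov')
    tauto
  · have := h.symm.isLowestOver_of_cover_of_not_cover hu hl
      (by_contra fun hcov' => hch (iff_of_false hcov hcov')) hcov
    rw [h.isLowestOver_iff, h.swap.isLowestOver_iff]
    tauto

lemma isCoverChange_outer_unique (h : IsCrossing col above hi lo S S')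
    (hu : u ≠ hi ∧ u ≠ lo) (hl : l ≠ hi ∧ l ≠ lo) (hu' : u' ≠ hi ∧ u' ≠ lo)
    (hl' : l' ≠ hi ∧ l' ≠ lo) (hch : IsCoverChange col above S S' u l)
    (hch' : IsCoverChange col above S S' u' l') : u = u' ∧ l = l' := by
  obtain ⟨hlow, hlow', -⟩ := h.isLowestOver_of_isCoverChange_outer hu hl hch
  obtain ⟨hlow₂, hlow₂', -⟩ := h.isLowestOver_of_isCoverChange_outer hu' hl' hch'
  exact ⟨hlow.eq h.linear hlow₂, hlow'.eq h.linear.swap hlow₂'⟩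

open Classical in
lemma card_isCoverChange_over_le [Fintype R] (h : IsCrossing col above hi lo S S') :
    #{p : R × R | IsCoverChange col above S S' p.1 p.2 ∧ (p.1 ≠ hi ∧ p.1 ≠ lo) ∧
        (p.2 = hi ∨ p.2 = lo)} ≤
      if (hi ∈ S ↔ hi ∈ S') ∧ ((lo ∈ S ∧ hi ∉ S) ↔ (lo ∈ S' ∧ hi ∉ S')) then 0 else 1 := by
  split_ifs with hstable
  · refine (card_eq_zero.2 (filter_eq_empty_iff.2 fun p _ hp => ?_)).le
    exact (h.isLowestOver_of_isCoverChange_over hp.2.1 hp.2.2 hp.1).2.2 hstable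
  · refine card_le_one.2 fun p hp p' hp' => ?_
    rw [mem_filter_univ] at hp hp'
    obtain ⟨h₁, h₂⟩ :=
      h.isCoverChange_over_unique hp.2.1 hp.2.2 hp'.2.1 hp'.2.2 hp.1 hp'.1
    exact Prod.ext h₁ h₂

open Classical in
lemma card_isCoverChange_outer_le [Fintype R] (h : IsCrossing col above hi lo S S') :
    #{p : R × R | IsCoverChange col above S S' p.1 p.2 ∧ (p.1 ≠ hi ∧ p.1 ≠ lo) ∧
        (p.2 ≠ hi ∧ p.2 ≠ lo)} ≤
      if (hi ∈ S ∨ lo ∈ S) ↔ (hi ∈ S' ∨ lo ∈ S') then 0 else 1 := by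
  split_ifs with hstable
  · refine (card_eq_zero.2 (filter_eq_empty_iff.2 fun p _ hp => ?_)).le
    exact (h.isLowestOver_of_isCoverChange_outer hp.2.1 hp.2.2 hp.1).2.2 hstable
  · refine card_le_one.2 fun p hp p' hp' => ?_
    rw [mem_filter_univ] at hp hp'
    obtain ⟨h₁, h₂⟩ :=
      h.isCoverChange_outer_unique hp.2.1 hp.2.2 hp'.2.1 hp'.2.2 hp.1 hp'.1
    exact Prod.ext h₁ h₂

open Classical in
lemma card_isCoverChange_under_le [Fintype R] (h : IsCrossing col above hi lo S S') :
    #{p : R × R | IsCoverChange col above S S' p.1 p.2 ∧ (p.1 = hi ∨ p.1 = lo) ∧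
        (p.2 ≠ hi ∧ p.2 ≠ lo)} ≤
      if (lo ∈ S ↔ lo ∈ S') ∧ ((hi ∈ S ∧ lo ∉ S) ↔ (hi ∈ S' ∧ lo ∉ S')) then 0 else 1 := by
  refine le_trans (card_le_card_of_injOn Prod.swap (fun p hp => ?_) Prod.swap_injective.injOn)
    h.swap.card_isCoverChange_over_le
  rw [coe_filter_univ, Set.mem_ofPred_eq] at hp ⊢
  exact ⟨isCoverChange_swap.2 hp.1, hp.2.2.symm, hp.2.1.symm⟩

omit [Std.Asymm above] in
lemma eq_of_isCoverChange_touching (h : IsCrossing col above hi lo S S')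
    (hu : u = hi ∨ u = lo) (hl : l = hi ∨ l = lo) (hch : IsCoverChange col above S S' u l) :
    (u, l) = (hi, lo) := by
  rcases hu with rfl | rfl <;> rcases hl with rfl | rfl
  · exact absurd (iff_of_false (fun hc => hc.1 rfl) fun hc => hc.1 rfl) hch
  · rfl
  · exact absurd (iff_of_false (h.not_above ·.2.2.2.1) (h.not_above ·.2.2.2.1)) hch
  · exact absurd (iff_of_false (fun hc => hc.1 rfl) fun hc => hc.1 rfl) hch

open Classical in
lemma card_isCoverChange_le_stability [Fintype R] (h : IsCrossing col above hi lo S S') :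
    #{p : R × R | p ≠ (hi, lo) ∧ IsCoverChange col above S S' p.1 p.2} ≤
      (if (hi ∈ S ↔ hi ∈ S') ∧ ((lo ∈ S ∧ hi ∉ S) ↔ (lo ∈ S' ∧ hi ∉ S')) then 0 else 1) +
      (if (hi ∈ S ∨ lo ∈ S) ↔ (hi ∈ S' ∨ lo ∈ S') then 0 else 1) +
      (if (lo ∈ S ↔ lo ∈ S') ∧ ((hi ∈ S ∧ lo ∉ S) ↔ (hi ∈ S' ∧ lo ∉ S')) then 0 else 1) := by
  refine le_trans ?_ (add_le_add (add_le_add h.card_isCoverChange_over_le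
    h.card_isCoverChange_outer_le) h.card_isCoverChange_under_le)
  refine le_trans (card_le_card ?_) ((card_union_le _ _).trans
    (Nat.add_le_add_right (card_union_le _ _) _))
  intro p hp
  simp only [mem_filter_univ, mem_union] at hp ⊢
  have := h.eq_of_isCoverChange_touching (u := p.1) (l := p.2)
  grind

open Classical in
omit [Std.Asymm above] in
lemma card_absent_eq [Fintype R] (h : IsCrossing col above hi lo S S') (T : Set R) :
    #{r : R | (r = hi ∨ r = lo) ∧ r ∉ T} =
      (if hi ∈ T then 0 else 1) + (if lo ∈ T then 0 else 1) := by
  have hpair : ({r : R | r = hi ∨ r = lo} : Finset R) = {hi, lo} := by ext; simp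
  rw [← filter_filter, hpair, card_filter, sum_pair (ne_of_apply_ne col h.col_ne)]
  simp only [ite_not]

open Classical in
/-- The two sides `(u, hi or lo)`, `(hi or lo, l)` and the outer pairs `(u, l)` contribute at most
one change each; whether they do depends only on which of `hi`, `lo` are in `S`, `S'`. -/
lemma card_isCoverChange_le [Fintype R] (h : IsCrossing col above hi lo S S') :
    #{p : R × R | p ≠ (hi, lo) ∧ IsCoverChange col above S S' p.1 p.2} + 2 ≤
      (if IsBichromaticCover col above S hi lo then 1 else 0) +
        (if IsBichromaticCover col above S' hi lo then 1 else 0) +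
        2 * (#{r : R | (r = hi ∨ r = lo) ∧ r ∉ S} + #{r : R | (r = hi ∨ r = lo) ∧ r ∉ S'}) := by
  refine (Nat.add_le_add_right h.card_isCoverChange_le_stability 2).trans ?_
  simp only [h.cover_hi_lo_iff, h.symm.cover_hi_lo_iff, h.card_absent_eq]
  by_cases hi ∈ S <;> by_cases lo ∈ S <;> by_cases hi ∈ S' <;> by_cases lo ∈ S' <;> simp [*]

end IsCrossing

open Classical in
/-- Each pair touches only once, and is absent at some time; so its own changes at the other events
pay for its being a cover before and after the touching. -/
lemma sum_touching_covers_le [Fintype R] {M : ℕ} {S : ℕ → Set R} {hi lo : ℕ → R}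
    (hcyc : S 0 = S M) (hinj : ∀ t < M, ∀ t' < M, hi t = hi t' → lo t = lo t' → t = t')
    (habs : ∀ t < M, ∃ s ≤ M, ¬ (hi t ∈ S s ∧ lo t ∈ S s)) :
    ∑ t ∈ range M, ((if IsBichromaticCover col above (S t) (hi t) (lo t) then 1 else 0) +
        (if IsBichromaticCover col above (S (t + 1)) (hi t) (lo t) then 1 else 0)) ≤
      ∑ t ∈ range M, #{p : R × R | p ≠ (hi t, lo t) ∧
        IsCoverChange col above (S t) (S (t + 1)) p.1 p.2} := by
  calc _ ≤ ∑ k ∈ range M, #{t ∈ range M | t ≠ k ∧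
          IsCoverChange col above (S t) (S (t + 1)) (hi k) (lo k)} := by
        refine sum_le_sum fun k hk => ?_
        obtain ⟨j, hj, habsent⟩ := habs k (mem_range.1 hk)
        exact (card_changes_cyclic
          (f := fun t => IsBichromaticCover col above (S t) (hi k) (lo k)) (by rw [hcyc])
          (mem_range.1 hk) hj fun hc => habsent ⟨hc.2.1, hc.2.2.1⟩).trans
          (card_le_card fun t ht => by simp only [mem_filter] at ht ⊢; exact ht)
    _ = ∑ t ∈ range M, #{k ∈ range M | t ≠ k ∧
          IsCoverChange col above (S t) (S (t + 1)) (hi k) (lo k)} :=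
        sum_card_bipartiteAbove_eq_sum_card_bipartiteBelow
          fun k t => t ≠ k ∧ IsCoverChange col above (S t) (S (t + 1)) (hi k) (lo k)
    _ ≤ _ := by
        refine sum_le_sum fun t ht => ?_
        refine card_le_card_of_injOn (fun k => (hi k, lo k)) (fun k hk => ?_)
          fun k hk k' hk' h => ?_
        · simp only [coe_filter, Set.mem_ofPred_eq, mem_range, mem_univ, true_and] at hk ht ⊢
          exact ⟨fun h => hk.2.1 (hinj t ht k hk.1 (congrArg Prod.fst h).symm
            (congrArg Prod.snd h).symm), hk.2.2⟩
        · simp only [coe_filter, Set.mem_ofPred_eq, mem_range] at hk hk'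
          exact hinj k hk.1 k' hk'.1 (congrArg Prod.fst h) (congrArg Prod.snd h)

open Classical in
theorem card_crossings_le [Std.Asymm above] [Fintype R] {M : ℕ} {S : ℕ → Set R} {hi lo : ℕ → R}
    (hcross : ∀ t < M, IsCrossing col above (hi t) (lo t) (S t) (S (t + 1))) (hcyc : S 0 = S M)
    (hinj : ∀ t < M, ∀ t' < M, hi t = hi t' → lo t = lo t' → t = t')
    (habs : ∀ t < M, ∃ s ≤ M, ¬ (hi t ∈ S s ∧ lo t ∈ S s)) :
    M ≤ ∑ t ∈ range M, (#{r : R | (r = hi t ∨ r = lo t) ∧ r ∉ S t} +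
      #{r : R | (r = hi t ∨ r = lo t) ∧ r ∉ S (t + 1)}) := by
  have hlocal := sum_le_sum fun t ht => (hcross t (mem_range.1 ht)).card_isCoverChange_le
  rw [sum_add_distrib, sum_const, card_range, smul_eq_mul, sum_add_distrib, ← mul_sum] at hlocal
  have hcovers := sum_touching_covers_le (col := col) (above := above) hcyc hinj habs
  omega

end Sweep

section Cone

open Set

variable {V : Type*} [AddCommGroup V] [Module ℝ V] {S : Set V} {w : V} {f : V →ₗ[ℝ] ℝ}

lemma nonneg_and_mem_of_mem_hull {D : Submodule ℝ V} (hS : ∀ u ∈ S, 0 ≤ f u ∧ (f u = 0 → u ∈ D))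
    (hw : w ∈ PointedCone.hull ℝ S) : 0 ≤ f w ∧ (f w = 0 → w ∈ D) := by
  induction hw using Submodule.span_induction with
  | mem u hu => exact hS u hu
  | zero => simp
  | add x y _ _ hx hy =>
    rw [map_add]
    refine ⟨add_nonneg hx.1 hy.1, fun h => ?_⟩
    obtain ⟨hx0, hy0⟩ := (add_eq_zero_iff_of_nonneg hx.1 hy.1).1 h
    exact D.add_mem (hx.2 hx0) (hy.2 hy0)
  | smul a x _ hx =>
    rw [Nonneg.mk_smul, map_smul, smul_eq_mul]
    refine ⟨mul_nonneg a.2 hx.1, fun h => ?_⟩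
    rcases mul_eq_zero.1 h with ha | hx0
    exacts [by simp [ha], D.smul_mem _ (hx.2 hx0)]

lemma pos_of_mem_hull (hS : ∀ u ∈ S, 0 < f u) (hw : w ∈ PointedCone.hull ℝ S) (hw0 : w ≠ 0) :
    0 < f w := by
  have h := nonneg_and_mem_of_mem_hull (D := ⊥) (fun u hu => ⟨(hS u hu).le, fun h =>
    absurd h (hS u hu).ne'⟩) hw
  exact h.1.lt_of_ne' fun hfw => hw0 (by simpa using h.2 hfw)

lemma exists_pos_of_mem_hull (hw : w ∈ PointedCone.hull ℝ S) (hfw : 0 < f w) :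
    ∃ u ∈ S, 0 < f u := by
  by_contra! hS
  have := (nonneg_and_mem_of_mem_hull (f := -f) (D := ⊤)
    (fun u hu => ⟨by simpa using hS u hu, fun _ => trivial⟩) hw).1
  rw [LinearMap.neg_apply] at this
  linarith

end Cone

section Plane

open Complex Set

attribute [local instance] Complex.finrank_real_complex_fact

local notation "ω" => Complex.orientation.areaForm

variable {S : Set ℂ} {u v z : ℂ} {a b δ : ℝ}

/-- The nonzero complex number `z` has argument `θ` modulo `2π`. -/
def HasDirection (z : ℂ) (θ : ℝ) : Prop := ∃ ρ > (0 : ℝ), z = ρ • (Circle.exp θ : ℂ)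

lemma areaForm_smul_exp (ρ σ a b : ℝ) :
    ω (ρ • (Circle.exp a : ℂ)) (σ • (Circle.exp b : ℂ)) = ρ * σ * Real.sin (b - a) := by
  simp [Complex.areaForm, Circle.coe_exp, exp_ofReal_mul_I_re, exp_ofReal_mul_I_im, Real.sin_sub]
  ring

lemma areaForm_smul_eq (u v z : ℂ) : ω u v • z = ω z v • u + ω u z • v := by
  apply Complex.ext <;> simp [Complex.areaForm] <;> ring

lemma exists_hasDirection (a : ℝ) (hz : z ≠ 0) :
    ∃ δ ∈ Ioc (-Real.pi) Real.pi, HasDirection z (a + δ) := by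
  refine ⟨arg (z / Circle.exp a), arg_mem_Ioc _, ‖z‖, norm_pos_iff.2 hz, ?_⟩
  have h := norm_mul_exp_arg_mul_I (z / Circle.exp a)
  rw [norm_div, Circle.norm_coe, div_one, ← Circle.coe_exp, eq_div_iff (Circle.coe_ne_zero _)] at h
  rw [add_comm, Circle.exp_add, Circle.coe_mul, real_smul, ← mul_assoc, h]

lemma exists_hasDirection_add (h : 0 < ω (Circle.exp a) z) :
    ∃ δ ∈ Ioo 0 Real.pi, HasDirection z (a + δ) := by
  have hz : z ≠ 0 := by rintro rfl; simp at h
  obtain ⟨δ, hδ, ρ, hρ, rfl⟩ := exists_hasDirection a hz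
  have hsin : 0 < Real.sin δ := by
    have := areaForm_smul_exp 1 ρ a (a + δ)
    rw [one_smul, one_mul, add_sub_cancel_left] at this
    exact pos_of_mul_pos_right (this ▸ h) hρ.le
  refine ⟨δ, ⟨?_, hδ.2.lt_of_ne ?_⟩, ρ, hρ, rfl⟩
  · by_contra hn
    exact (Real.sin_nonpos_of_nonpos_of_neg_pi_le (not_lt.1 hn) hδ.1.le).not_gt hsin
  · rintro rfl
    simp at hsin

lemma exists_hasDirection_sub (h : 0 < ω z (Circle.exp a)) :
    ∃ δ ∈ Ioo 0 Real.pi, HasDirection z (a - δ) := by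
  obtain ⟨δ, hδ, ρ, hρ, rfl⟩ := exists_hasDirection a (z := z) (by rintro rfl; simp at h)
  have hsin : 0 < Real.sin (-δ) := by
    have := areaForm_smul_exp ρ 1 (a + δ) a
    rw [one_smul, mul_one, sub_add_cancel_left] at this
    exact pos_of_mul_pos_right (this ▸ h) hρ.le
  rw [Real.sin_neg, neg_pos] at hsin
  refine ⟨-δ, ⟨?_, by linarith [hδ.1]⟩, ρ, hρ, by rw [sub_neg_eq_add]⟩
  by_contra hn
  exact (Real.sin_nonneg_of_nonneg_of_le_pi (by linarith) hδ.2).not_gt hsin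

lemma mem_hull_of_areaForm_pos (hu : u ∈ S) (hv : v ∈ S) (huv : 0 < ω u v) (huz : 0 < ω u z)
    (hzv : 0 < ω z v) : z ∈ PointedCone.hull ℝ S := by
  rw [← inv_smul_smul₀ huv.ne' z, areaForm_smul_eq]
  refine PointedCone.smul_mem _ (inv_nonneg.2 huv.le) ?_
  exact add_mem (PointedCone.smul_mem _ hzv.le (PointedCone.subset_hull hu))
    (PointedCone.smul_mem _ huz.le (PointedCone.subset_hull hv))

lemma exists_areaForm_pos_of_mem_hull (hz : z ≠ 0) (hS : ∀ v ∈ S, ω z v ≠ 0)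
    (h : z ∈ PointedCone.hull ℝ S) :
    ∃ u ∈ S, ∃ v ∈ S, 0 < ω u z ∧ 0 < ω z v ∧ 0 < ω u v := by
  have hunion : S = {v ∈ S | 0 < ω v z} ∪ {v ∈ S | 0 < ω z v} := by
    ext v
    simp only [mem_union, mem_sep_iff, ← and_or_left, Complex.orientation.areaForm_swap v z,
      neg_pos]
    exact ⟨fun hv => ⟨hv, (hS v hv).lt_or_gt⟩, And.left⟩
  rw [hunion, PointedCone.hull, Submodule.span_union, Submodule.mem_sup] at h
  obtain ⟨l, hl, r, hr, rfl⟩ := h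
  have hl_eq : ω (l + r) l = -ω l r := by
    rw [map_add, LinearMap.add_apply, Complex.orientation.areaForm_apply_self, zero_add,
      Complex.orientation.areaForm_swap]
  have hr_eq : ω (l + r) r = ω l r := by
    rw [map_add, LinearMap.add_apply, Complex.orientation.areaForm_apply_self, add_zero]
  have hr0 : r ≠ 0 := by
    rintro rfl
    have := pos_of_mem_hull (f := -ω (l + 0)) (fun v hv => by
      rw [LinearMap.neg_apply, ← Complex.orientation.areaForm_swap]
      exact hv.2) hl (by simpa using hz)
    simp at this
  have hlr : 0 < ω l r := hr_eq ▸ pos_of_mem_hull (fun v hv => hv.2) hr hr0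
  obtain ⟨v, hv, hlv⟩ := exists_pos_of_mem_hull hr hlr
  rw [Complex.orientation.areaForm_swap, ← LinearMap.neg_apply] at hlv
  obtain ⟨u, hu, huv⟩ := exists_pos_of_mem_hull hl hlv
  rw [LinearMap.neg_apply, ← Complex.orientation.areaForm_swap] at huv
  exact ⟨u, hu.1, v, hv.1, hu.2, hv.2, huv⟩

lemma exp_mem_hull_of_no_direction (ha : ∀ v ∈ S, ω (Circle.exp a) v ≠ 0)
    (hS : ∀ v ∈ S, ∀ x ∈ uIcc a b, ¬ HasDirection v x)
    (h : (Circle.exp a : ℂ) ∈ PointedCone.hull ℝ S) :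
    (Circle.exp b : ℂ) ∈ PointedCone.hull ℝ S := by
  obtain ⟨u, hu, v, hv, hua, hav, huv⟩ :=
    exists_areaForm_pos_of_mem_hull (Circle.coe_ne_zero _) ha h
  obtain ⟨δ, hδ, ρ, hρ, hu'⟩ := exists_hasDirection_sub hua
  obtain ⟨ε, hε, σ, hσ, hv'⟩ := exists_hasDirection_add hav
  have hδε : δ + ε < Real.pi := by
    by_contra! hge
    rw [hu', hv', areaForm_smul_exp] at huv
    have := Real.sin_nonpos_of_nonpos_of_neg_pi_le (x := Real.pi - (δ + ε)) (by linarith)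
      (by linarith [hδ.2, hε.2])
    rw [Real.sin_pi_sub, show δ + ε = a + ε - (a - δ) by ring] at this
    exact (mul_nonpos_of_nonneg_of_nonpos (mul_pos hρ hσ).le this).not_gt huv
  have hab : a - δ < b := by
    by_contra! hle
    exact hS u hu (a - δ) (mem_uIcc.2 (.inr ⟨hle, by linarith [hδ.1]⟩)) ⟨ρ, hρ, hu'⟩
  have hba : b < a + ε := by
    by_contra! hle
    exact hS v hv (a + ε) (mem_uIcc.2 (.inl ⟨by linarith [hε.1], hle⟩)) ⟨σ, hσ, hv'⟩
  have pos_sin {x : ℝ} (h0 : 0 < x) (hx : x ≤ δ + ε) : 0 < Real.sin x :=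
    Real.sin_pos_of_pos_of_lt_pi h0 (hx.trans_lt hδε)
  refine mem_hull_of_areaForm_pos hu hv huv ?_ ?_
  · rw [hu', ← one_smul ℝ (Circle.exp b : ℂ), areaForm_smul_exp, mul_one]
    exact mul_pos hρ (pos_sin (by linarith) (by linarith))
  · rw [hv', ← one_smul ℝ (Circle.exp b : ℂ), areaForm_smul_exp, one_mul]
    exact mul_pos hσ (pos_sin (by linarith) (by linarith))

lemma HasDirection.exists_eq_add (ha : HasDirection z a) (hb : HasDirection z b) :
    ∃ m : ℤ, a = b + m * (2 * Real.pi) := by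
  obtain ⟨ρ, hρ, rfl⟩ := ha
  obtain ⟨σ, hσ, h⟩ := hb
  have hρσ : ρ = σ := by simpa [abs_of_pos hρ, abs_of_pos hσ] using congrArg norm h
  rw [hρσ] at h
  exact Circle.exp_eq_exp.1 (Circle.coe_injective (smul_right_injective ℂ hσ.ne' h))

lemma hasDirection_arg (hz : z ≠ 0) : HasDirection z (arg z) :=
  ⟨‖z‖, norm_pos_iff.2 hz, by rw [real_smul, Circle.coe_exp, norm_mul_exp_arg_mul_I]⟩

lemma hasDirection_or_neg_of_areaForm_eq_zero (hz : z ≠ 0) (h : ω (Circle.exp a) z = 0) :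
    HasDirection z a ∨ HasDirection (-z) a := by
  obtain ⟨δ, hδ, ρ, hρ, rfl⟩ := exists_hasDirection a hz
  have hsin : Real.sin δ = 0 := by
    have := areaForm_smul_exp 1 ρ a (a + δ)
    rw [one_smul, h, one_mul, add_sub_cancel_left] at this
    exact (mul_eq_zero.1 this.symm).resolve_left hρ.ne'
  rcases hδ.2.lt_or_eq with hlt | rfl
  · rw [(Real.sin_eq_zero_iff_of_lt_of_lt hδ.1 hlt).1 hsin, add_zero]
    exact .inl ⟨ρ, hρ, rfl⟩
  · exact .inr ⟨ρ, hρ, by simp [Circle.exp_add]⟩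

end Plane

section AngularSweep

open Finset

variable {V : Type*} {Q : Finset V} {g : V → ℂ} {M : ℕ}

lemma exists_enumeration_strictMonoOn {f : V → ℝ} (hf : Set.InjOn f Q) (hQ : Q.Nonempty) :
    ∃ q : ℕ → V, Set.BijOn q (Set.Iio #Q) Q ∧ StrictMonoOn (f ∘ q) (Set.Iio #Q) := by
  classical
  have : Nonempty V := ⟨hQ.choose⟩
  let e := (Q.image f).orderEmbOfFin (card_image_of_injOn hf)
  have he (i : Fin #Q) : e i ∈ f '' Q := by
    rw [← coe_image]
    exact orderEmbOfFin_mem _ _ i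
  let q : ℕ → V := fun t => if h : t < #Q then Function.invFunOn f Q (e ⟨t, h⟩) else hQ.choose
  have hq {t : ℕ} (h : t < #Q) : q t ∈ Q ∧ f (q t) = e ⟨t, h⟩ := by
    simp only [q, dif_pos h]
    exact ⟨Function.invFunOn_mem (he _), Function.invFunOn_eq (he _)⟩
  have hmono : StrictMonoOn (f ∘ q) (Set.Iio #Q) := fun s hs t ht hst => by
    simp only [Function.comp_apply, (hq hs).2, (hq ht).2]
    exact e.strictMono hst
  refine ⟨q, ⟨fun t ht => (hq ht).1, hmono.injOn.of_comp, fun c hc => ?_⟩, hmono⟩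
  have hfc : f c ∈ Set.range e := by
    rw [range_orderEmbOfFin]
    exact mem_coe.2 (mem_image_of_mem f hc)
  obtain ⟨⟨t, ht⟩, htc⟩ := hfc
  exact ⟨t, ht, hf (hq ht).1 hc ((hq ht).2.trans htc)⟩

lemma exists_separators {θ : ℕ → ℝ} {a b : ℝ} (hM : 0 < M) (hθ : StrictMonoOn θ (Set.Iio M))
    (hab : ∀ t < M, θ t ∈ Set.Ioo a b) :
    ∃ φ : ℕ → ℝ, φ 0 = a ∧ φ M = b ∧ ∀ t < M, φ t < θ t ∧ θ t < φ (t + 1) := by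
  refine ⟨fun t => if t = 0 then a else if t = M then b else (θ (t - 1) + θ t) / 2, if_pos rfl,
    by simp [hM.ne'], fun t ht => ⟨?_, ?_⟩⟩
  · rcases Nat.eq_zero_or_pos t with rfl | h0
    · simpa using (hab 0 ht).1
    · have := hθ (show t - 1 < M by lia) ht (show t - 1 < t by lia)
      simp only [h0.ne', ht.ne, if_false]
      linarith
  · rcases eq_or_ne (t + 1) M with hM' | hM'
    · simpa [hM', hM.ne'] using (hab t ht).2
    · have := hθ ht (show t + 1 < M by lia) (Nat.lt_succ_self t)
      simp only [Nat.succ_ne_zero, hM', if_false, Nat.add_sub_cancel]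
      linarith

/-- The directions `g c` of the elements `c` of `Q`, met in the order `q 0, q 1, …` at the angles
`θ 0 < θ 1 < …` by a ray turning once around the origin of the plane. The angles `φ t` and
`φ (t + 1)` bound a sector that contains no other direction than `θ t`. -/
structure IsAngularSweep (Q : Finset V) (g : V → ℂ) (q : ℕ → V) (φ θ : ℕ → ℝ) : Prop where
  bijOn : Set.BijOn q (Set.Iio #Q) Q
  lt_angle : ∀ t < #Q, φ t < θ t
  angle_lt : ∀ t < #Q, θ t < φ (t + 1)
  hasDirection : ∀ t < #Q, HasDirection (g (q t)) (θ t)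
  period : φ #Q = φ 0 + 2 * Real.pi

namespace IsAngularSweep

variable {q : ℕ → V} {φ θ : ℕ → ℝ} {t : ℕ} {c : V} {x : ℝ}

lemma monotoneOn (h : IsAngularSweep Q g q φ θ) : MonotoneOn φ (Set.Iic #Q) := by
  intro s _ t ht hst
  induction t, hst using Nat.le_induction with
  | base => rfl
  | succ t _ ih =>
    exact (ih (Nat.le_of_succ_le ht)).trans ((h.lt_angle t ht).trans (h.angle_lt t ht)).le

lemma eq_of_hasDirection (h : IsAngularSweep Q g q φ θ) (ht : t < #Q) (hc : c ∈ Q)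
    (hx : x ∈ Set.Icc (φ t) (φ (t + 1))) (hcx : HasDirection (g c) x) : c = q t ∧ x = θ t := by
  obtain ⟨j, hj : j < #Q, rfl⟩ := h.bijOn.surjOn hc
  obtain ⟨m, hm⟩ := hcx.exists_eq_add (h.hasDirection j hj)
  have hφ {s s' : ℕ} (hs' : s' ≤ #Q) (hs : s ≤ s') : φ s ≤ φ s' :=
    h.monotoneOn (hs.trans hs') hs' hs
  have hx0 : φ 0 ≤ x := (hφ ht.le t.zero_le).trans hx.1
  have hx1 : x ≤ φ 0 + 2 * Real.pi := h.period ▸ hx.2.trans (hφ le_rfl ht)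
  have hj0 : φ 0 < θ j := (hφ hj.le j.zero_le).trans_lt (h.lt_angle j hj)
  have hj1 : θ j < φ 0 + 2 * Real.pi := h.period ▸ (h.angle_lt j hj).trans_le (hφ le_rfl hj)
  have hm0 : m = 0 := by
    have hlt : (m : ℝ) < 1 := by nlinarith [Real.pi_pos]
    have hgt : (-1 : ℝ) < m := by nlinarith [Real.pi_pos]
    have : m < 1 := by exact_mod_cast hlt
    have : -1 < m := by exact_mod_cast hgt
    lia
  obtain rfl : x = θ j := by simpa [hm0] using hm
  have hjt : j = t := by
    rcases lt_trichotomy j t with hlt | heq | hgt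
    · exact absurd (h.angle_lt j hj) ((hφ ht.le hlt).trans hx.1).not_gt
    · exact heq
    · exact absurd (h.lt_angle j hj) (hx.2.trans (hφ hj.le hgt)).not_gt
  exact ⟨by rw [hjt], by rw [hjt]⟩

lemma not_hasDirection (h : IsAngularSweep Q g q φ θ) (ht : t ≤ #Q) (hQ : 0 < #Q) (hc : c ∈ Q) :
    ¬ HasDirection (g c) (φ t) := by
  intro hd
  rcases ht.lt_or_eq with ht | rfl
  · have hlt := (h.lt_angle t ht).trans (h.angle_lt t ht)
    exact (h.lt_angle t ht).ne (h.eq_of_hasDirection ht hc ⟨le_rfl, hlt.le⟩ hd).2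
  · obtain ⟨s, hs⟩ := Nat.exists_eq_add_one_of_ne_zero hQ.ne'
    rw [hs] at hd
    have hs' : s < #Q := by lia
    have hlt := (h.lt_angle s hs').trans (h.angle_lt s hs')
    exact (h.angle_lt s hs').ne' (h.eq_of_hasDirection hs' hc ⟨hlt.le, le_rfl⟩ hd).2

end IsAngularSweep

lemma exists_isAngularSweep (hQ : Q.Nonempty) (hg : ∀ c ∈ Q, g c ≠ 0)
    (hinj : Set.InjOn (fun c => (g c).arg) Q) : ∃ q φ θ, IsAngularSweep Q g q φ θ := by
  obtain ⟨q, hq, hmono⟩ := exists_enumeration_strictMonoOn hinj hQ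
  have harg (t : ℕ) : (g (q t)).arg ∈ Set.Ioc (-Real.pi) Real.pi :=
    Complex.arg_mem_Ioc _
  have hfirst {t : ℕ} (ht : t < #Q) : (g (q 0)).arg ≤ (g (q t)).arg :=
    hmono.monotoneOn (hQ.card_pos) ht t.zero_le
  have hpos := hQ.card_pos
  have hIoo (t : ℕ) (ht : t < #Q) : (g (q t)).arg ∈
      Set.Ioo (((g (q 0)).arg - Real.pi) / 2) (((g (q 0)).arg - Real.pi) / 2 + 2 * Real.pi) := by
    constructor <;> linarith [(harg 0).1, (harg 0).2, (harg t).2, hfirst ht]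
  obtain ⟨φ, hφ0, hφM, hφ⟩ := exists_separators hpos hmono hIoo
  exact ⟨q, φ, fun t => (g (q t)).arg, hq, fun t ht => (hφ t ht).1, fun t ht => (hφ t ht).2,
    fun t ht => hasDirection_arg (hg _ (hq.mapsTo ht)), by rw [hφM, hφ0]⟩

end AngularSweep

section ContactSystem

open Set
open scoped Finset

attribute [local instance] Complex.finrank_real_complex_fact

local notation "ω" => Complex.orientation.areaForm

local notation "cone" => PointedCone.hull ℝ

variable {V R : Type*} [AddCommGroup V] [Module ℝ V]

/-- A system of convex spherical polygons, given as the cones generated by their corners `K r`.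
Two polygons meet at most in a common corner, no corner lies inside an edge, and each point of the
set `Q` of corners is a contact of exactly two polygons, which have different colours. -/
structure IsContactSystem (K : R → Set V) (Q : Finset V) (col : R → Bool) : Prop where
  subset : ∀ r, K r ⊆ Q
  neg_mem : ∀ q ∈ Q, -q ∈ Q
  exists_touching : ∀ q ∈ Q, ∃ r r', col r ≠ col r' ∧ ∀ s, q ∈ K s ↔ s = r ∨ s = r'
  subsingleton : ∀ r r', r ≠ r' → (K r ∩ K r').Subsingleton
  salient : ∀ r, ∀ w ∈ cone (K r), -w ∈ cone (K r) → w = 0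
  inter : ∀ r r', r ≠ r' → ∀ w ∈ cone (K r), w ∈ cone (K r') → w ≠ 0 →
    ∃ q ∈ K r ∩ K r', ∃ a > (0 : ℝ), w = a • q
  extreme : ∀ r, ∀ q ∈ K r, ∀ v ∈ cone (K r), ∀ w ∈ cone (K r),
    v + w ∈ Submodule.span ℝ {q} → v ∈ Submodule.span ℝ {q}

/-- A projection `π` to the plane along the axis through a point `N` of the polygon `r₀` whose
antipode lies in the polygon `r₁`, such that the axis is in general position. The longitude of a
point off the axis is the argument of its projection, and the two polar polygons meet every
half-plane bounded by the axis. -/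
structure IsPolarProjection (K : R → Set V) (Q : Finset V) (r₀ r₁ : R) (N : V)
    (π : V →ₗ[ℝ] ℂ) : Prop where
  ker_eq : LinearMap.ker π = Submodule.span ℝ {N}
  pole_ne_zero : N ≠ 0
  pole_mem : N ∈ cone (K r₀)
  neg_pole_mem : -N ∈ cone (K r₁)
  map_ne_zero : ∀ q ∈ Q, π q ≠ 0
  eq_or_eq_neg : ∀ p ∈ Q, ∀ q ∈ Q, ω (π p) (π q) = 0 → q = p ∨ q = -p
  exists_pos : ∀ r, r = r₀ ∨ r = r₁ → ∀ q ∈ K r, ∃ c ∈ K r, 0 < ω (π q) (π c)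
  exists_neg : ∀ r, r = r₀ ∨ r = r₁ → ∀ q ∈ K r, ∃ c ∈ K r, 0 < ω (π c) (π q)
  disjoint : Disjoint (K r₀) (K r₁)

/-- The polygons met by the half-plane at longitude `x`. -/
def polygonsAt (K : R → Set V) (π : V →ₗ[ℝ] ℂ) (x : ℝ) : Set R :=
  {r | (Circle.exp x : ℂ) ∈ cone (π '' K r)}

/-- On some half-plane bounded by the axis through `N`, the polygon `r` has a point that is closer
to `N` than a point of the polygon `r'` is. -/
def IsNorthOf (K : R → Set V) (N : V) (π : V →ₗ[ℝ] ℂ) (r r' : R) : Prop :=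
  r ≠ r' ∧ ∃ c ∈ cone (K r), ∃ c' ∈ cone (K r'), π c ≠ 0 ∧ ∃ k > (0 : ℝ), c - c' = k • N

variable {K : R → Set V} {Q : Finset V} {col : R → Bool} {r₀ r₁ : R} {N : V}
  {π : V →ₗ[ℝ] ℂ} {r r' : R} {c c' q : V} {x y : ℝ}

lemma mem_hull_image_iff {S : Set V} {z : ℂ} : z ∈ cone (π '' S) ↔ ∃ c ∈ cone S, π c = z := by
  rw [PointedCone.hull, ← LinearMap.coe_restrictScalars (R := {a : ℝ // 0 ≤ a}) π,
    Submodule.span_image, Submodule.mem_map]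

lemma mem_polygonsAt_iff :
    r ∈ polygonsAt K π x ↔ ∃ c ∈ cone (K r), π c = (Circle.exp x : ℂ) :=
  mem_hull_image_iff

lemma mem_polygonsAt_of_areaForm_pos {u v : V} (hu : u ∈ K r) (hv : v ∈ K r)
    (huv : 0 < ω (π u) (π v)) (hux : 0 < ω (π u) (Circle.exp x))
    (hxv : 0 < ω (Circle.exp x) (π v)) :
    r ∈ polygonsAt K π x :=
  mem_hull_of_areaForm_pos (mem_image_of_mem π hu) (mem_image_of_mem π hv) huv hux hxv

namespace IsPolarProjection

lemma exists_eq_smul (hπ : IsPolarProjection K Q r₀ r₁ N π) (hc : π c = 0) :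
    ∃ k : ℝ, c = k • N := by
  obtain ⟨k, hk⟩ := Submodule.mem_span_singleton.1 (hπ.ker_eq ▸ LinearMap.mem_ker.2 hc)
  exact ⟨k, hk.symm⟩

lemma map_pole (hπ : IsPolarProjection K Q r₀ r₁ N π) : π N = 0 :=
  LinearMap.mem_ker.1 (hπ.ker_eq ▸ Submodule.mem_span_singleton_self N)

lemma injOn_arg (hπ : IsPolarProjection K Q r₀ r₁ N π) : InjOn (fun c => (π c).arg) Q := by
  intro p hp q hq hpq
  obtain ⟨ρ, hρ, hp'⟩ := hasDirection_arg (hπ.map_ne_zero p hp)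
  obtain ⟨σ, hσ, hq'⟩ := hasDirection_arg (hπ.map_ne_zero q hq)
  rw [show (π p).arg = (π q).arg from hpq] at hp'
  generalize (π q).arg = θ at hp' hq'
  have harea : ω (π p) (π q) = 0 := by
    rw [hp', hq', areaForm_smul_exp, sub_self, Real.sin_zero, mul_zero]
  rcases hπ.eq_or_eq_neg p hp q hq harea with h | h
  · exact h.symm
  · have hsum : (ρ + σ) • (Circle.exp θ : ℂ) = 0 := by
      rw [add_smul, ← hp', ← hq', h, map_neg, add_neg_cancel]
    exact absurd hsum (smul_ne_zero (add_pos hρ hσ).ne' (Circle.coe_ne_zero _))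

end IsPolarProjection

namespace IsContactSystem

lemma neg_notMem (hK : IsContactSystem K Q col) (hπ : IsPolarProjection K Q r₀ r₁ N π)
    (hq : q ∈ K r) : -q ∉ K r := fun hq' =>
  hπ.map_ne_zero q (hK.subset r hq) (by
    rw [hK.salient r q (PointedCone.subset_hull hq) (PointedCone.subset_hull hq'), map_zero])

lemma asymm_isNorthOf (hK : IsContactSystem K Q col) (hπ : IsPolarProjection K Q r₀ r₁ N π) :
    Std.Asymm (IsNorthOf K N π) := by
  refine ⟨?_⟩
  rintro r r' ⟨hne, c, hc, c', hc', hπc, k, hk, hN⟩ ⟨-, d', hd', d, hd, -, l, hl, hN'⟩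
  have hlc := PointedCone.smul_mem _ hl.le hc
  have hkd := PointedCone.smul_mem _ hk.le hd
  have hlc' := PointedCone.smul_mem _ hl.le hc'
  have hkd' := PointedCone.smul_mem _ hk.le hd'
  have hw : l • c + k • d = l • c' + k • d' := by
    rw [sub_eq_iff_eq_add.1 hN, sub_eq_iff_eq_add.1 hN']
    module
  have hw0 : l • c + k • d ≠ 0 := fun h0 => by
    have h := hK.salient r _ hlc (by rwa [neg_eq_of_add_eq_zero_right h0])
    rw [(smul_eq_zero.1 h).resolve_left hl.ne', map_zero] at hπc
    exact hπc rfl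
  obtain ⟨q, ⟨hq, hq'⟩, a, -, ha⟩ := hK.inter r r' hne _ (add_mem hlc hkd)
    (hw ▸ add_mem hlc' hkd') hw0
  have hspan : l • c + k • d ∈ Submodule.span ℝ {q} :=
    Submodule.mem_span_singleton.2 ⟨a, ha.symm⟩
  have hpole : l • k • N ∈ Submodule.span ℝ {q} := by
    rw [← hN, smul_sub]
    exact sub_mem (hK.extreme r q hq _ hlc _ hkd hspan)
      (hK.extreme r' q hq' _ hlc' _ hkd' (hw ▸ hspan))
  obtain ⟨m, hm⟩ := Submodule.mem_span_singleton.1 hpole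
  have hm0 : m = 0 := by
    have := congrArg π hm
    simp only [map_smul, hπ.map_pole, smul_zero, smul_eq_zero] at this
    exact this.resolve_right (hπ.map_ne_zero q (hK.subset r hq))
  rw [hm0, zero_smul, eq_comm, smul_smul, smul_eq_zero] at hm
  exact hm.elim (mul_pos hl hk).ne' hπ.pole_ne_zero

lemma exists_hasDirection_of_mem_inter (hK : IsContactSystem K Q col) (hne : r ≠ r')
    (hc : c ∈ cone (K r)) (hc' : c ∈ cone (K r')) (hx : HasDirection (π c) x) :
    ∃ q ∈ K r ∩ K r', HasDirection (π q) x := by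
  obtain ⟨ρ, hρ, hx⟩ := hx
  have hc0 : c ≠ 0 := by
    rintro rfl
    rw [map_zero, eq_comm] at hx
    exact smul_ne_zero hρ.ne' (Circle.coe_ne_zero _) hx
  obtain ⟨q, hq, a, ha, rfl⟩ := hK.inter r r' hne c hc hc' hc0
  refine ⟨q, hq, a⁻¹ * ρ, mul_pos (inv_pos.2 ha) hρ, ?_⟩
  rw [mul_smul, ← hx, map_smul, inv_smul_smul₀ ha.ne']

end IsContactSystem

lemma IsPolarProjection.exists_sub_eq_smul (hπ : IsPolarProjection K Q r₀ r₁ N π) (hne : r ≠ r')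
    (hc : c ∈ cone (K r)) (hc' : c' ∈ cone (K r')) (hcc' : π c = π c') (hπc : π c ≠ 0) :
    ∃ k : ℝ, c - c' = k • N ∧ (0 < k → IsNorthOf K N π r r') ∧ (k < 0 → IsNorthOf K N π r' r) := by
  obtain ⟨k, hk⟩ := hπ.exists_eq_smul (c := c - c') (by rw [map_sub, hcc', sub_self])
  refine ⟨k, hk, fun hpos => ⟨hne, c, hc, c', hc', hπc, k, hpos, hk⟩, fun hneg =>
    ⟨hne.symm, c', hc', c, hc, hcc' ▸ hπc, -k, neg_pos.2 hneg, ?_⟩⟩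
  rw [neg_smul, ← hk, neg_sub]

namespace IsContactSystem

lemma ne_poles (hK : IsContactSystem K Q col) (hπ : IsPolarProjection K Q r₀ r₁ N π) :
    r₀ ≠ r₁ := by
  rintro rfl
  exact hπ.pole_ne_zero (hK.salient r₀ N hπ.pole_mem hπ.neg_pole_mem)

lemma isLinearOn_polygonsAt (hK : IsContactSystem K Q col)
    (hπ : IsPolarProjection K Q r₀ r₁ N π) (hx : ∀ q ∈ Q, ¬ HasDirection (π q) x) :
    IsLinearOn (IsNorthOf K N π) (polygonsAt K π x) := by
  have := hK.asymm_isNorthOf hπ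
  have compare {r r' : R} (hne : r ≠ r') {c c' : V} (hc : c ∈ cone (K r)) (hc' : c' ∈ cone (K r'))
      (hcx : π c = (Circle.exp x : ℂ)) (hcx' : π c' = (Circle.exp x : ℂ)) :
      ∃ k : ℝ, k ≠ 0 ∧ c - c' = k • N ∧ (0 < k → IsNorthOf K N π r r') ∧
        (k < 0 → IsNorthOf K N π r' r) := by
    obtain ⟨k, hk, hpos, hneg⟩ := hπ.exists_sub_eq_smul hne hc hc' (hcx.trans hcx'.symm)
      (hcx ▸ Circle.coe_ne_zero _)
    refine ⟨k, ?_, hk, hpos, hneg⟩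
    rintro rfl
    rw [zero_smul, sub_eq_zero] at hk
    obtain ⟨q, hq, hqx⟩ := hK.exists_hasDirection_of_mem_inter hne hc (hk ▸ hc')
      ⟨1, one_pos, by rw [hcx, one_smul]⟩
    exact hx q (hK.subset r hq.1) hqx
  simp only [polygonsAt, mem_hull_image_iff]
  constructor
  · rintro u ⟨c, hc, hcx⟩ v ⟨d, hd, hdx⟩ w ⟨e, he, hex⟩ huv hvw
    obtain ⟨k, -, hk, -, hk'⟩ := compare huv.1 hc hd hcx hdx
    obtain ⟨l, -, hl, -, hl'⟩ := compare hvw.1 hd he hdx hex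
    obtain ⟨m, hm0, hm, hm', -⟩ := compare (by rintro rfl; exact asymm huv hvw) hc he hcx hex
    have hk0 : 0 ≤ k := not_lt.1 fun h => asymm huv (hk' h)
    have hl0 : 0 ≤ l := not_lt.1 fun h => asymm hvw (hl' h)
    have hmkl : m = k + l := smul_left_injective ℝ hπ.pole_ne_zero (by
      simp only [add_smul, ← hk, ← hl, ← hm, sub_add_sub_cancel])
    exact hm' (lt_of_le_of_ne (hmkl ▸ add_nonneg hk0 hl0) hm0.symm)
  · rintro u ⟨c, hc, hcx⟩ v ⟨d, hd, hdx⟩ huv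
    obtain ⟨k, hk0, -, hpos, hneg⟩ := compare huv hc hd hcx hdx
    exact hk0.lt_or_gt.elim (fun h => .inr (hneg h)) fun h => .inl (hpos h)

lemma mem_polygonsAt_of_no_direction (hK : IsContactSystem K Q col)
    (hπ : IsPolarProjection K Q r₀ r₁ N π) (hx : ∀ q ∈ Q, ¬ HasDirection (π q) x)
    (hxy : ∀ q ∈ K r, ∀ z ∈ uIcc x y, ¬ HasDirection (π q) z) (hr : r ∈ polygonsAt K π x) :
    r ∈ polygonsAt K π y := by
  refine exp_mem_hull_of_no_direction (forall_mem_image.2 fun q hq h => ?_)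
    (forall_mem_image.2 hxy) hr
  have hqQ := hK.subset r hq
  rcases hasDirection_or_neg_of_areaForm_eq_zero (hπ.map_ne_zero q hqQ) h with hd | hd
  · exact hx q hqQ hd
  · exact hx (-q) (hK.neg_mem q hqQ) (by rwa [map_neg])

lemma eq_zero_of_smul_pole_mem (hK : IsContactSystem K Q col)
    (hπ : IsPolarProjection K Q r₀ r₁ N π) (h₀ : r ≠ r₀) (h₁ : r ≠ r₁) {k : ℝ}
    (hk : k • N ∈ cone (K r)) : k = 0 := by
  have off_axis {s : R} (hs : r ≠ s) (hks : k • N ∈ cone (K s)) : k = 0 := by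
    by_contra hk0
    obtain ⟨q, ⟨hq, -⟩, a, ha, h⟩ := hK.inter r s hs _ hk hks (smul_ne_zero hk0 hπ.pole_ne_zero)
    have h' := congrArg π h
    rw [map_smul, map_smul, hπ.map_pole, smul_zero, eq_comm] at h'
    exact smul_ne_zero ha.ne' (hπ.map_ne_zero q (hK.subset r hq)) h'
  rcases le_total 0 k with h | h
  · exact off_axis h₀ (PointedCone.smul_mem _ h hπ.pole_mem)
  · refine off_axis h₁ ?_
    rw [← neg_smul_neg]
    exact PointedCone.smul_mem _ (neg_nonneg.2 h) hπ.neg_pole_mem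

lemma notMem_polygonsAt_of_hasDirection_neg (hK : IsContactSystem K Q col)
    (hπ : IsPolarProjection K Q r₀ r₁ N π) (h₀ : r ≠ r₀) (h₁ : r ≠ r₁) (hq : q ∈ K r)
    (hx : HasDirection (π (-q)) x) : r ∉ polygonsAt K π x := by
  rw [mem_polygonsAt_iff]
  rintro ⟨c, hc, hcx⟩
  obtain ⟨ρ, hρ, h⟩ := hx
  have hqc : ρ⁻¹ • q ∈ cone (K r) :=
    PointedCone.smul_mem _ (inv_pos.2 hρ).le (PointedCone.subset_hull hq)
  have h0 : π (c + ρ⁻¹ • q) = 0 := by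
    rw [map_neg, neg_eq_iff_eq_neg] at h
    rw [map_add, map_smul, hcx, h, smul_neg, inv_smul_smul₀ hρ.ne', add_neg_cancel]
  obtain ⟨k, hk⟩ := hπ.exists_eq_smul h0
  have hk0 : k = 0 := hK.eq_zero_of_smul_pole_mem hπ h₀ h₁ (hk ▸ add_mem hc hqc)
  rw [hk0, zero_smul] at hk
  have hc0 : c = 0 := hK.salient r c hc (by rwa [neg_eq_of_add_eq_zero_right hk])
  rw [hc0, map_zero] at hcx
  exact Circle.coe_ne_zero _ hcx.symm

lemma isNorthOf_of_touching (hK : IsContactSystem K Q col)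
    (hπ : IsPolarProjection K Q r₀ r₁ N π) {s s' : R} (hs : q ∈ K s) (hs' : q ∈ K s')
    (hq : HasDirection (π q) x) (hx : ∀ p ∈ Q, HasDirection (π p) x → p = q)
    (hr : r ∈ polygonsAt K π x) (hqr : q ∉ K r) :
    (IsNorthOf K N π r s ∧ IsNorthOf K N π r s') ∨
      (IsNorthOf K N π s r ∧ IsNorthOf K N π s' r) := by
  obtain ⟨c, hc, hcx⟩ := mem_polygonsAt_iff.1 hr
  obtain ⟨ρ, hρ, h⟩ := hq
  have hqx : π c = π (ρ⁻¹ • q) := by rw [hcx, map_smul, h, inv_smul_smul₀ hρ.ne']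
  have hπc : π c ≠ 0 := hcx ▸ Circle.coe_ne_zero _
  have compare {u : R} (hu : q ∈ K u) := hπ.exists_sub_eq_smul
    (r := r) (r' := u) (by rintro rfl; exact hqr hu) hc
    (PointedCone.smul_mem _ (inv_pos.2 hρ).le (PointedCone.subset_hull hu)) hqx hπc
  obtain ⟨k, hk, hrs, hsr⟩ := compare hs
  obtain ⟨k', hk', hrs', hsr'⟩ := compare hs'
  obtain rfl : k = k' := smul_left_injective ℝ hπ.pole_ne_zero (hk.symm.trans hk')
  rcases lt_trichotomy k 0 with hk0 | rfl | hk0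
  · exact .inr ⟨hsr hk0, hsr' hk0⟩
  · rw [zero_smul, sub_eq_zero] at hk
    obtain ⟨p, hp, hpx⟩ := hK.exists_hasDirection_of_mem_inter (r := r) (r' := s)
      (by rintro rfl; exact hqr hs) hc
      (hk ▸ PointedCone.smul_mem _ (inv_pos.2 hρ).le (PointedCone.subset_hull hs))
      ⟨1, one_pos, by rw [hcx, one_smul]⟩
    exact absurd (hx p (hK.subset r hp.1) hpx ▸ hp.1) hqr
  · exact .inl ⟨hrs hk0, hrs' hk0⟩

end IsContactSystem

lemma sum_card_filter_add_two_le [Fintype R] {M : ℕ} {P : ℕ → R → Prop}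
    [∀ t, DecidablePred (P t)] (hne : r₀ ≠ r₁) (h₀ : ∀ t < M, ¬ P t r₀) (h₁ : ∀ t < M, ¬ P t r₁)
    (huniq : ∀ r, ∀ t < M, ∀ t' < M, P t r → P t' r → t = t') :
    ∑ t ∈ Finset.range M, (Finset.univ.filter (P t)).card + 2 ≤ Fintype.card R := by
  classical
  rw [← Finset.card_biUnion, ← Finset.card_pair hne, ← Finset.card_union_of_disjoint]
  · exact Finset.card_le_univ _
  · simp only [Finset.disjoint_right, Finset.mem_insert, Finset.mem_singleton, Finset.mem_biUnion,
      Finset.mem_range, Finset.mem_filter_univ, not_exists, not_and]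
    rintro r (rfl | rfl)
    exacts [h₀, h₁]
  · simp only [Set.PairwiseDisjoint, Set.Pairwise, Function.onFun, Finset.disjoint_left,
      Finset.mem_filter_univ]
    exact fun t ht t' ht' htt' r hr hr' =>
      htt' (huniq r t (Finset.mem_range.1 ht) t' (Finset.mem_range.1 ht') hr hr')

namespace IsContactSystem

variable {q : ℕ → V} {φ θ : ℕ → ℝ} {t t' : ℕ}

lemma mem_polygonsAt_succ (hK : IsContactSystem K Q col) (hS : IsAngularSweep Q π q φ θ)
    (ht : t < Q.card) (hq : q t ∈ K r) (hc : c ∈ K r) (h : 0 < ω (π (q t)) (π c)) :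
    r ∈ polygonsAt K π (φ (t + 1)) := by
  have hlt := hS.lt_angle t ht
  have hgt := hS.angle_lt t ht
  obtain ⟨ρ, hρ, hqθ⟩ := hS.hasDirection t ht
  have hθc : 0 < ω (Circle.exp (θ t)) (π c) := by
    rw [hqθ, map_smul] at h
    exact pos_of_mul_pos_right h hρ.le
  obtain ⟨δ, hδ, hcδ⟩ := exists_hasDirection_add hθc
  have hφδ : φ (t + 1) < θ t + δ := by
    by_contra! hle
    have := (hS.eq_of_hasDirection ht (hK.subset r hc) ⟨by linarith [hδ.1], hle⟩ hcδ).2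
    linarith [hδ.1]
  obtain ⟨σ, hσ, hcσ⟩ := hcδ
  refine mem_polygonsAt_of_areaForm_pos hq hc h ?_ ?_
  · rw [hqθ, ← one_smul ℝ (Circle.exp (φ (t + 1)) : ℂ), areaForm_smul_exp]
    exact mul_pos (by simpa using hρ)
      (Real.sin_pos_of_pos_of_lt_pi (by linarith) (by linarith [hδ.2]))
  · rw [hcσ, ← one_smul ℝ (Circle.exp (φ (t + 1)) : ℂ), areaForm_smul_exp]
    exact mul_pos (by simpa using hσ)
      (Real.sin_pos_of_pos_of_lt_pi (by linarith) (by linarith [hδ.2]))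

lemma mem_polygonsAt_self (hK : IsContactSystem K Q col) (hS : IsAngularSweep Q π q φ θ)
    (ht : t < Q.card) (hq : q t ∈ K r) (hc : c ∈ K r) (h : 0 < ω (π c) (π (q t))) :
    r ∈ polygonsAt K π (φ t) := by
  have hlt := hS.lt_angle t ht
  have hgt := hS.angle_lt t ht
  obtain ⟨ρ, hρ, hqθ⟩ := hS.hasDirection t ht
  have hcθ : 0 < ω (π c) (Circle.exp (θ t)) := by
    rw [hqθ, map_smul] at h
    exact pos_of_mul_pos_right h hρ.le
  obtain ⟨δ, hδ, hcδ⟩ := exists_hasDirection_sub hcθ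
  have hφδ : θ t - δ < φ t := by
    by_contra! hle
    have := (hS.eq_of_hasDirection ht (hK.subset r hc) ⟨hle, by linarith [hδ.1]⟩ hcδ).2
    linarith [hδ.1]
  obtain ⟨σ, hσ, hcσ⟩ := hcδ
  refine mem_polygonsAt_of_areaForm_pos hc hq h ?_ ?_
  · rw [hcσ, ← one_smul ℝ (Circle.exp (φ t) : ℂ), areaForm_smul_exp]
    exact mul_pos (by simpa using hσ)
      (Real.sin_pos_of_pos_of_lt_pi (by linarith) (by linarith [hδ.2]))
  · rw [hqθ, ← one_smul ℝ (Circle.exp (φ t) : ℂ), areaForm_smul_exp]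
    exact mul_pos (by simpa using hρ)
      (Real.sin_pos_of_pos_of_lt_pi (by linarith) (by linarith [hδ.2]))

lemma areaForm_pos_or_pos (hK : IsContactSystem K Q col) (hπ : IsPolarProjection K Q r₀ r₁ N π)
    {p q : V} (hp : p ∈ K r) (hq : q ∈ K r) (hpq : p ≠ q) :
    0 < ω (π p) (π q) ∨ 0 < ω (π q) (π p) := by
  rw [Complex.orientation.areaForm_swap (π q), neg_pos, or_comm]
  refine lt_or_gt_of_ne fun h => ?_
  rcases hπ.eq_or_eq_neg p (hK.subset r hp) q (hK.subset r hq) h with rfl | rfl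
  exacts [hpq rfl, hK.neg_notMem hπ hp hq]

open Classical in
lemma sum_card_not_succ_add_two_le [Fintype R] (hK : IsContactSystem K Q col)
    (hπ : IsPolarProjection K Q r₀ r₁ N π) (hS : IsAngularSweep Q π q φ θ) :
    ∑ t ∈ Finset.range Q.card,
      #{r : R | q t ∈ K r ∧ r ∉ polygonsAt K π (φ (t + 1))} + 2 ≤ Fintype.card R := by
  have polar {r : R} (hr : r = r₀ ∨ r = r₁) (t : ℕ) (ht : t < #Q) :
      ¬ (q t ∈ K r ∧ r ∉ polygonsAt K π (φ (t + 1))) := fun ⟨hq, hn⟩ => by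
    obtain ⟨c, hc, h⟩ := hπ.exists_pos r hr _ hq
    exact hn (hK.mem_polygonsAt_succ hS ht hq hc h)
  refine sum_card_filter_add_two_le (hK.ne_poles hπ) (polar (.inl rfl)) (polar (.inr rfl)) ?_
  rintro r t ht t' ht' ⟨hq, hn⟩ ⟨hq', hn'⟩
  refine hS.bijOn.injOn ht ht' (by_contra fun hne => ?_)
  rcases hK.areaForm_pos_or_pos hπ hq hq' hne with h | h
  exacts [hn (hK.mem_polygonsAt_succ hS ht hq hq' h),
    hn' (hK.mem_polygonsAt_succ hS ht' hq' hq h)]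

open Classical in
lemma sum_card_not_self_add_two_le [Fintype R] (hK : IsContactSystem K Q col)
    (hπ : IsPolarProjection K Q r₀ r₁ N π) (hS : IsAngularSweep Q π q φ θ) :
    ∑ t ∈ Finset.range Q.card,
      #{r : R | q t ∈ K r ∧ r ∉ polygonsAt K π (φ t)} + 2 ≤ Fintype.card R := by
  have polar {r : R} (hr : r = r₀ ∨ r = r₁) (t : ℕ) (ht : t < #Q) :
      ¬ (q t ∈ K r ∧ r ∉ polygonsAt K π (φ t)) := fun ⟨hq, hn⟩ => by
    obtain ⟨c, hc, h⟩ := hπ.exists_neg r hr _ hq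
    exact hn (hK.mem_polygonsAt_self hS ht hq hc h)
  refine sum_card_filter_add_two_le (hK.ne_poles hπ) (polar (.inl rfl)) (polar (.inr rfl)) ?_
  rintro r t ht t' ht' ⟨hq, hn⟩ ⟨hq', hn'⟩
  refine hS.bijOn.injOn ht ht' (by_contra fun hne => ?_)
  rcases hK.areaForm_pos_or_pos hπ hq hq' hne with h | h
  exacts [hn' (hK.mem_polygonsAt_self hS ht' hq' hq h),
    hn (hK.mem_polygonsAt_self hS ht hq hq' h)]

lemma exists_hi_lo (hK : IsContactSystem K Q col) (hπ : IsPolarProjection K Q r₀ r₁ N π)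
    {p : V} (hp : p ∈ Q) : ∃ hi lo, col hi ≠ col lo ∧ ¬ IsNorthOf K N π lo hi ∧
      ∀ s, p ∈ K s ↔ s = hi ∨ s = lo := by
  have := hK.asymm_isNorthOf hπ
  obtain ⟨r, r', hcol, hrr'⟩ := hK.exists_touching p hp
  by_cases h : IsNorthOf K N π r' r
  · exact ⟨r', r, hcol.symm, asymm h, fun s => (hrr' s).trans or_comm⟩
  · exact ⟨r, r', hcol, h, hrr'⟩

lemma isCrossing (hK : IsContactSystem K Q col) (hπ : IsPolarProjection K Q r₀ r₁ N π)
    (hS : IsAngularSweep Q π q φ θ) (ht : t < #Q) {hi lo : R} (hcol : col hi ≠ col lo)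
    (hnorth : ¬ IsNorthOf K N π lo hi) (htouch : ∀ s, q t ∈ K s ↔ s = hi ∨ s = lo) :
    IsCrossing col (IsNorthOf K N π) hi lo (polygonsAt K π (φ t))
      (polygonsAt K π (φ (t + 1))) := by
  have hφθ := hS.lt_angle t ht
  have hθφ := hS.angle_lt t ht
  have hgen {s : ℕ} (hs : s ≤ #Q) : ∀ c ∈ Q, ¬ HasDirection (π c) (φ s) := fun c hc =>
    hS.not_hasDirection hs (t.zero_le.trans_lt ht) hc
  have move {r : R} (hr : q t ∉ K r) {x y : ℝ} (hx : x ∈ Icc (φ t) (φ (t + 1)))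
      (hy : y ∈ Icc (φ t) (φ (t + 1))) (hxgen : ∀ c ∈ Q, ¬ HasDirection (π c) x)
      (hrx : r ∈ polygonsAt K π x) : r ∈ polygonsAt K π y :=
    hK.mem_polygonsAt_of_no_direction hπ hxgen (fun c hc z hz hcz => hr
      ((hS.eq_of_hasDirection ht (hK.subset r hc) (uIcc_subset_Icc hx hy hz) hcz).1 ▸ hc)) hrx
  have hl : φ t ∈ Icc (φ t) (φ (t + 1)) := ⟨le_rfl, (hφθ.trans hθφ).le⟩
  have hr : φ (t + 1) ∈ Icc (φ t) (φ (t + 1)) := ⟨hl.2, le_rfl⟩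
  have hm : θ t ∈ Icc (φ t) (φ (t + 1)) := ⟨hφθ.le, hθφ.le⟩
  have hnot {r : R} (hhi : r ≠ hi) (hlo : r ≠ lo) : q t ∉ K r := by simp [htouch, hhi, hlo]
  exact {
    linear := hK.isLinearOn_polygonsAt hπ (hgen ht.le)
    linear' := hK.isLinearOn_polygonsAt hπ (hgen ht)
    col_ne := hcol
    not_above := hnorth
    mem_iff := fun r hhi hlo => ⟨move (hnot hhi hlo) hl hr (hgen ht.le),
      move (hnot hhi hlo) hr hl (hgen ht)⟩
    same_side := fun r hrS hhi hlo => hK.isNorthOf_of_touching hπ ((htouch hi).2 (.inl rfl))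
      ((htouch lo).2 (.inr rfl)) (hS.hasDirection t ht)
      (fun c hc h => (hS.eq_of_hasDirection ht hc hm h).1)
      (move (hnot hhi hlo) hl hm (hgen ht.le) hrS) (hnot hhi hlo) }

lemma exists_notMem_polygonsAt (hK : IsContactSystem K Q col)
    (hπ : IsPolarProjection K Q r₀ r₁ N π) (hS : IsAngularSweep Q π q φ θ) (ht : t < #Q) :
    ∃ s ≤ #Q, ∃ r, q t ∈ K r ∧ r ∉ polygonsAt K π (φ s) := by
  have hq : q t ∈ Q := hS.bijOn.mapsTo ht
  obtain ⟨s, hs : s < #Q, hqs⟩ := hS.bijOn.surjOn (hK.neg_mem _ hq)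
  have nonpolar {r : R} (hr : q t ∈ K r) (h₀ : r ≠ r₀) (h₁ : r ≠ r₁) :
      ∃ s ≤ #Q, ∃ r, q t ∈ K r ∧ r ∉ polygonsAt K π (φ s) := by
    refine ⟨s, hs.le, r, hr, fun hrs => ?_⟩
    refine hK.notMem_polygonsAt_of_hasDirection_neg hπ h₀ h₁ hr (hqs ▸ hS.hasDirection s hs) ?_
    refine hK.mem_polygonsAt_of_no_direction hπ
      (fun c hc => hS.not_hasDirection hs.le (s.zero_le.trans_lt hs) hc)
      (fun c hc z hz hcz => ?_) hrs
    rw [uIcc_of_le (hS.lt_angle s hs).le] at hz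
    have hcs := (hS.eq_of_hasDirection hs (hK.subset r hc)
      ⟨hz.1, hz.2.trans (hS.angle_lt s hs).le⟩ hcz).1
    exact hK.neg_notMem hπ hr (hqs ▸ hcs ▸ hc)
  obtain ⟨r, r', hcol, hrr'⟩ := hK.exists_touching _ hq
  have hr := (hrr' r).2 (.inl rfl)
  have hr' := (hrr' r').2 (.inr rfl)
  by_cases hpolar : r = r₀ ∨ r = r₁
  · refine nonpolar hr' ?_ ?_ <;> rintro rfl <;> rcases hpolar with rfl | rfl
    exacts [hcol rfl, disjoint_left.1 hπ.disjoint hr' hr, disjoint_left.1 hπ.disjoint hr hr',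
      hcol rfl]
  · rw [not_or] at hpolar
    exact nonpolar hr hpolar.1 hpolar.2

open Classical in
theorem card_add_four_le [Fintype R] (hK : IsContactSystem K Q col)
    (hπ : IsPolarProjection K Q r₀ r₁ N π) : #Q + 4 ≤ 2 * Fintype.card R := by
  rcases Q.eq_empty_or_nonempty with rfl | hQ
  · have := Finset.card_le_univ {r₀, r₁}
    rw [Finset.card_pair (hK.ne_poles hπ)] at this
    simpa using Nat.mul_le_mul_left 2 this
  obtain ⟨q, φ, θ, hS⟩ := exists_isAngularSweep hQ hπ.map_ne_zero hπ.injOn_arg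
  have := hK.asymm_isNorthOf hπ
  have : Nonempty R := ⟨r₀⟩
  have hmaps (t : ℕ) (ht : t < #Q) : q t ∈ Q := hS.bijOn.mapsTo ht
  choose! hi lo hcol hnorth htouch using fun t (ht : t < #Q) => hK.exists_hi_lo hπ (hmaps t ht)
  have hcyc : polygonsAt K π (φ 0) = polygonsAt K π (φ #Q) := by
    simp only [polygonsAt, hS.period, Circle.exp_add_two_pi]
  have hinj : ∀ t < #Q, ∀ t' < #Q, hi t = hi t' → lo t = lo t' → t = t' := by
    intro t ht t' ht' hh hl
    have hmem {s : ℕ} (hs : s < #Q) : q s ∈ K (hi s) ∩ K (lo s) :=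
      ⟨(htouch s hs _).2 (.inl rfl), (htouch s hs _).2 (.inr rfl)⟩
    exact hS.bijOn.injOn ht ht' (hK.subsingleton _ _ (ne_of_apply_ne col (hcol t ht)) (hmem ht)
      (hh ▸ hl ▸ hmem ht'))
  have habs : ∀ t < #Q, ∃ s ≤ #Q,
      ¬ (hi t ∈ polygonsAt K π (φ s) ∧ lo t ∈ polygonsAt K π (φ s)) := by
    intro t ht
    obtain ⟨s, hs, r, hr, hrs⟩ := hK.exists_notMem_polygonsAt hπ hS ht
    refine ⟨s, hs, fun h => hrs ?_⟩
    rcases (htouch t ht r).1 hr with rfl | rfl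
    exacts [h.1, h.2]
  have hsweep := card_crossings_le (col := col)
    (fun t ht => hK.isCrossing hπ hS ht (hcol t ht) (hnorth t ht) (htouch t ht)) hcyc hinj habs
  have hends : ∑ t ∈ Finset.range #Q,
      (#{r : R | (r = hi t ∨ r = lo t) ∧ r ∉ polygonsAt K π (φ t)} +
        #{r : R | (r = hi t ∨ r = lo t) ∧ r ∉ polygonsAt K π (φ (t + 1))}) =
      ∑ t ∈ Finset.range #Q, #{r : R | q t ∈ K r ∧ r ∉ polygonsAt K π (φ t)} +
        ∑ t ∈ Finset.range #Q, #{r : R | q t ∈ K r ∧ r ∉ polygonsAt K π (φ (t + 1))} := by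
    rw [← Finset.sum_add_distrib]
    exact Finset.sum_congr rfl fun t ht => by simp only [htouch t (Finset.mem_range.1 ht)]
  have hself := hK.sum_card_not_self_add_two_le hπ hS
  have hsucc := hK.sum_card_not_succ_add_two_le hπ hS
  lia

end IsContactSystem

end ContactSystem

section LinearAlgebra

open Set Module

variable {V : Type*} [AddCommGroup V] [Module ℝ V]

lemma finite_setOf_sum_pow_smul_mem {n : ℕ} {u : Fin n → V} (hu : Submodule.span ℝ (range u) = ⊤)
    {W : Submodule ℝ V} (hW : W < ⊤) : {t : ℝ | ∑ i : Fin n, t ^ (i : ℕ) • u i ∈ W}.Finite := by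
  obtain ⟨f, hf, hWf⟩ := W.exists_le_ker_of_lt_top hW
  let P : Polynomial ℝ := ∑ i : Fin n, Polynomial.C (f (u i)) * Polynomial.X ^ (i : ℕ)
  have hP : P ≠ 0 := fun hP => hf <| LinearMap.ext_on_range hu fun i => by
    have hi : P.coeff i = f (u i) := by
      simp [P, Polynomial.coeff_X_pow, Fin.val_inj]
    simpa [hP] using hi.symm
  refine P.roots.toFinset.finite_toSet.subset fun t ht => ?_
  have hft : f (∑ i : Fin n, t ^ (i : ℕ) • u i) = 0 := hWf ht
  rw [Finset.mem_coe, Multiset.mem_toFinset, Polynomial.mem_roots hP, Polynomial.IsRoot.def]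
  simpa only [P, Polynomial.eval_finsetSum, Polynomial.eval_mul, Polynomial.eval_C,
    Polynomial.eval_pow, Polynomial.eval_X, map_sum, map_smul, smul_eq_mul, mul_comm] using hft

lemma exists_pos_forall_sum_pow_smul_notMem {n : ℕ} {u : Fin n → V}
    (hu : Submodule.span ℝ (range u) = ⊤) {𝒲 : Set (Submodule ℝ V)} (h𝒲 : 𝒲.Finite)
    (hlt : ∀ W ∈ 𝒲, W < ⊤) : ∃ t > (0 : ℝ), ∀ W ∈ 𝒲, ∑ i : Fin n, t ^ (i : ℕ) • u i ∉ W := by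
  have hfin := h𝒲.biUnion fun W hW => finite_setOf_sum_pow_smul_mem hu (hlt W hW)
  obtain ⟨t, ht, hn⟩ := (Ioi_infinite (0 : ℝ)).exists_notMem_finite hfin
  exact ⟨t, ht, fun W hW h => hn (mem_biUnion hW h)⟩

lemma exists_pos_of_map_sum_smul_eq_zero {ι : Type*} [Fintype ι] {a : ι → ℝ} {u : ι → V}
    {f : V →ₗ[ℝ] ℝ} (ha : ∀ i, 0 < a i) (hf : f (∑ i, a i • u i) = 0) (hne : ∃ i, f (u i) ≠ 0) :
    ∃ i, 0 < f (u i) := by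
  obtain ⟨j, hj⟩ := hne
  obtain ⟨i, -, hi⟩ := Finset.exists_pos_of_sum_zero_of_exists_nonzero (s := .univ)
    (fun i => a i * f (u i)) (by simpa using hf) ⟨j, Finset.mem_univ j, mul_ne_zero (ha j).ne' hj⟩
  exact ⟨i, pos_of_mul_pos_right hi (ha i).le⟩

lemma exists_ker_eq {F : Type*} [AddCommGroup F] [Module ℝ F] [FiniteDimensional ℝ V]
    [FiniteDimensional ℝ F] {W : Submodule ℝ V} (hW : finrank ℝ F + finrank ℝ W = finrank ℝ V) :
    ∃ π : V →ₗ[ℝ] F, LinearMap.ker π = W := by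
  have hquot : finrank ℝ (V ⧸ W) = finrank ℝ F := by
    have := W.finrank_quotient_add_finrank
    lia
  refine ⟨(LinearEquiv.ofFinrankEq _ _ hquot).toLinearMap ∘ₗ W.mkQ, ?_⟩
  rw [LinearEquiv.ker_comp, W.ker_mkQ]

lemma span_pair_lt_top (hV : 2 < finrank ℝ V) (p q : V) : Submodule.span ℝ {p, q} < ⊤ := by
  classical
  have := Module.finite_of_finrank_pos (show 0 < finrank ℝ V by lia)
  refine Submodule.lt_top_of_finrank_lt_finrank (lt_of_le_of_lt ?_ hV)
  have h := (finrank_span_finset_le_card (R := ℝ) {p, q}).trans Finset.card_le_two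
  rwa [Finset.coe_pair] at h

lemma linearIndependent_of_exposed {u : Fin 3 → V}
    (hu : ∀ i, ∃ f : V →ₗ[ℝ] ℝ, f (u i) = 0 ∧ ∀ j ≠ i, 0 < f (u j)) : LinearIndependent ℝ u := by
  choose f hf hpos using hu
  have hneg {g : Fin 3 → ℝ} (hg : ∑ l, g l • u l = 0) {i j k : Fin 3} (hij : i ≠ j) (hik : i ≠ k)
      (hjk : j ≠ k) (hj : 0 < g j) : g k < 0 := by
    have huniv : ∀ i j k : Fin 3, i ≠ j → i ≠ k → j ≠ k → Finset.univ = {i, j, k} := by decide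
    have hsum : g j * f i (u j) + g k * f i (u k) = 0 := by
      simpa [huniv i j k hij hik hjk, hij, hik, hjk, hf] using congrArg (f i) hg
    by_contra! hk
    linarith [mul_pos hj (hpos i j hij.symm), mul_nonneg hk (hpos i k hik.symm).le]
  have hnonpos {g : Fin 3 → ℝ} (hg : ∑ l, g l • u l = 0) (i : Fin 3) : g i ≤ 0 := by
    by_contra! hi
    have hothers : ∀ i : Fin 3, ∃ j k, i ≠ j ∧ i ≠ k ∧ j ≠ k := by decide
    obtain ⟨j, k, hij, hik, hjk⟩ := hothers i
    have hj := hneg hg hik.symm hjk.symm hij hi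
    have hk := hneg (g := -g) (by simpa using hg) hij hik hjk (neg_pos.2 hj)
    linarith [hneg hg hij.symm hjk hik hi, neg_lt_zero.1 hk]
  refine Fintype.linearIndependent_iff.2 fun g hg i => (hnonpos hg i).antisymm ?_
  simpa using hnonpos (g := -g) (by simpa using hg) i

lemma exists_linearIndependent_sub {n : ℕ} (hV : finrank ℝ V = n + 1) {p : V} {A : Set V}
    (hA : ¬ ∃ P : AffineSubspace ℝ V, p ∈ P ∧ finrank ℝ P.direction = n ∧ A ⊆ P) :
    ∃ u : Fin (n + 1) → V, (∀ i, p + u i ∈ A) ∧ LinearIndependent ℝ u := by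
  have := Module.finite_of_finrank_pos (show 0 < finrank ℝ V by lia)
  have hspan : Submodule.span ℝ {v | p + v ∈ A} = ⊤ := by
    by_contra hne
    obtain ⟨f, hf, hle⟩ := Submodule.exists_le_ker_of_lt_top _ (lt_top_iff_ne_top.2 hne)
    refine hA ⟨.mk' p (LinearMap.ker f), AffineSubspace.self_mem_mk' _ _, ?_, fun z hz => ?_⟩
    · have := Module.Dual.finrank_ker_add_one_of_ne_zero hf
      rw [AffineSubspace.direction_mk']
      lia
    · rw [SetLike.mem_coe, AffineSubspace.mem_mk']
      exact hle (Submodule.subset_span (by simpa using hz))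
  obtain ⟨u, hu, -, hli⟩ := Submodule.exists_fun_fin_finrank_span_eq ℝ {v | p + v ∈ A}
  have hcard : n + 1 = finrank ℝ (Submodule.span ℝ {v | p + v ∈ A}) := by
    rw [hspan, finrank_top, hV]
  exact ⟨u ∘ Fin.cast hcard, fun i => hu _, hli.comp _ (Fin.cast_injective _)⟩

end LinearAlgebra

section GenericAxis

open Set Module

open scoped Pointwise

attribute [local instance] Complex.finrank_real_complex_fact

local notation "ω" => Complex.orientation.areaForm

lemma exists_eq_smul_of_areaForm_eq_zero {u v : ℂ} (hu : u ≠ 0) (h : ω u v = 0) :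
    ∃ c : ℝ, v = c • u := by
  have hrot : ω u (Complex.I * u) ≠ 0 := by
    simpa [Complex.areaForm, ← Complex.normSq_apply] using hu
  have := areaForm_smul_eq u v (Complex.I * u)
  rw [h, zero_smul] at this
  refine ⟨-(ω (Complex.I * u) v / ω u (Complex.I * u)), ?_⟩
  rw [neg_smul, eq_neg_iff_add_eq_zero, add_comm, ← smul_right_inj hrot, smul_zero, smul_add,
    smul_smul, mul_div_cancel₀ _ hrot, ← this]

variable {V R : Type*} [AddCommGroup V] [Module ℝ V] {K : R → Set V} {Q : Finset V} {r₀ r₁ : R}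
  {N : V} {π : V →ₗ[ℝ] ℂ} {p q : V} {u : Fin 3 → V}

lemma exists_eq_smul_of_notMem_span (hker : LinearMap.ker π = Submodule.span ℝ {N})
    (hN : N ∉ Submodule.span ℝ {p, q}) (hp : π p ≠ 0) (h : ω (π p) (π q) = 0) :
    ∃ c : ℝ, q = c • p := by
  obtain ⟨c, hc⟩ := exists_eq_smul_of_areaForm_eq_zero hp h
  have hmem : q - c • p ∈ LinearMap.ker π := by
    rw [LinearMap.mem_ker, map_sub, map_smul, hc, sub_self]
  obtain ⟨k, hk⟩ := Submodule.mem_span_singleton.1 (hker ▸ hmem)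
  refine ⟨c, sub_eq_zero.1 (hk ▸ ?_)⟩
  by_contra hne
  have hk0 : k ≠ 0 := fun h => hne (by rw [h, zero_smul])
  refine hN ((Submodule.smul_mem_iff _ hk0).1 (hk ▸ ?_))
  exact Submodule.mem_span_pair.2 ⟨-c, 1, by module⟩

lemma map_ne_zero_of_notMem_span (hker : LinearMap.ker π = Submodule.span ℝ {N})
    (hN : N ∉ Submodule.span ℝ {p}) (hp : p ≠ 0) : π p ≠ 0 := by
  intro h
  obtain ⟨k, rfl⟩ := Submodule.mem_span_singleton.1 (hker ▸ LinearMap.mem_ker.2 h)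
  have hk : k ≠ 0 := by
    rintro rfl
    exact hp (zero_smul ℝ N)
  exact hN ((Submodule.smul_mem_iff _ hk).1 (Submodule.mem_span_singleton_self _))

lemma exists_areaForm_pos {a : Fin 3 → ℝ} (ha : ∀ i, 0 < a i) (hπ : π (∑ i, a i • u i) = 0)
    (hp : ∃ i, ω (π p) (π (u i)) ≠ 0) :
    (∃ i, 0 < ω (π p) (π (u i))) ∧ ∃ i, 0 < ω (π (u i)) (π p) := by
  simp only [Complex.orientation.areaForm_swap _ (π p)]
  have hsum : (ω (π p) ∘ₗ π) (∑ i, a i • u i) = 0 := by rw [LinearMap.comp_apply, hπ, map_zero]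
  exact ⟨exists_pos_of_map_sum_smul_eq_zero (f := ω (π p) ∘ₗ π) ha hsum hp,
    exists_pos_of_map_sum_smul_eq_zero (f := -(ω (π p) ∘ₗ π)) ha
      (by rw [LinearMap.neg_apply, hsum, neg_zero]) (hp.imp fun i => neg_ne_zero.2)⟩

lemma sum_smul_mem_hull {S : Set V} {a : Fin 3 → ℝ} (ha : ∀ i, 0 < a i) (hu : ∀ i, u i ∈ S) :
    ∑ i, a i • u i ∈ PointedCone.hull ℝ S :=
  Submodule.sum_mem _ fun i _ =>
    Submodule.smul_mem _ (⟨a i, (ha i).le⟩ : {c : ℝ // 0 ≤ c}) (Submodule.subset_span (hu i))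

lemma isPolarProjection_of_generic {a : Fin 3 → ℝ} (hK : ∀ r, K r ⊆ Q) (hQ0 : 0 ∉ Q)
    (hneg : K r₁ = -K r₀) (hdisj : Disjoint (K r₀) (K r₁)) (hu : ∀ i, u i ∈ K r₀)
    (ha : ∀ i, 0 < a i) (hQ : ∀ p ∈ Q, ∀ c : ℝ, c • p ∈ Q → c • p = p ∨ c • p = -p)
    (hN : ∀ p ∈ Q, ∀ q ∈ Q, ∑ i, a i • u i ∉ Submodule.span ℝ {p, q})
    (hker : LinearMap.ker π = Submodule.span ℝ {∑ i, a i • u i}) :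
    IsPolarProjection K Q r₀ r₁ (∑ i, a i • u i) π := by
  have hπN : π (∑ i, a i • u i) = 0 :=
    LinearMap.mem_ker.1 (hker ▸ Submodule.mem_span_singleton_self _)
  have huQ (i : Fin 3) : u i ∈ Q := hK r₀ (hu i)
  have hN0 : ∑ i, a i • u i ≠ 0 := fun h => hN _ (huQ 0) _ (huQ 0) (h ▸ Submodule.zero_mem _)
  have hmap (q : V) (hq : q ∈ Q) : π q ≠ 0 :=
    map_ne_zero_of_notMem_span hker (by simpa using hN q hq q hq) (ne_of_mem_of_not_mem hq hQ0)
  have hpar (p : V) (hp : p ∈ Q) (q : V) (hq : q ∈ Q) (h : ω (π p) (π q) = 0) :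
      q = p ∨ q = -p := by
    obtain ⟨c, rfl⟩ := exists_eq_smul_of_notMem_span hker (hN p hp q hq) (hmap p hp) h
    exact hQ p hp c hq
  have hne (q : V) (hq : q ∈ Q) : ∃ i, ω (π q) (π (u i)) ≠ 0 := by
    by_contra! h
    refine hN q hq q hq (Submodule.sum_mem _ fun i _ => Submodule.smul_mem _ _ ?_)
    rcases hpar q hq (u i) (huQ i) (h i) with hi | hi <;>
      simp [hi, Submodule.mem_span_singleton_self]
  have hu' (i : Fin 3) : -u i ∈ K r₁ := by simpa [hneg] using hu i
  refine ⟨hker, hN0, sum_smul_mem_hull ha hu, ?_, hmap, hpar, ?_, ?_, hdisj⟩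
  · simpa using sum_smul_mem_hull ha hu'
  · rintro r (rfl | rfl) q hq
    · exact (exists_areaForm_pos ha hπN (hne q (hK _ hq))).1.elim fun i hi => ⟨u i, hu i, hi⟩
    · exact (exists_areaForm_pos ha hπN (hne q (hK _ hq))).2.elim fun i hi =>
        ⟨-u i, hu' i, by rwa [map_neg, map_neg, ← Complex.orientation.areaForm_swap]⟩
  · rintro r (rfl | rfl) q hq
    · exact (exists_areaForm_pos ha hπN (hne q (hK _ hq))).2.elim fun i hi => ⟨u i, hu i, hi⟩
    · refine (exists_areaForm_pos ha hπN (hne q (hK _ hq))).1.elim fun i hi => ⟨-u i, hu' i, ?_⟩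
      rwa [Complex.orientation.areaForm_swap, map_neg, map_neg, neg_neg]

lemma exists_isPolarProjection (hV : finrank ℝ V = 3) (hK : ∀ r, K r ⊆ Q) (hQ0 : 0 ∉ Q)
    (hQ : ∀ p ∈ Q, ∀ c : ℝ, c • p ∈ Q → c • p = p ∨ c • p = -p) (hneg : K r₁ = -K r₀)
    (hdisj : Disjoint (K r₀) (K r₁)) (hu : ∀ i, u i ∈ K r₀) (hli : LinearIndependent ℝ u) :
    ∃ (N : V) (π : V →ₗ[ℝ] ℂ), IsPolarProjection K Q r₀ r₁ N π := by
  have := Module.finite_of_finrank_pos (show 0 < finrank ℝ V by lia)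
  have hspan : Submodule.span ℝ (range u) = ⊤ :=
    hli.span_eq_top_of_card_eq_finrank' (by rw [hV, Fintype.card_fin])
  have hfin : (image2 (fun p q => Submodule.span ℝ {p, q}) (Q : Set V) Q).Finite :=
    Q.finite_toSet.image2 _ Q.finite_toSet
  obtain ⟨t, ht, hN⟩ := exists_pos_forall_sum_pow_smul_notMem hspan hfin <| by
    rintro _ ⟨p, -, q, -, rfl⟩
    exact span_pair_lt_top (by lia) p q
  have hN' (p : V) (hp : p ∈ Q) (q : V) (hq : q ∈ Q) := hN _ (mem_image2_of_mem hp hq)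
  have hN0 : ∑ i : Fin 3, t ^ (i : ℕ) • u i ≠ 0 := fun h =>
    hN' _ (hK r₀ (hu 0)) _ (hK r₀ (hu 0)) (h ▸ Submodule.zero_mem _)
  obtain ⟨π, hπ⟩ := exists_ker_eq (F := ℂ) (W := Submodule.span ℝ {∑ i : Fin 3, t ^ (i : ℕ) • u i})
    (by rw [Complex.finrank_real_complex, finrank_span_singleton hN0, hV])
  exact ⟨_, π, isPolarProjection_of_generic hK hQ0 hneg hdisj hu (fun i => pow_pos ht i) hQ hN' hπ⟩

end GenericAxis

section DiameterDirections

open Set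
open scoped Finset Pointwise RealInnerProductSpace

local notation "cone" => PointedCone.hull ℝ

lemma mem_hull_neg_iff {V : Type*} [AddCommGroup V] [Module ℝ V] {S : Set V} {w : V} :
    w ∈ cone (-S) ↔ -w ∈ cone S := by
  rw [PointedCone.hull, Submodule.span_neg_eq_neg, Submodule.mem_neg]

variable {E : Type*} [NormedAddCommGroup E] {X : Set E} {x y z u v w d : E}

/-- The unit vectors that lead from `x` to a point of `X`: the edges at `x` of the graph of
diameters of `X`, when `X` has diameter one. -/
def diameterDirections (X : Set E) (x : E) : Set E := {u | ‖u‖ = 1 ∧ x + u ∈ X}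

lemma sub_mem_diameterDirections (hy : y ∈ X) (h : dist x y = 1) :
    y - x ∈ diameterDirections X x :=
  ⟨by rw [← h, dist_comm, dist_eq_norm], by rwa [add_sub_cancel]⟩

lemma neg_mem_diameterDirections (hx : x ∈ X) (hu : u ∈ diameterDirections X x) :
    -u ∈ diameterDirections X (x + u) :=
  ⟨by rw [norm_neg, hu.1], by rwa [add_neg_cancel_right]⟩

section Polygons

variable {X : Finset E} {r : X × Bool}

/-- The polygons of the proof, two for each point `x` of `X`: a red one, coloured `true`, whose
corners are the diameter directions at `x`, and its antipode, the blue one. -/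
def diameterPolygon (X : Finset E) : X × Bool → Set E
  | (x, true) => diameterDirections (X : Set E) (x : E)
  | (x, false) => -diameterDirections (X : Set E) (x : E)

/-- The pairs of points of `X` at distance one. They are ordered, so each diameter counts twice. -/
noncomputable def diameterPairs (X : Finset E) : Finset (E × E) :=
  {p ∈ X.offDiag | dist p.1 p.2 = 1}

open Classical in
/-- The corners of the diameter polygons of `X`. -/
noncomputable def diameterCorners (X : Finset E) : Finset E :=
  (diameterPairs X).image fun p => p.2 - p.1

lemma mem_diameterCorners_iff : v ∈ diameterCorners X ↔ ∃ x ∈ X, v ∈ diameterDirections X x := by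
  simp only [diameterCorners, diameterPairs, Finset.mem_image, Finset.mem_filter,
    Finset.mem_offDiag, Prod.exists]
  constructor
  · rintro ⟨x, y, ⟨⟨hx, hy, -⟩, hxy⟩, rfl⟩
    exact ⟨x, hx, sub_mem_diameterDirections hy hxy⟩
  · rintro ⟨x, hx, hv, hxv⟩
    have hv0 : v ≠ 0 := by simp [← norm_ne_zero_iff, hv]
    exact ⟨x, x + v, ⟨⟨hx, hxv, by simpa using hv0⟩, by simpa using hv⟩,
      add_sub_cancel_left x v⟩

lemma norm_of_mem_diameterPolygon (hv : v ∈ diameterPolygon X r) : ‖v‖ = 1 := by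
  rcases r with ⟨x, _ | _⟩
  · exact norm_neg v ▸ hv.1
  · exact hv.1

lemma diameterPolygon_subset_diameterCorners : diameterPolygon X r ⊆ diameterCorners X := by
  intro v hv
  obtain ⟨⟨x, hx⟩, _ | _⟩ := r
  · exact mem_diameterCorners_iff.2
      ⟨x + -v, hv.2, by simpa using neg_mem_diameterDirections hx hv⟩
  · exact mem_diameterCorners_iff.2 ⟨x, hx, hv⟩

end Polygons

variable [InnerProductSpace ℝ E]

lemma norm_sub_le_one_iff (hu : ‖u‖ = 1) : ‖u - d‖ ≤ 1 ↔ ‖d‖ ^ 2 ≤ 2 * ⟪d, u⟫ := by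
  rw [← sq_le_one_iff₀ (norm_nonneg _), norm_sub_sq_real, hu, real_inner_comm]
  constructor <;> intro h <;> linarith

lemma norm_sub_eq_one_iff (hu : ‖u‖ = 1) : ‖u - d‖ = 1 ↔ ‖d‖ ^ 2 = 2 * ⟪d, u⟫ := by
  rw [← pow_eq_one_iff_of_nonneg (norm_nonneg _) two_ne_zero, norm_sub_sq_real, hu,
    real_inner_comm]
  constructor <;> intro h <;> linarith

lemma norm_sub_le_one_of_mem_hull {S : Set E} (hS : ∀ u ∈ S, ‖u‖ = 1 ∧ ‖u - d‖ ≤ 1)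
    (hw : w ∈ cone S) (hw1 : ‖w‖ = 1) : ‖w - d‖ ≤ 1 := by
  suffices h : ‖w‖ * ‖d‖ ^ 2 ≤ 2 * ⟪d, w⟫ by
    rwa [norm_sub_le_one_iff hw1, ← one_mul (‖d‖ ^ 2), ← hw1]
  clear hw1
  induction hw using Submodule.span_induction with
  | mem u hu => simpa [(hS u hu).1] using (norm_sub_le_one_iff (hS u hu).1).1 (hS u hu).2
  | zero => simp
  | add v w _ _ hv hw =>
    rw [inner_add_right]
    nlinarith [norm_add_le v w, sq_nonneg ‖d‖]
  | smul a w _ hw =>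
    rw [show a • w = (a : ℝ) • w from rfl, norm_smul, inner_smul_right, Real.norm_of_nonneg a.2]
    nlinarith [a.2]

lemma inner_sub_pos (hX : ∀ x ∈ X, ∀ y ∈ X, dist x y ≤ 1) (hz : z ∈ X) (hzx : z ≠ x)
    (hu : u ∈ diameterDirections X x) : 0 < ⟪z - x, u⟫ := by
  have h := hX _ hu.2 z hz
  rw [dist_eq_norm, show x + u - z = u - (z - x) by abel, norm_sub_le_one_iff hu.1] at h
  have : 0 < ‖z - x‖ := norm_pos_iff.2 (sub_ne_zero.2 hzx)
  nlinarith

lemma eq_zero_of_mem_hull_of_mem_hull (hX : ∀ x ∈ X, ∀ y ∈ X, dist x y ≤ 1) (hx : x ∈ X)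
    (hy : y ∈ X) (hxy : x ≠ y) (hwx : w ∈ cone (diameterDirections X x))
    (hwy : w ∈ cone (diameterDirections X y)) : w = 0 := by
  by_contra hw
  have h₁ := pos_of_mem_hull (f := innerₗ E (y - x)) (fun u => inner_sub_pos hX hy hxy.symm) hwx hw
  have h₂ := pos_of_mem_hull (f := innerₗ E (x - y)) (fun u => inner_sub_pos hX hx hxy) hwy hw
  rw [innerₗ_apply_apply, ← neg_sub, inner_neg_left] at h₂
  rw [innerₗ_apply_apply] at h₁
  linarith

lemma eq_zero_of_mem_hull_of_neg_mem_hull (hX : ∀ x ∈ X, ∀ y ∈ X, dist x y ≤ 1)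
    (hw : w ∈ cone (diameterDirections X x)) (hw' : -w ∈ cone (diameterDirections X x)) :
    w = 0 := by
  rcases (diameterDirections X x).eq_empty_or_nonempty with h | ⟨u, hu⟩
  · simpa [h, PointedCone.hull] using hw
  by_contra hw0
  have hf : ∀ v ∈ diameterDirections X x, 0 < innerₗ E u v := fun v hv => by
    simpa using inner_sub_pos hX hu.2 (by simp [← norm_ne_zero_iff, hu.1]) hv
  have := pos_of_mem_hull hf hw' (neg_ne_zero.2 hw0)
  rw [map_neg] at this
  linarith [pos_of_mem_hull hf hw hw0]

lemma exists_exposing (hX : ∀ x ∈ X, ∀ y ∈ X, dist x y ≤ 1) (hz : z ∈ X) (hzx : z ≠ x)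
    (hu : u ∈ diameterDirections X x) (hzu : dist (x + u) z = 1) :
    ∃ f : E →ₗ[ℝ] ℝ, f u = 0 ∧ ∀ v ∈ diameterDirections X x, v ≠ u → 0 < f v := by
  have hsub (v : E) : x + v - z = v - (z - x) := by abel
  rw [dist_eq_norm, hsub, norm_sub_eq_one_iff hu.1] at hzu
  refine ⟨(2 : ℝ) • innerₗ E (z - x) - ‖z - x‖ ^ 2 • innerₗ E u, ?_, fun v hv hvu => ?_⟩
  · simp [hzu, hu.1, inner_sub_left]
  have hvz := hX _ hv.2 z hz
  rw [dist_eq_norm, hsub, norm_sub_le_one_iff hv.1] at hvz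
  have hlt : ⟪u, v⟫ < 1 := inner_lt_one_iff_real_of_norm_eq_one hu.1 hv.1 |>.2 hvu.symm
  have hpos : 0 < ‖z - x‖ := norm_pos_iff.2 (sub_ne_zero.2 hzx)
  simp only [LinearMap.sub_apply, LinearMap.smul_apply, innerₗ_apply_apply, smul_eq_mul]
  nlinarith [mul_pos (pow_pos hpos 2) (sub_pos.2 hlt)]

lemma mem_span_of_add_mem_span (hX : ∀ x ∈ X, ∀ y ∈ X, dist x y ≤ 1)
    (hdeg : ∀ y ∈ X, ∀ x, ∃ z ∈ X, z ≠ x ∧ dist y z = 1) (hu : u ∈ diameterDirections X x)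
    (hv : v ∈ cone (diameterDirections X x)) (hw : w ∈ cone (diameterDirections X x))
    (hvw : v + w ∈ Submodule.span ℝ {u}) : v ∈ Submodule.span ℝ {u} := by
  obtain ⟨z, hz, hzx, hzu⟩ := hdeg _ hu.2 x
  obtain ⟨f, hfu, hf⟩ := exists_exposing hX hz hzx hu hzu
  have hS : ∀ v ∈ diameterDirections X x, 0 ≤ f v ∧ (f v = 0 → v ∈ Submodule.span ℝ {u}) := by
    intro v hv
    rcases eq_or_ne v u with rfl | hvu
    · exact ⟨hfu.ge, fun _ => Submodule.mem_span_singleton_self _⟩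
    · exact ⟨(hf v hv hvu).le, fun h => absurd h (hf v hv hvu).ne'⟩
  obtain ⟨c, hc⟩ := Submodule.mem_span_singleton.1 hvw
  have hsum : f v + f w = 0 := by rw [← map_add, ← hc, map_smul, hfu, smul_zero]
  obtain ⟨hv0, hvspan⟩ := nonneg_and_mem_of_mem_hull hS hv
  exact hvspan (by linarith [(nonneg_and_mem_of_mem_hull hS hw).1])

lemma eq_sub_of_mem_hull_of_neg_mem_hull (hX : ∀ x ∈ X, ∀ y ∈ X, dist x y ≤ 1) (hx : x ∈ X)
    (hy : y ∈ X) (hw : w ∈ cone (diameterDirections X x))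
    (hw' : -w ∈ cone (diameterDirections X y)) (hw1 : ‖w‖ = 1) : w = y - x := by
  have hadd (v : E) (hv : v ∈ diameterDirections X y) : ‖w - (y + v - x)‖ ≤ 1 := by
    refine norm_sub_le_one_of_mem_hull (fun u hu => ⟨hu.1, ?_⟩) hw hw1
    have := hX _ hu.2 _ hv.2
    rwa [dist_eq_norm, show x + u - (y + v) = u - (y + v - x) by abel] at this
  have hsub : ‖-w - (x + w - y)‖ ≤ 1 := by
    refine norm_sub_le_one_of_mem_hull (fun v hv => ⟨hv.1, ?_⟩) hw' (by rwa [norm_neg])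
    rw [← norm_neg, show -(v - (x + w - y)) = w - (y + v - x) by abel]
    exact hadd v hv
  by_contra hne
  have hd : ‖y - x‖ ≤ 1 := by simpa [dist_eq_norm] using hX y hy x hx
  have h2w : ‖(2 : ℝ) • w - (y - x)‖ ≤ 1 := by
    rwa [← norm_neg, show -(-w - (x + w - y)) = (2 : ℝ) • w - (y - x) by module] at hsub
  have hmid : ‖(1 / 2 : ℝ) • ((2 : ℝ) • w - (y - x)) + (1 / 2 : ℝ) • (y - x)‖ < 1 :=
    norm_combo_lt_of_ne h2w hd
      (fun h => hne (by linear_combination (norm := module) (1 / 2 : ℝ) • h))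
      (by norm_num) (by norm_num) (by norm_num)
  rw [show (1 / 2 : ℝ) • ((2 : ℝ) • w - (y - x)) + (1 / 2 : ℝ) • (y - x) = w by module] at hmid
  exact hmid.ne hw1

lemma mem_inter_of_mem_hull (hX : ∀ x ∈ X, ∀ y ∈ X, dist x y ≤ 1) (hx : x ∈ X) (hy : y ∈ X)
    (hw : w ∈ cone (diameterDirections X x)) (hw' : w ∈ cone (-diameterDirections X y))
    (hw0 : w ≠ 0) :
    y - x ∈ diameterDirections X x ∩ -diameterDirections X y ∧ w = ‖w‖ • (y - x) := by
  have hnorm : 0 < ‖w‖ := norm_pos_iff.2 hw0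
  have hscale {S : Set E} (h : w ∈ cone S) : ‖w‖⁻¹ • w ∈ cone S :=
    Submodule.smul_mem _ (⟨‖w‖⁻¹, inv_nonneg.2 hnorm.le⟩ : {c : ℝ // 0 ≤ c}) h
  have hunit : ‖‖w‖⁻¹ • w‖ = 1 := norm_smul_inv_norm hw0
  have hyx := eq_sub_of_mem_hull_of_neg_mem_hull hX hx hy (hscale hw)
    (mem_hull_neg_iff.1 (hscale hw')) hunit
  rw [hyx] at hunit
  refine ⟨⟨⟨hunit, by rwa [add_sub_cancel]⟩, ?_⟩, by rw [← hyx, smul_inv_smul₀ hnorm.ne']⟩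
  rw [Set.mem_neg, neg_sub]
  exact ⟨by rwa [norm_sub_rev], by rwa [add_sub_cancel]⟩

section DiameterPolygons

variable {X : Finset E} {r r' : X × Bool}

lemma eq_of_mem_diameterDirections (hX : ∀ x ∈ X, ∀ y ∈ X, dist x y ≤ 1) (hx : x ∈ X)
    (hy : y ∈ X) (hvx : v ∈ diameterDirections X x) (hvy : v ∈ diameterDirections X y) :
    x = y := by
  by_contra hxy
  have hv := eq_zero_of_mem_hull_of_mem_hull hX hx hy hxy (Submodule.subset_span hvx)
    (Submodule.subset_span hvy)
  simpa [hv] using hvx.1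

open Classical in
lemma card_diameterCorners (hX : ∀ x ∈ X, ∀ y ∈ X, dist x y ≤ 1) :
    #(diameterCorners X) = #(diameterPairs X) := by
  refine Finset.card_image_of_injOn ?_
  rintro ⟨x, y⟩ hxy ⟨x', y'⟩ hxy' (heq : y - x = y' - x')
  simp only [diameterPairs, Finset.coe_filter, Finset.mem_offDiag, mem_ofPred_eq] at hxy hxy'
  have hx := sub_mem_diameterDirections (Finset.mem_coe.2 hxy.1.2.1) hxy.2
  obtain rfl : x = x' := eq_of_mem_diameterDirections hX hxy.1.1 hxy'.1.1 hx
    (heq ▸ sub_mem_diameterDirections hxy'.1.2.1 hxy'.2)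
  rw [sub_left_injective heq]

lemma exists_forall_mem_hull_inter (hX : ∀ x ∈ X, ∀ y ∈ X, dist x y ≤ 1) (h : r ≠ r') :
    ∃ d, ∀ w ∈ cone (diameterPolygon X r), w ∈ cone (diameterPolygon X r') → w ≠ 0 →
      d ∈ diameterPolygon X r ∩ diameterPolygon X r' ∧ w = ‖w‖ • d := by
  obtain ⟨⟨x, hx⟩, b⟩ := r
  obtain ⟨⟨y, hy⟩, b'⟩ := r'
  rcases b with _ | _ <;> rcases b' with _ | _ <;> simp only [diameterPolygon]
  · refine ⟨0, fun w hw hw' hw0 => absurd ?_ (neg_ne_zero.2 hw0)⟩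
    rw [mem_hull_neg_iff] at hw hw'
    exact eq_zero_of_mem_hull_of_mem_hull hX hx hy (by simpa using h) hw hw'
  · refine ⟨x - y, fun w hw hw' hw0 => ?_⟩
    rw [inter_comm]
    exact mem_inter_of_mem_hull hX hy hx hw' hw hw0
  · exact ⟨y - x, fun w hw hw' hw0 => mem_inter_of_mem_hull hX hx hy hw hw' hw0⟩
  · exact ⟨0, fun w hw hw' hw0 => absurd
      (eq_zero_of_mem_hull_of_mem_hull hX hx hy (by simpa using h) hw hw') hw0⟩

lemma subsingleton_diameterPolygon_inter (hX : ∀ x ∈ X, ∀ y ∈ X, dist x y ≤ 1) (h : r ≠ r') :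
    (diameterPolygon X r ∩ diameterPolygon X r').Subsingleton := by
  obtain ⟨d, hd⟩ := exists_forall_mem_hull_inter hX h
  have heq (v : E) (hv : v ∈ diameterPolygon X r ∩ diameterPolygon X r') : v = d := by
    have hnorm := norm_of_mem_diameterPolygon hv.1
    simpa [hnorm] using (hd v (Submodule.subset_span hv.1) (Submodule.subset_span hv.2)
      (by simp [← norm_ne_zero_iff, hnorm])).2
  exact fun v hv w hw => (heq v hv).trans (heq w hw).symm

lemma mem_diameterPolygon_iff (hX : ∀ x ∈ X, ∀ y ∈ X, dist x y ≤ 1) (hx : x ∈ X)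
    (hv : v ∈ diameterDirections X x) (r : X × Bool) :
    v ∈ diameterPolygon X r ↔ r = (⟨x, hx⟩, true) ∨ r = (⟨x + v, hv.2⟩, false) := by
  have hneg := neg_mem_diameterDirections hx hv
  obtain ⟨⟨y, hy⟩, _ | _⟩ := r <;> simp only [diameterPolygon, Prod.mk.injEq, Subtype.mk.injEq,
    reduceCtorEq, and_false, and_true, false_or, or_false, Set.mem_neg]
  · exact ⟨fun h => eq_of_mem_diameterDirections hX hy hv.2 h hneg, fun h => h ▸ hneg⟩
  · exact ⟨fun h => eq_of_mem_diameterDirections hX hy hx h hv, fun h => h ▸ hv⟩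

theorem isContactSystem_diameterPolygon (hX : ∀ x ∈ X, ∀ y ∈ X, dist x y ≤ 1)
    (hdeg : ∀ y ∈ X, ∀ x, ∃ z ∈ X, z ≠ x ∧ dist y z = 1) :
    IsContactSystem (diameterPolygon X) (diameterCorners X) Prod.snd where
  subset _ := diameterPolygon_subset_diameterCorners
  neg_mem v hv := by
    obtain ⟨x, hx, hv⟩ := mem_diameterCorners_iff.1 hv
    exact mem_diameterCorners_iff.2 ⟨x + v, hv.2, neg_mem_diameterDirections hx hv⟩
  exists_touching v hv := by
    obtain ⟨x, hx, hv⟩ := mem_diameterCorners_iff.1 hv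
    exact ⟨_, _, by simp, mem_diameterPolygon_iff hX hx hv⟩
  subsingleton _ _ h := subsingleton_diameterPolygon_inter hX h
  salient := by
    rintro ⟨x, _ | _⟩ w hw hw'
    · rw [diameterPolygon, mem_hull_neg_iff] at hw hw'
      exact neg_eq_zero.1 (eq_zero_of_mem_hull_of_neg_mem_hull hX hw hw')
    · exact eq_zero_of_mem_hull_of_neg_mem_hull hX hw hw'
  inter r r' h w hw hw' hw0 := by
    obtain ⟨d, hd⟩ := exists_forall_mem_hull_inter hX h
    exact ⟨d, (hd w hw hw' hw0).1, ‖w‖, norm_pos_iff.2 hw0, (hd w hw hw' hw0).2⟩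
  extreme := by
    rintro ⟨x, _ | _⟩ q hq v hv w hw hvw
    · rw [diameterPolygon, mem_hull_neg_iff] at hv hw
      have hspan : Submodule.span ℝ {-q} = Submodule.span ℝ {q} := by
        rw [← Set.neg_singleton, Submodule.span_neg]
      rw [← hspan, ← neg_mem_iff, neg_add] at hvw
      rw [← hspan, ← neg_mem_iff]
      exact mem_span_of_add_mem_span hX hdeg hq hv hw hvw
    · exact mem_span_of_add_mem_span hX hdeg hq hv hw hvw

end DiameterPolygons

end DiameterDirections

section VazsonyiSets

open Set Module
open scoped Finset Pointwise

variable {E : Type*} [NormedAddCommGroup E] {X : Finset E} {x p : E}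
  {u : Fin 3 → E}

lemma exists_injective_of_three_le_card (h : 3 ≤ #{y ∈ X | dist x y = 1}) :
    ∃ u : Fin 3 → E, Function.Injective u ∧ ∀ i, u i ∈ diameterDirections X x := by
  obtain ⟨y⟩ := Function.Embedding.nonempty_of_card_le (α := Fin 3)
    (β := ({y ∈ X | dist x y = 1} : Finset E)) (by simpa using h)
  refine ⟨fun i => y i - x, fun i j hij => y.injective (Subtype.ext (sub_left_injective hij)), ?_⟩
  intro i
  obtain ⟨hy, hxy⟩ := Finset.mem_filter.1 (y i).2
  exact sub_mem_diameterDirections hy hxy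

lemma three_le_card_of_injective (hu : Function.Injective u)
    (hux : ∀ i, u i ∈ diameterDirections X x) : 3 ≤ #{y ∈ X | dist x y = 1} := by
  refine (Finset.card_fin 3).symm.trans_le (Finset.card_le_card_of_injOn (fun i => x + u i) ?_ ?_)
  · exact fun i _ => Finset.mem_coe.2 (Finset.mem_filter.2 ⟨(hux i).2, by simpa using (hux i).1⟩)
  · exact ((add_right_injective x).comp hu).injOn

open Classical in
lemma card_diameterPairs_insert (hp : p ∉ X) :
    #(diameterPairs (insert p X)) = #(diameterPairs X) + 2 * #{y ∈ X | dist p y = 1} := by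
  set Y : Finset E := {y ∈ X | dist p y = 1}
  have hunion : diameterPairs (insert p X) = diameterPairs X ∪ {p} ×ˢ Y ∪ Y ×ˢ {p} := by
    ext ⟨x, y⟩
    grind [diameterPairs, dist_comm]
  have hdisj : Disjoint (diameterPairs X) ({p} ×ˢ Y) := by
    grind [diameterPairs, Finset.disjoint_left]
  have hdisj' : Disjoint (diameterPairs X ∪ {p} ×ˢ Y) (Y ×ˢ {p}) := by
    grind [diameterPairs, Finset.disjoint_left]
  rw [hunion, Finset.card_union_of_disjoint hdisj', Finset.card_union_of_disjoint hdisj,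
    Finset.card_product, Finset.card_product, Finset.card_singleton]
  ring

variable [InnerProductSpace ℝ E]

lemma linearIndependent_diameterDirections (hX : ∀ x ∈ X, ∀ y ∈ X, dist x y ≤ 1)
    (hdeg : ∀ y ∈ X, 2 ≤ #{z ∈ X | dist y z = 1}) (hu : Function.Injective u)
    (hux : ∀ i, u i ∈ diameterDirections X x) : LinearIndependent ℝ u := by
  refine linearIndependent_of_exposed fun i => ?_
  obtain ⟨z, hz, hzx⟩ := Finset.exists_mem_ne (hdeg _ (hux i).2) x
  rw [Finset.mem_filter] at hz
  obtain ⟨f, hfu, hf⟩ := exists_exposing hX hz.1 hzx (hux i) hz.2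
  exact ⟨f, hfu, fun j hj => hf _ (hux j) (hu.ne hj)⟩

theorem card_diameterPairs_add_four_le (hE : finrank ℝ E = 3) (hne : X.Nonempty)
    (hX : ∀ x ∈ X, ∀ y ∈ X, dist x y ≤ 1) (hdeg : ∀ y ∈ X, 3 ≤ #{z ∈ X | dist y z = 1}) :
    #(diameterPairs X) + 4 ≤ 4 * #X := by
  have hdeg' (y : E) (hy : y ∈ X) (x : E) : ∃ z ∈ X, z ≠ x ∧ dist y z = 1 := by
    obtain ⟨z, hz, hzx⟩ := Finset.exists_mem_ne ((by simp : 1 < 3).trans_le (hdeg y hy)) x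
    rw [Finset.mem_filter] at hz
    exact ⟨z, hz.1, hzx, hz.2⟩
  have hK := isContactSystem_diameterPolygon hX hdeg'
  have hnorm (v : E) (hv : v ∈ diameterCorners X) : ‖v‖ = 1 := by
    obtain ⟨x, -, hv⟩ := mem_diameterCorners_iff.1 hv
    exact hv.1
  obtain ⟨x, hx⟩ := hne
  obtain ⟨u, hu, hux⟩ := exists_injective_of_three_le_card (hdeg x hx)
  have hli := linearIndependent_diameterDirections hX (fun y hy => by linarith [hdeg y hy]) hu hux
  obtain ⟨N, π, hπ⟩ := exists_isPolarProjection (r₀ := (⟨x, hx⟩, true)) (r₁ := (⟨x, hx⟩, false))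
    hE hK.subset (fun h => by simpa using hnorm 0 h)
    (fun v hv c hcv => by
      have hc : |c| = 1 := by simpa [norm_smul, hnorm v hv] using hnorm _ hcv
      rcases eq_or_eq_neg_of_abs_eq hc with rfl | rfl <;> simp)
    rfl
    (Set.disjoint_left.2 fun v hv hv' => by
      have := eq_zero_of_mem_hull_of_neg_mem_hull hX (Submodule.subset_span hv)
        (Submodule.subset_span hv')
      simpa [this] using hv.1)
    hux hli
  have := hK.card_add_four_le hπ
  rw [card_diameterCorners hX, Fintype.card_prod, Fintype.card_coe, Fintype.card_bool] at this
  linarith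

open Classical in
theorem mem_of_three_le_card (hE : finrank ℝ E = 3) (hX : ∀ x ∈ X, ∀ y ∈ X, dist x y ≤ 1)
    (hcount : 2 * (2 * #X - 2) ≤ #(diameterPairs X))
    (hdeg : ∀ x ∈ X, 3 ≤ #{y ∈ X | dist x y = 1}) (hp : ∀ x ∈ X, dist p x ≤ 1)
    (hpdeg : 3 ≤ #{y ∈ X | dist p y = 1}) : p ∈ X := by
  by_contra hpX
  have hdiam : ∀ x ∈ insert p X, ∀ y ∈ insert p X, dist x y ≤ 1 := by
    simp only [Finset.forall_mem_insert, dist_self, zero_le_one, true_and]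
    exact ⟨hp, fun x hx => ⟨dist_comm p x ▸ hp x hx, hX x hx⟩⟩
  have hmono (x : E) : #{y ∈ X | dist x y = 1} ≤ #{y ∈ insert p X | dist x y = 1} :=
    Finset.card_le_card (Finset.filter_subset_filter _ (Finset.subset_insert p X))
  have hdeg' : ∀ x ∈ insert p X, 3 ≤ #{y ∈ insert p X | dist x y = 1} :=
    (Finset.forall_mem_insert _ _ _).2
      ⟨hpdeg.trans (hmono p), fun x hx => (hdeg x hx).trans (hmono x)⟩
  have := card_diameterPairs_add_four_le hE (Finset.insert_nonempty p X) hdiam hdeg'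
  rw [card_diameterPairs_insert hpX, Finset.card_insert_of_notMem hpX] at this
  lia

lemma not_subset_plane (hX : ∀ x ∈ X, ∀ y ∈ X, dist x y ≤ 1)
    (hdeg : ∀ x ∈ X, 3 ≤ #{y ∈ X | dist x y = 1}) (hp : p ∈ X) :
    ¬ ∃ P : AffineSubspace ℝ E, p ∈ P ∧ finrank ℝ P.direction = 2 ∧
      {x | x ∈ X ∧ dist p x = 1} ⊆ (P : Set E) := by
  rintro ⟨P, hpP, hP, hsub⟩
  obtain ⟨u, hu, hup⟩ := exists_injective_of_three_le_card (hdeg p hp)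
  have hli := linearIndependent_diameterDirections hX (fun y hy => by linarith [hdeg y hy]) hu hup
  have hdir : Submodule.span ℝ (range u) ≤ P.direction := by
    rw [Submodule.span_le]
    rintro _ ⟨i, rfl⟩
    have := AffineSubspace.vsub_mem_direction (hsub ⟨(hup i).2, by simpa using (hup i).1⟩) hpP
    rwa [vsub_eq_sub, add_sub_cancel_left] at this
  have := Module.finite_of_finrank_pos (show 0 < finrank ℝ P.direction by lia)
  have := Submodule.finrank_mono hdir
  rw [finrank_span_eq_card hli, Fintype.card_fin, hP] at this
  lia

lemma mem_frontier_iInter_closedBall (hX : ∀ x ∈ X, ∀ y ∈ X, dist x y ≤ 1) {y : E} (hp : p ∈ X)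
    (hy : y ∈ X) (hpy : dist p y = 1) : p ∈ frontier (⋂ x ∈ X, Metric.closedBall x 1) := by
  refine ⟨subset_closure (mem_iInter₂.2 fun x hx => hX p hp x hx), fun hint => ?_⟩
  have := interior_mono (iInter₂_subset y hy) hint
  rw [interior_closedBall _ one_ne_zero, Metric.mem_ball, hpy] at this
  exact this.false

theorem vazsonyi_is_reuleaux_polyhedron_general (hE : finrank ℝ E = 3) (X : Finset E)
    (hdiam : ∀ x ∈ X, ∀ y ∈ X, dist x y ≤ 1)
    (hcount : 2 * (2 * #X - 2) ≤ #{p ∈ X.offDiag | dist p.1 p.2 = 1})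
    (hdeg : ∀ x ∈ X, 3 ≤ #{y ∈ X | dist x y = 1}) :
    {p | p ∈ frontier (⋂ x ∈ X, Metric.closedBall x 1) ∧
      ¬ ∃ P : AffineSubspace ℝ E, p ∈ P ∧ finrank ℝ P.direction = 2 ∧
        {x | x ∈ X ∧ dist p x = 1} ⊆ (P : Set E)} = X := by
  ext p
  refine ⟨fun ⟨hfr, hplane⟩ => ?_, fun hp => ⟨?_, not_subset_plane hdiam hdeg hp⟩⟩
  · have hclosed : IsClosed (⋂ x ∈ X, Metric.closedBall x (1 : ℝ)) :=
      isClosed_biInter fun _ _ => Metric.isClosed_closedBall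
    have hpX : ∀ x ∈ X, p ∈ Metric.closedBall x 1 := mem_iInter₂.1 (hclosed.frontier_subset hfr)
    obtain ⟨u, hu, hli⟩ := exists_linearIndependent_sub hE hplane
    refine mem_of_three_le_card hE hdiam hcount hdeg hpX
      (three_le_card_of_injective hli.injective fun i => ⟨?_, (hu i).1⟩)
    simpa using (hu i).2
  · obtain ⟨y, hy⟩ := Finset.card_pos.1 ((by simp : 0 < 3).trans_le (hdeg p hp))
    obtain ⟨hy, hpy⟩ := Finset.mem_filter.1 hy
    exact mem_frontier_iInter_closedBall hdiam hp hy hpy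

end VazsonyiSets

open Classical in
/-- **Grünbaum–Heppes–Straszewicz, the other direction.**
Let `X ⊂ ℝ³` be a Vázsonyi set: a finite set of diameter `1` with `m` points, exactly
`2m − 2` unordered pairs at distance `1` (counted as `2 * (2m - 2)` ordered pairs of
distinct points), and every point at distance `1` from at least `3` other points.  Let
`Ω` be the intersection of the closed unit balls centered at the points of `X`.  Then
the set of vertices of `Ω` is exactly `X`, where a point `p` of the frontier of `Ω` is a
*vertex* of `Ω` if the set `A_p = {x ∈ X : dist p x = 1}` is not contained in any
2-dimensional affine plane through `p`.  (That is, `Ω` is a Reuleaux polyhedron with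
vertex set `X`.) -/
theorem vazsonyi_is_reuleaux_polyhedron
    (X : Finset (EuclideanSpace ℝ (Fin 3)))
    (hdiam_le : ∀ x ∈ X, ∀ y ∈ X, dist x y ≤ 1)
    (hdiam_eq : ∃ x ∈ X, ∃ y ∈ X, dist x y = 1)
    (hcount : (X.offDiag.filter fun p => dist p.1 p.2 = 1).card = 2 * (2 * X.card - 2))
    (hdeg : ∀ x ∈ X, 3 ≤ (X.filter fun y => dist x y = 1).card)
    (Ω : Set (EuclideanSpace ℝ (Fin 3)))
    (hΩ : Ω = ⋂ x ∈ X, Metric.closedBall x 1) :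
    {p : EuclideanSpace ℝ (Fin 3) |
      p ∈ frontier Ω ∧
        ¬ ∃ P : AffineSubspace ℝ (EuclideanSpace ℝ (Fin 3)),
          p ∈ P ∧ Module.finrank ℝ P.direction = 2 ∧
          {x : EuclideanSpace ℝ (Fin 3) | x ∈ X ∧ dist p x = 1} ⊆ (P : Set (EuclideanSpace ℝ (Fin 3)))}
      = (X : Set (EuclideanSpace ℝ (Fin 3))) := by
  rw [hΩ]
  exact vazsonyi_is_reuleaux_polyhedron_general (by simp) X hdiam_le hcount.ge hdeg
end
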